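/- arXiv:1005.3494 — 8 statements merged into one kernel-verified Lean document; each statement's English description precedes it below -/
import Mathlib

section
/- Let $C_k$ for integers $k \ge 0$ be defined by $C_k = \frac{1}{k!}\frac{1}{2\pi i}\int_{c-i\infty}^{c+i\infty} \frac{e^s}{s}(\log s + \gamma)^k\,ds$ for any $c>0$, where the conditionally convergent integral is interpreted as $\lim_{T\to\infty}\int_{c-iT}^{c+iT}$ and $\gamma$ is the Euler–Mascheroni constant. Then for every complex number $z$ the series $\sum_{k=0}^{\infty} C_k z^k$ converges absolutely and $\sum_{k=0}^{\infty} C_k z^k = \frac{e^{\gamma z}}{\Gamma(1-z)}$. -/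
open MeasureTheory Filter Topology

lemma bc_slit (c : ℝ) (hc : 0 < c) (t : ℝ) : (c : ℂ) + t * Complex.I ∈ Complex.slitPlane := by
  left; simpa using hc

lemma bc_bound (c : ℝ) (hc : 0 < c) : ∃ K : ℝ, 0 < K ∧ ∀ (w : ℂ) (b t : ℝ),
    -(5/2) ≤ w.re → w.re ≤ -b → 0 ≤ b → |w.im| ≤ 1 →
    ‖((c : ℂ) + t * Complex.I) ^ w‖ ≤ K * (1 + |t|) ^ (-b) := by
  set m : ℝ := min c 1 / 2 with hm
  have hm0 : 0 < m := by positivity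
  have hm1 : m ≤ 1 := by
    have := min_le_right c 1
    rw [hm]; linarith
  refine ⟨Real.exp Real.pi * m ^ (-(5/2) : ℝ), by positivity, ?_⟩
  intro w b t h1 h2 hb h3
  set s : ℂ := (c : ℂ) + t * Complex.I with hs
  have hre : s.re = c := by simp [hs]
  have him : s.im = t := by simp [hs]
  have hn1 : c ≤ ‖s‖ := by
    have := Complex.abs_re_le_norm s
    rw [hre, abs_of_pos hc] at this; exact this
  have hn2 : |t| ≤ ‖s‖ := by
    have := Complex.abs_im_le_norm s
    rwa [him] at this
  have hlow : m * (1 + |t|) ≤ ‖s‖ := by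
    have a1 := min_le_left c 1
    have a2 := min_le_right c 1
    have a3 := abs_nonneg t
    rw [hm]; nlinarith
  have ht1 : (1:ℝ) ≤ 1 + |t| := by linarith [abs_nonneg t]
  refine (Complex.norm_cpow_le _ _).trans ?_
  have e1 : ‖s‖ ^ w.re ≤ m ^ (-(5/2) : ℝ) * (1 + |t|) ^ (-b) := by
    calc ‖s‖ ^ w.re ≤ (m * (1 + |t|)) ^ w.re :=
          Real.rpow_le_rpow_of_nonpos (by positivity) hlow (by linarith)
      _ = m ^ w.re * (1 + |t|) ^ w.re := Real.mul_rpow hm0.le (by positivity)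
      _ ≤ _ := by
          exact mul_le_mul (Real.rpow_le_rpow_of_exponent_ge hm0 hm1 h1)
            (Real.rpow_le_rpow_of_exponent_le ht1 h2) (by positivity) (by positivity)
  have e2 : (Real.exp (s.arg * w.im))⁻¹ ≤ Real.exp Real.pi := by
    rw [← Real.exp_neg]
    apply Real.exp_le_exp.mpr
    have : |s.arg * w.im| ≤ Real.pi * 1 := by
      rw [abs_mul]
      exact mul_le_mul (Complex.abs_arg_le_pi s) h3 (abs_nonneg _) Real.pi_pos.le
    have := neg_abs_le (s.arg * w.im)
    linarith
  rw [div_eq_mul_inv]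
  calc _ ≤ (m ^ (-(5/2) : ℝ) * (1 + |t|) ^ (-b)) * Real.exp Real.pi := by gcongr
    _ = _ := by ring

lemma bc_cont (c : ℝ) (hc : 0 < c) (w : ℂ) :
    Continuous fun t : ℝ => ((c : ℂ) + t * Complex.I) ^ w := by
  refine Continuous.cpow (by fun_prop) continuous_const (bc_slit c hc)

lemma bc_integrable (c : ℝ) (hc : 0 < c) (w : ℂ) (h1 : -(5/2) ≤ w.re) (h2 : w.re ≤ -(3/2))
    (h3 : |w.im| ≤ 1) : Integrable fun t : ℝ => ((c : ℂ) + t * Complex.I) ^ w := by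
  obtain ⟨K, hK, hb⟩ := bc_bound c hc
  have : Integrable (fun x : ℝ ↦ (1 + ‖x‖) ^ (-(3/2 : ℝ))) :=
    integrable_one_add_norm (by norm_num)
  refine (this.const_mul K).mono' (bc_cont c hc w).aestronglyMeasurable ?_
  exact Eventually.of_forall fun t => hb w (3/2) t h1 h2 (by norm_num) h3

lemma bc_gamma_cont (w : ℂ) (s : ℂ) : ContinuousOn (fun t : ℝ => (t : ℂ) ^ w * Complex.exp (-(s * t))) (Set.Ioi 0) := by
  refine ContinuousOn.mul ?_ (by fun_prop)
  intro x hx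
  exact (Complex.continuousAt_ofReal_cpow_const _ _ (Or.inr (ne_of_gt hx))).continuousWithinAt

lemma bc_gamma_int {w s : ℂ} (hw : -1 < w.re) (hs : 0 < s.re) :
    IntegrableOn (fun t : ℝ => (t : ℂ) ^ w * Complex.exp (-(s * t))) (Set.Ioi 0) := by
  have hr := integrableOn_rpow_mul_exp_neg_mul_rpow (p := 1) (s := w.re) (b := s.re)
    hw one_pos hs
  refine hr.mono' ((bc_gamma_cont w s).aestronglyMeasurable measurableSet_Ioi) ?_
  filter_upwards [ae_restrict_mem measurableSet_Ioi] with x hx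
  rw [norm_mul, Complex.norm_cpow_eq_rpow_re_of_pos hx, Complex.norm_exp]
  simp

lemma bc_gamma {w : ℂ} (hw : 0 < w.re) {r : ℂ} (hr : 0 < r.re) :
    ∫ (t : ℝ) in Set.Ioi 0, (t : ℂ) ^ (w - 1) * Complex.exp (-(r * t)) = (1 / r) ^ w * Complex.Gamma w := by
  set U : Set ℂ := {s | 0 < s.re} with hU
  have hUo : IsOpen U := isOpen_lt continuous_const Complex.continuous_re
  have hUc : IsPreconnected U := (convex_halfSpace_re_gt 0).isPreconnected
  have hd1 : DifferentiableOn ℂ (fun s : ℂ => ∫ (t : ℝ) in Set.Ioi 0, (t : ℂ) ^ (w - 1) * Complex.exp (-(s * t))) U := by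
    intro s hs
    have hs' : 0 < s.re := hs
    have hb := integrableOn_rpow_mul_exp_neg_mul_rpow (p := 1) (s := w.re) (b := s.re / 2)
      (by linarith) one_pos (by linarith)
    have := hasDerivAt_integral_of_dominated_loc_of_deriv_le
      (μ := volume.restrict (Set.Ioi (0:ℝ)))
      (F := fun (s : ℂ) (t : ℝ) => (t : ℂ) ^ (w - 1) * Complex.exp (-(s * t)))
      (F' := fun (s : ℂ) (t : ℝ) => (t : ℂ) ^ (w - 1) * (Complex.exp (-(s * t)) * (-t)))
      (x₀ := s) (s := Metric.ball s (s.re / 2))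
      (bound := fun x : ℝ => x ^ w.re * Real.exp (-(s.re / 2) * x ^ (1:ℝ)))
      (Metric.ball_mem_nhds _ (by linarith))
      (Eventually.of_forall fun s => (bc_gamma_cont _ s).aestronglyMeasurable measurableSet_Ioi)
      (bc_gamma_int (by simpa using hw) hs)
      ?_ ?_ hb ?_
    · exact this.2.differentiableAt.differentiableWithinAt
    · have : ContinuousOn (fun t : ℝ => ((t : ℂ) ^ (w-1) * Complex.exp (-(s * t))) * (-t)) (Set.Ioi 0) :=
        (bc_gamma_cont _ s).mul (by fun_prop)
      simpa only [mul_assoc] using this.aestronglyMeasurable measurableSet_Ioi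
    · filter_upwards [ae_restrict_mem measurableSet_Ioi] with x hx y hy
      have hx0 : 0 < x := hx
      rw [norm_mul, norm_mul, Complex.norm_cpow_eq_rpow_re_of_pos hx, Complex.norm_exp, norm_neg,
        Complex.norm_real, Real.norm_of_nonneg hx0.le]
      have e : x ^ w.re = x ^ (w - 1).re * x := by
        rw [← Real.rpow_add_one hx0.ne']; simp
      have hy' : s.re / 2 ≤ y.re := by
        have h1 := Complex.abs_re_le_norm (y - s)
        rw [Metric.mem_ball, dist_eq_norm] at hy
        have h2 := neg_abs_le (y - s).re
        rw [Complex.sub_re] at h1 h2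
        linarith
      rw [e, mul_assoc, mul_comm x, Real.rpow_one]
      gcongr
      simp only [Complex.neg_re, Complex.mul_re, Complex.ofReal_re, Complex.ofReal_im]
      nlinarith
    · refine Eventually.of_forall fun x y _ => ?_
      refine HasDerivAt.const_mul _ (HasDerivAt.cexp ?_)
      simpa using ((hasDerivAt_id y).mul_const (x : ℂ)).fun_neg
  have hd2 : DifferentiableOn ℂ (fun s : ℂ => (1 / s) ^ w * Complex.Gamma w) U := by
    intro s hs
    have hs' : 0 < s.re := hs
    have hs0 : s ≠ 0 := by rintro rfl; simp at hs'
    refine DifferentiableAt.differentiableWithinAt ?_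
    refine DifferentiableAt.mul_const ?_ _
    refine DifferentiableAt.cpow_const ?_ ?_
    · exact (differentiableAt_const _).div differentiableAt_id hs0
    · left
      rw [one_div, Complex.inv_re]
      exact div_pos hs' (Complex.normSq_pos.mpr hs0)
  have key := (hd1.analyticOnNhd hUo).eqOn_of_preconnected_of_frequently_eq (hd2.analyticOnNhd hUo) hUc
    (z₀ := 1) (by simp [hU]) ?_
  · exact key hr
  · have ht : Tendsto (fun x : ℝ => (x : ℂ)) (𝓝[≠] 1) (𝓝[≠] 1) := by
      rw [tendsto_nhdsWithin_iff]; constructor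
      · exact tendsto_nhdsWithin_of_tendsto_nhds Complex.continuous_ofReal.continuousAt
      · exact eventually_nhdsWithin_iff.mpr (Eventually.of_forall fun t ht => Complex.ofReal_ne_one.mpr ht)
    refine ht.frequently (Eventually.frequently ?_)
    filter_upwards [nhdsWithin_le_nhds (lt_mem_nhds (zero_lt_one (α := ℝ)))] with x hx
    exact Complex.integral_cpow_mul_exp_neg_mul_Ioi hw hx

lemma bc_laplace (c : ℝ) (hc : 0 < c) (w : ℂ) (h1 : 3/2 ≤ w.re) (h2 : w.re ≤ 5/2)
    (h3 : |w.im| ≤ 1) :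
    ∫ t : ℝ, Complex.exp ((c : ℂ) + t * Complex.I) * ((c : ℂ) + t * Complex.I) ^ (-w)
      = 2 * Real.pi / Complex.Gamma w := by
  have hw : 0 < w.re := by linarith
  have hG : Complex.Gamma w ≠ 0 := Complex.Gamma_ne_zero_of_re_pos hw
  set f : ℝ → ℂ := Set.indicator (Set.Ioi 0) fun t : ℝ => (t : ℂ) ^ (w - 1) * Complex.exp (-(c * t))
    with hf
  have hfi : Integrable f := by
    rw [hf, integrable_indicator_iff measurableSet_Ioi]
    exact bc_gamma_int (by simpa using hw) (by simpa using hc)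
  have hF : ∀ y : ℝ, FourierTransform.fourier f y
      = ((c : ℂ) + (2 * Real.pi * y : ℝ) * Complex.I) ^ (-w) * Complex.Gamma w := by
    intro y
    rw [Real.fourier_real_eq_integral_exp_smul]
    have hsl := bc_slit c hc (2 * Real.pi * y)
    rw [Complex.cpow_neg, ← Complex.inv_cpow _ _ (Complex.slitPlane_arg_ne_pi hsl), ← one_div,
      ← bc_gamma hw (r := (c : ℂ) + (2 * Real.pi * y : ℝ) * Complex.I) (by simpa using hc)]
    rw [← integral_indicator measurableSet_Ioi]
    congr 1; ext v
    by_cases hv : v ∈ Set.Ioi (0:ℝ)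
    · simp only [hf, Set.indicator_of_mem hv, smul_eq_mul]
      rw [mul_left_comm, ← Complex.exp_add]
      congr 2
      push_cast; ring
    · simp [hf, Set.indicator_of_notMem hv]
  have hint := bc_integrable c hc (-w) (by simp; linarith) (by simp; linarith) (by simpa using h3)
  have hFi : Integrable (FourierTransform.fourier f) := by
    have e : FourierTransform.fourier f = fun y : ℝ =>
      ((c : ℂ) + (2 * Real.pi * y : ℝ) * Complex.I) ^ (-w) * Complex.Gamma w := funext hF
    rw [e]
    exact (hint.comp_mul_left' (R := 2 * Real.pi) (by positivity)).mul_const _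
  have hca : ContinuousAt f 1 := by
    have : f =ᶠ[𝓝 1] fun t : ℝ => (t : ℂ) ^ (w - 1) * Complex.exp (-(c * t)) := by
      filter_upwards [lt_mem_nhds (zero_lt_one (α := ℝ))] with x hx
      exact Set.indicator_of_mem (s := Set.Ioi (0:ℝ)) hx _
    refine ContinuousAt.congr ?_ this.symm
    exact (Complex.continuousAt_ofReal_cpow_const _ _ (Or.inr one_ne_zero)).mul (by fun_prop)
  have key := hfi.fourierInv_fourier_eq hFi hca
  rw [Real.fourierInv_eq'] at key
  have hf1 : f 1 = Complex.exp (-c) := by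
    simp [hf]
  rw [hf1] at key
  have e2 : (∫ (v : ℝ), Complex.exp (↑(2 * Real.pi * inner ℝ v (1:ℝ)) * Complex.I) • FourierTransform.fourier f v)
      = ∫ v : ℝ, (fun u : ℝ => Complex.exp (u * Complex.I) * ((c : ℂ) + u * Complex.I) ^ (-w) * Complex.Gamma w) (2 * Real.pi * v) := by
    congr 1; ext v
    rw [hF]
    simp [mul_assoc]
  rw [e2, Measure.integral_comp_mul_left (fun u : ℝ => Complex.exp (u * Complex.I) *
    ((c : ℂ) + u * Complex.I) ^ (-w) * Complex.Gamma w), integral_mul_const] at key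
  have e3 : ∀ t : ℝ, Complex.exp ((c : ℂ) + t * Complex.I) * ((c : ℂ) + t * Complex.I) ^ (-w)
      = Complex.exp c * (Complex.exp (t * Complex.I) * ((c : ℂ) + t * Complex.I) ^ (-w)) := by
    intro t; rw [Complex.exp_add]; ring
  simp_rw [e3]
  rw [integral_const_mul, eq_div_iff hG]
  set J := ∫ t : ℝ, Complex.exp (t * Complex.I) * ((c : ℂ) + t * Complex.I) ^ (-w)
  have hp : |(2 * Real.pi)⁻¹| = (2 * Real.pi)⁻¹ := abs_of_pos (by positivity)
  rw [hp, Complex.real_smul, Complex.exp_neg] at key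
  have hp' : (Real.pi : ℂ) ≠ 0 := by exact_mod_cast Real.pi_ne_zero
  have hec := Complex.exp_ne_zero (c : ℂ)
  push_cast at key
  field_simp at key
  linear_combination key

lemma bc_ibp (c : ℝ) (hc : 0 < c) (g z : ℂ) (T : ℝ) :
    ∫ t in (-T)..T, (Complex.exp ((c : ℂ) + t * Complex.I) / ((c : ℂ) + t * Complex.I)) *
        Complex.exp ((Complex.log ((c : ℂ) + t * Complex.I) + g) * z) * Complex.I
    = Complex.exp (g * z) * (Complex.exp ((c : ℂ) + T * Complex.I) * ((c : ℂ) + T * Complex.I) ^ (z - 1)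
        - Complex.exp ((c : ℂ) + (-T : ℝ) * Complex.I) * ((c : ℂ) + (-T : ℝ) * Complex.I) ^ (z - 1)
        + (1 - z) * Complex.I * ∫ t in (-T)..T, Complex.exp ((c : ℂ) + t * Complex.I) *
          ((c : ℂ) + t * Complex.I) ^ (-(2 - z))) := by
  have hne : ∀ t : ℝ, (c : ℂ) + t * Complex.I ≠ 0 := fun t => Complex.slitPlane_ne_zero (bc_slit c hc t)
  have hS : ∀ t : ℝ, HasDerivAt (fun t : ℝ => (c : ℂ) + t * Complex.I) Complex.I t := by
    intro t
    simpa using ((Complex.ofRealCLM.hasDerivAt (x := t)).mul_const Complex.I).const_add (c : ℂ)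
  have hexp : Continuous fun t : ℝ => Complex.exp ((c : ℂ) + t * Complex.I) := by fun_prop
  have hB : ∀ t : ℝ, HasDerivAt (fun t : ℝ => Complex.exp ((c : ℂ) + t * Complex.I) *
      ((c : ℂ) + t * Complex.I) ^ (z - 1))
      (Complex.exp ((c : ℂ) + t * Complex.I) * ((c : ℂ) + t * Complex.I) ^ (z - 1) * Complex.I
      - (1 - z) * Complex.I * (Complex.exp ((c : ℂ) + t * Complex.I) *
          ((c : ℂ) + t * Complex.I) ^ (-(2 - z)))) t := by
    intro t
    have h1 := (hS t).cexp
    have h2 : HasDerivAt (fun t : ℝ => ((c : ℂ) + t * Complex.I) ^ (z - 1))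
        ((z - 1) * ((c : ℂ) + t * Complex.I) ^ (z - 1 - 1) * Complex.I) t :=
      HasDerivAt.comp (h₂ := fun x : ℂ => x ^ (z - 1)) t
        (Complex.hasStrictDerivAt_cpow_const (bc_slit c hc t)).hasDerivAt (hS t)
    have h3 := h1.mul h2
    refine h3.congr_deriv ?_
    rw [show -(2 - z) = z - 1 - 1 by ring]
    ring
  have hi1 : ∀ a b, IntervalIntegrable (fun t : ℝ => Complex.exp ((c : ℂ) + t * Complex.I) *
      ((c : ℂ) + t * Complex.I) ^ (z - 1) * Complex.I) volume a b := fun a b =>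
    ((hexp.mul (bc_cont c hc _)).mul continuous_const).intervalIntegrable a b
  have hi2 : ∀ a b, IntervalIntegrable (fun t : ℝ => (1 - z) * Complex.I * (Complex.exp ((c : ℂ) + t * Complex.I) *
      ((c : ℂ) + t * Complex.I) ^ (-(2 - z)))) volume a b := fun a b =>
    (continuous_const.mul (hexp.mul (bc_cont c hc _))).intervalIntegrable a b
  have hF := intervalIntegral.integral_eq_sub_of_hasDerivAt (a := -T) (b := T) (fun x _ => hB x)
    ((hi1 _ _).sub (hi2 _ _))
  rw [intervalIntegral.integral_sub (hi1 _ _) (hi2 _ _), intervalIntegral.integral_const_mul] at hF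
  rw [← hF, sub_add_cancel, ← intervalIntegral.integral_const_mul]
  congr 1; ext t
  have e : Complex.exp ((Complex.log ((c : ℂ) + t * Complex.I) + g) * z)
      = Complex.exp (Complex.log ((c : ℂ) + t * Complex.I) * z) * Complex.exp (g * z) := by
    rw [add_mul, Complex.exp_add]
  rw [Complex.cpow_sub _ _ (hne t), Complex.cpow_one, Complex.cpow_def_of_ne_zero (hne t), e]
  ring

lemma bc_dom (c : ℝ) (hc : 0 < c) (g : ℂ) : ∃ M : ℝ, ∀ z : ℂ, ‖z‖ = 1/2 → ∀ T : ℝ, 0 ≤ T →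
    ‖∫ t in (-T)..T, (Complex.exp ((c : ℂ) + t * Complex.I) / ((c : ℂ) + t * Complex.I)) *
        Complex.exp ((Complex.log ((c : ℂ) + t * Complex.I) + g) * z) * Complex.I‖ ≤ M := by
  obtain ⟨K, hK, hb⟩ := bc_bound c hc
  have hJ : Integrable (fun x : ℝ ↦ Real.exp c * (K * (1 + |x|) ^ (-(3/2 : ℝ)))) := by
    have : Integrable (fun x : ℝ ↦ (1 + ‖x‖) ^ (-(3/2 : ℝ))) :=
      integrable_one_add_norm (by norm_num)
    exact (this.const_mul K).const_mul _
  refine ⟨Real.exp ‖g‖ * (Real.exp c * K + Real.exp c * K + 2 *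
    ∫ x : ℝ, Real.exp c * (K * (1 + |x|) ^ (-(3/2 : ℝ)))), ?_⟩
  intro z hz T hT
  have hre := Complex.abs_re_le_norm z
  have him := Complex.abs_im_le_norm z
  rw [hz] at hre him
  obtain ⟨hr1, hr2⟩ := abs_le.mp hre
  have hexp : ∀ t : ℝ, ‖Complex.exp ((c : ℂ) + t * Complex.I)‖ = Real.exp c := by
    intro t; rw [Complex.norm_exp]; simp
  have hB : ∀ t : ℝ, ‖Complex.exp ((c : ℂ) + t * Complex.I) * ((c : ℂ) + t * Complex.I) ^ (z - 1)‖
      ≤ Real.exp c * K := by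
    intro t
    rw [norm_mul, hexp]
    have := hb (z - 1) 0 t (by simp; linarith) (by simp; linarith) le_rfl (by simp; linarith)
    simp only [neg_zero, Real.rpow_zero, mul_one] at this
    gcongr
  rw [bc_ibp c hc g z T, norm_mul]
  have h1 : ‖Complex.exp (g * z)‖ ≤ Real.exp ‖g‖ := by
    rw [Complex.norm_exp]
    apply Real.exp_le_exp.mpr
    refine (Complex.re_le_norm _).trans ?_
    rw [norm_mul, hz]
    linarith [norm_nonneg g]
  have h2 : ‖∫ t in (-T)..T, Complex.exp ((c : ℂ) + t * Complex.I) *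
          ((c : ℂ) + t * Complex.I) ^ (-(2 - z))‖ ≤ ∫ x : ℝ, Real.exp c * (K * (1 + |x|) ^ (-(3/2 : ℝ))) := by
    rw [intervalIntegral.integral_of_le (by linarith)]
    refine (norm_integral_le_of_norm_le hJ.integrableOn ?_).trans
      (setIntegral_le_integral hJ (Eventually.of_forall fun x => by positivity))
    refine Eventually.of_forall fun t => ?_
    rw [norm_mul, hexp]
    have := hb (-(2 - z)) (3/2) t (by simp; linarith) (by simp; linarith) (by norm_num) (by simp; linarith)
    gcongr
  have h3 : ‖(1 - z) * Complex.I‖ ≤ 2 := by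
    rw [norm_mul, Complex.norm_I, mul_one]
    refine (norm_sub_le _ _).trans ?_
    rw [hz]; norm_num
  gcongr
  refine (norm_add_le _ _).trans ?_
  rw [norm_mul]
  refine add_le_add ((norm_sub_le _ _).trans (add_le_add (hB _) (hB _))) ?_
  exact mul_le_mul h3 h2 (norm_nonneg _) (by norm_num)

lemma bc_lim (c : ℝ) (hc : 0 < c) (g z : ℂ) (hz : ‖z‖ = 1/2) :
    Tendsto (fun T : ℝ => ∫ t in (-T)..T, (Complex.exp ((c : ℂ) + t * Complex.I) / ((c : ℂ) + t * Complex.I)) *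
        Complex.exp ((Complex.log ((c : ℂ) + t * Complex.I) + g) * z) * Complex.I) atTop
      (𝓝 (2 * Real.pi * Complex.I * (Complex.exp (g * z) / Complex.Gamma (1 - z)))) := by
  obtain ⟨K, hK, hb⟩ := bc_bound c hc
  have hre := Complex.abs_re_le_norm z
  have him := Complex.abs_im_le_norm z
  rw [hz] at hre him
  obtain ⟨hr1, hr2⟩ := abs_le.mp hre
  have hexp : ∀ t : ℝ, ‖Complex.exp ((c : ℂ) + t * Complex.I)‖ = Real.exp c := by
    intro t; rw [Complex.norm_exp]; simp
  have hz0 : Tendsto (fun T : ℝ => Real.exp c * (K * (1 + T) ^ (-(1/2 : ℝ)))) atTop (𝓝 0) := by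
    have h := (tendsto_rpow_neg_atTop (y := 1/2) (by norm_num)).comp
      (tendsto_atTop_add_const_left atTop (1:ℝ) tendsto_id)
    simpa using (h.const_mul K).const_mul (Real.exp c)
  have hB : ∀ t : ℝ, ‖Complex.exp ((c : ℂ) + t * Complex.I) * ((c : ℂ) + t * Complex.I) ^ (z - 1)‖
      ≤ Real.exp c * (K * (1 + |t|) ^ (-(1/2 : ℝ))) := by
    intro t
    rw [norm_mul, hexp]
    have := hb (z - 1) (1/2) t (by simp; linarith) (by simp; linarith) (by norm_num) (by simp; linarith)
    gcongr
  have hB1 : Tendsto (fun T : ℝ => Complex.exp ((c : ℂ) + T * Complex.I) * ((c : ℂ) + T * Complex.I) ^ (z - 1))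
      atTop (𝓝 0) := by
    refine squeeze_zero_norm' ?_ hz0
    filter_upwards [eventually_ge_atTop 0] with T hT
    simpa only [abs_of_nonneg hT] using hB T
  have hB2 : Tendsto (fun T : ℝ => Complex.exp ((c : ℂ) + (-T : ℝ) * Complex.I) * ((c : ℂ) + (-T : ℝ) * Complex.I) ^ (z - 1))
      atTop (𝓝 0) := by
    refine squeeze_zero_norm' ?_ hz0
    filter_upwards [eventually_ge_atTop 0] with T hT
    simpa only [abs_neg, abs_of_nonneg hT] using hB (-T)
  have hint : Integrable fun t : ℝ => Complex.exp ((c : ℂ) + t * Complex.I) *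
      ((c : ℂ) + t * Complex.I) ^ (-(2 - z)) := by
    refine (bc_integrable c hc (-(2 - z)) (by simp; linarith) (by simp; linarith)
      (by simp; linarith)).bdd_mul (c := Real.exp c) ?_ ?_
    · exact Continuous.aestronglyMeasurable (by fun_prop)
    · exact Eventually.of_forall fun t => (hexp t).le
  have hI := intervalIntegral_tendsto_integral hint tendsto_neg_atTop_atBot tendsto_id
  rw [bc_laplace c hc (2 - z) (by simp; linarith) (by simp; linarith) (by simp; linarith)] at hI
  have hfin := ((hB1.sub hB2).add (hI.const_mul ((1 - z) * Complex.I))).const_mul (Complex.exp (g * z))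
  have hz1 : 1 - z ≠ 0 := by
    intro h
    have : z = 1 := (sub_eq_zero.mp h).symm
    rw [this] at hz; norm_num at hz
  have hGne : Complex.Gamma (1 - z) ≠ 0 := Complex.Gamma_ne_zero_of_re_pos (by simp; linarith)
  have hG : Complex.Gamma (2 - z) = (1 - z) * Complex.Gamma (1 - z) := by
    rw [← Complex.Gamma_add_one _ hz1]; congr 1; ring
  have hval : Complex.exp (g * z) * (0 - 0 + (1 - z) * Complex.I * (2 * Real.pi / Complex.Gamma (2 - z)))
      = 2 * Real.pi * Complex.I * (Complex.exp (g * z) / Complex.Gamma (1 - z)) := by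
    rw [hG]; field_simp; ring
  rw [hval] at hfin
  refine hfin.congr fun T => ?_
  rw [bc_ibp c hc g z T]; rfl

lemma bc_swap (c : ℝ) (hc : 0 < c) (g : ℂ) (k : ℕ) (T : ℝ) :
    (1 / (Nat.factorial k : ℂ)) * (1 / (2 * Real.pi * Complex.I)) *
      ∫ t in (-T)..T, (Complex.exp ((c : ℂ) + t * Complex.I) / ((c : ℂ) + t * Complex.I)) *
        (Complex.log ((c : ℂ) + t * Complex.I) + g) ^ k * Complex.I
    = (1 / (2 * Real.pi * Complex.I)) * ((1 / (2 * Real.pi * Complex.I)) *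
      circleIntegral (fun z => (1 / (z - 0) ^ (k + 1)) •
        ∫ t in (-T)..T, (Complex.exp ((c : ℂ) + t * Complex.I) / ((c : ℂ) + t * Complex.I)) *
        Complex.exp ((Complex.log ((c : ℂ) + t * Complex.I) + g) * z) * Complex.I) 0 (1/2)) := by
  have hne : ∀ t : ℝ, (c : ℂ) + t * Complex.I ≠ 0 := fun t => Complex.slitPlane_ne_zero (bc_slit c hc t)
  have hcm : ∀ θ : ℝ, circleMap 0 (1/2) θ ≠ 0 := fun θ => circleMap_ne_center (by norm_num)
  have hL : Continuous fun t : ℝ => Complex.log ((c : ℂ) + t * Complex.I) + g :=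
    (Continuous.clog (by fun_prop) (bc_slit c hc)).add continuous_const
  have hh : Continuous fun t : ℝ => Complex.exp ((c : ℂ) + t * Complex.I) / ((c : ℂ) + t * Complex.I) :=
    Continuous.div (by fun_prop) (by fun_prop) hne
  have hcc : Continuous (circleMap 0 (1/2)) := continuous_circleMap _ _
  set L : ℝ → ℂ := fun t : ℝ => Complex.log ((c : ℂ) + t * Complex.I) + g with hLd
  set h : ℝ → ℂ := fun t : ℝ => Complex.exp ((c : ℂ) + t * Complex.I) / ((c : ℂ) + t * Complex.I) with hhd
  have hH : Continuous (Function.uncurry fun (θ t : ℝ) => deriv (circleMap 0 (1/2)) θ •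
      ((1 / (circleMap 0 (1/2) θ - 0) ^ (k + 1)) • (h t * Complex.exp (L t * circleMap 0 (1/2) θ) * Complex.I))) := by
    simp only [Function.uncurry_def, deriv_circleMap, smul_eq_mul, sub_zero]
    have h1 : Continuous fun p : ℝ × ℝ => circleMap 0 (1/2) p.1 := hcc.comp continuous_fst
    have h2 : Continuous fun p : ℝ × ℝ => h p.2 := hh.comp continuous_snd
    have h3 : Continuous fun p : ℝ × ℝ => L p.2 := hL.comp continuous_snd
    refine (h1.mul continuous_const).mul ((continuous_const.div (h1.pow _)
      fun p => pow_ne_zero _ (hcm _)).mul ((h2.mul (h3.mul h1).cexp).mul continuous_const))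
  have hci : ∀ t : ℝ, circleIntegral (fun z => (1 / (z - 0) ^ (k + 1)) • Complex.exp (L t * z)) 0 (1/2)
      = (2 * Real.pi * Complex.I / (Nat.factorial k : ℂ)) * L t ^ k := by
    intro t
    have hd : Differentiable ℂ fun z => Complex.exp (L t * z) := by fun_prop
    rw [hd.differentiableOn.circleIntegral_one_div_sub_center_pow_smul (by norm_num) k,
      iteratedDeriv_cexp_const_mul]
    simp
  have hsw : circleIntegral (fun z => (1 / (z - 0) ^ (k + 1)) •
        ∫ t in (-T)..T, h t * Complex.exp (L t * z) * Complex.I) 0 (1/2)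
      = ∫ t in (-T)..T, (2 * Real.pi * Complex.I / (Nat.factorial k : ℂ)) * (h t * L t ^ k * Complex.I) := by
    rw [circleIntegral]
    simp_rw [← intervalIntegral.integral_smul]
    rw [intervalIntegral_intervalIntegral_swap]
    · congr 1; ext t
      have := hci t
      rw [circleIntegral] at this
      calc _ = ∫ θ in 0..2 * Real.pi, (h t * Complex.I) * (deriv (circleMap 0 (1/2)) θ •
          ((1 / (circleMap 0 (1/2) θ - 0) ^ (k + 1)) • Complex.exp (L t * circleMap 0 (1/2) θ))) := by
            congr 1; ext θ; simp only [smul_eq_mul]; ring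
        _ = _ := by
            rw [intervalIntegral.integral_const_mul, this]; ring
    · refine (hH.continuousOn.integrableOn_compact
        (isCompact_uIcc.prod isCompact_uIcc)).mono_set
        (Set.prod_mono Set.uIoc_subset_uIcc Set.uIoc_subset_uIcc)
  have hp' : (Real.pi : ℂ) ≠ 0 := by exact_mod_cast Real.pi_ne_zero
  have hfk : (Nat.factorial k : ℂ) ≠ 0 := by exact_mod_cast Nat.factorial_ne_zero k
  have hI := Complex.I_ne_zero
  refine Eq.trans ?_ (congrArg (fun x => (1 / (2 * (Real.pi : ℂ) * Complex.I)) *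
    ((1 / (2 * Real.pi * Complex.I)) * x)) hsw.symm)
  simp only [intervalIntegral.integral_const_mul]
  change _ * _ * (∫ t in (-T)..T, h t * L t ^ k * Complex.I) = _
  generalize (∫ t in (-T)..T, h t * L t ^ k * Complex.I) = J
  field_simp

lemma bc_coeff (c : ℝ) (hc : 0 < c) (g : ℂ) (k : ℕ) :
    Tendsto (fun T : ℝ => (1 / (Nat.factorial k : ℂ)) * (1 / (2 * Real.pi * Complex.I)) *
      ∫ t in (-T)..T, (Complex.exp ((c : ℂ) + t * Complex.I) / ((c : ℂ) + t * Complex.I)) *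
        (Complex.log ((c : ℂ) + t * Complex.I) + g) ^ k * Complex.I) atTop
      (𝓝 ((1 / (2 * Real.pi * Complex.I)) * circleIntegral (fun z => (1 / (z - 0) ^ (k + 1)) •
        (Complex.exp (g * z) / Complex.Gamma (1 - z))) 0 (1/2))) := by
  simp_rw [bc_swap c hc g k]
  refine Tendsto.const_mul _ ?_
  have hp' : (Real.pi : ℂ) ≠ 0 := by exact_mod_cast Real.pi_ne_zero
  have hI := Complex.I_ne_zero
  have hcm : ∀ θ : ℝ, circleMap 0 (1/2) θ ≠ 0 := fun θ => circleMap_ne_center (by norm_num)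
  have hnm : ∀ θ : ℝ, ‖circleMap 0 (1/2) θ‖ = 1/2 := fun θ => by simp
  have hcc : Continuous (circleMap 0 (1/2)) := continuous_circleMap _ _
  have hne : ∀ t : ℝ, (c : ℂ) + t * Complex.I ≠ 0 := fun t => Complex.slitPlane_ne_zero (bc_slit c hc t)
  have hL : Continuous fun t : ℝ => Complex.log ((c : ℂ) + t * Complex.I) + g :=
    (Continuous.clog (by fun_prop) (bc_slit c hc)).add continuous_const
  have hh : Continuous fun t : ℝ => Complex.exp ((c : ℂ) + t * Complex.I) / ((c : ℂ) + t * Complex.I) :=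
    Continuous.div (by fun_prop) (by fun_prop) hne
  have heq : circleIntegral (fun z => (1 / (z - 0) ^ (k + 1)) •
        (Complex.exp (g * z) / Complex.Gamma (1 - z))) 0 (1/2)
      = (1 / (2 * Real.pi * Complex.I)) * circleIntegral (fun z => (1 / (z - 0) ^ (k + 1)) •
        (2 * Real.pi * Complex.I * (Complex.exp (g * z) / Complex.Gamma (1 - z)))) 0 (1/2) := by
    rw [← smul_eq_mul, ← circleIntegral.integral_smul]
    congr 1; ext z
    simp only [smul_eq_mul]
    field_simp
  rw [heq]
  refine Tendsto.const_mul _ ?_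
  obtain ⟨M, hM⟩ := bc_dom c hc g
  simp only [circleIntegral]
  refine intervalIntegral.tendsto_integral_filter_of_dominated_convergence
    (fun _ => 1/2 * (1 / (1/2) ^ (k + 1) * M)) ?_ ?_ ?_ ?_
  · refine Eventually.of_forall fun T => Continuous.aestronglyMeasurable ?_
    simp only [deriv_circleMap, sub_zero]
    refine (hcc.mul continuous_const).smul ((continuous_const.div (hcc.pow _)
      fun p => pow_ne_zero _ (hcm _)).smul ?_)
    refine intervalIntegral.continuous_parametric_intervalIntegral_of_continuous' ?_ _ _
    simp only [Function.uncurry_def]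
    have h1 : Continuous fun p : ℝ × ℝ => circleMap 0 (1/2) p.1 := hcc.comp continuous_fst
    have h2 := hh.comp (continuous_snd (X := ℝ) (Y := ℝ))
    have h3 := hL.comp (continuous_snd (X := ℝ) (Y := ℝ))
    exact (h2.mul (h3.mul h1).cexp).mul continuous_const
  · filter_upwards [eventually_ge_atTop 0] with T hT
    refine Eventually.of_forall fun θ _ => ?_
    have := hM _ (hnm θ) T hT
    rw [norm_smul, norm_smul, deriv_circleMap, norm_mul, hnm, Complex.norm_I, mul_one, norm_div,
      norm_pow, sub_zero, hnm, norm_one]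
    gcongr
  · exact intervalIntegrable_const
  · refine Eventually.of_forall fun θ _ => ?_
    exact ((bc_lim c hc g _ (hnm θ)).const_smul _).const_smul _

/-- The constants `C k` defined by the conditionally convergent contour
integral `C_k = (1/k!) (1/(2πi)) ∫_{c-i∞}^{c+i∞} (e^s/s) (log s + γ)^k ds` (symmetric
limit) satisfy: for every complex `z`, the series `∑ C_k z^k` converges absolutely and
equals `e^{γz}/Γ(1-z)`. -/
theorem broadhurst_conjecture (c : ℝ) (hc : 0 < c) (C : ℕ → ℂ)
    (hC : ∀ k : ℕ,
      Tendsto (fun T : ℝ =>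
          (1 / (Nat.factorial k : ℂ)) * (1 / (2 * Real.pi * Complex.I)) *
            ∫ t in (-T)..T,
              (Complex.exp ((c : ℂ) + t * Complex.I) / ((c : ℂ) + t * Complex.I)) *
                (Complex.log ((c : ℂ) + t * Complex.I) +
                  (Real.eulerMascheroniConstant : ℂ)) ^ k * Complex.I)
        atTop (𝓝 (C k))) :
    ∀ z : ℂ, Summable (fun k : ℕ => ‖C k * z ^ k‖) ∧
      HasSum (fun k : ℕ => C k * z ^ k)
        (Complex.exp ((Real.eulerMascheroniConstant : ℂ) * z) / Complex.Gamma (1 - z)) := by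
  intro z
  set g : ℂ := (Real.eulerMascheroniConstant : ℂ) with hg
  set E : ℂ → ℂ := fun z => Complex.exp (g * z) / Complex.Gamma (1 - z) with hE
  have hEd : Differentiable ℂ E := by
    have h1 : Differentiable ℂ fun z : ℂ => (Complex.Gamma (1 - z))⁻¹ :=
      Complex.differentiable_one_div_Gamma.comp (differentiable_id.const_sub 1)
    have h2 : Differentiable ℂ fun z : ℂ => Complex.exp (g * z) := by fun_prop
    simp only [hE, div_eq_mul_inv]
    exact h2.mul h1
  have hCk : ∀ k, C k = ((Nat.factorial k : ℂ))⁻¹ * iteratedDeriv k E 0 := by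
    intro k
    rw [tendsto_nhds_unique (hC k) (bc_coeff c hc g k),
      hEd.differentiableOn.circleIntegral_one_div_sub_center_pow_smul (by norm_num) k]
    have hp' : (Real.pi : ℂ) ≠ 0 := by exact_mod_cast Real.pi_ne_zero
    have hI := Complex.I_ne_zero
    have hfk : (Nat.factorial k : ℂ) ≠ 0 := by exact_mod_cast Nat.factorial_ne_zero k
    rw [smul_eq_mul]
    field_simp
  have hsum : HasSum (fun k : ℕ => C k * z ^ k) (E z) := by
    have := Complex.hasSum_taylorSeries_of_entire hEd 0 z
    have e : (fun k : ℕ => C k * z ^ k) =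
        fun n : ℕ => ((Nat.factorial n : ℂ))⁻¹ • (z - 0) ^ n • iteratedDeriv n E 0 := by
      ext k
      rw [hCk, sub_zero, smul_eq_mul, smul_eq_mul]; ring
    rw [e]
    exact this
  exact ⟨hsum.summable.norm, hsum⟩
end

section
/- For integers $k \ge 0$ and real $u \ge 1$ define $I_k(u) = \int_{t_1,\ldots,t_k \ge 1,\ t_1+\cdots+t_k \le u} \frac{dt_1}{t_1}\cdots\frac{dt_k}{t_k}$ (with $I_0(u)=1$), and let $L_k$ be the Dickman polylogarithms defined recursively by $L_0(t)=1$ for all $t>0$, and for $k\ge 1$ by $L_k(t)=0$ for $t\ge 1/k$ and $L_k(t) = -\int_t^{1/k} L_{k-1}(x/(1-x))\,dx/x$ for $0<t<1/k$. Then for every $k \ge 0$ and every $\alpha$ with $0 < \alpha \le 1$, $L_k(\alpha) = \frac{(-1)^k}{k!} I_k(1/\alpha)$. -/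
open MeasureTheory

/-- The iterated integral `I_k(u)`. -/
noncomputable def Ik (k : ℕ) (u : ℝ) : ℝ :=
  ∫ t in {t : Fin k → ℝ | (∀ i, 1 ≤ t i) ∧ (∑ i, t i) ≤ u}, ∏ i, (t i)⁻¹

/-- The Dickman polylogarithms. -/
noncomputable def Lpoly : ℕ → ℝ → ℝ
  | 0, _ => 1
  | (k + 1), t =>
      if ((k : ℝ) + 1)⁻¹ ≤ t then 0
      else -∫ x in t..((k : ℝ) + 1)⁻¹, Lpoly k (x / (1 - x)) / x

namespace DP

def A (n : ℕ) (u : ℝ) : Set (Fin n → ℝ) := {t | (∀ i, 1 ≤ t i) ∧ (∑ i, t i) ≤ u}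

lemma Ik_eq (n : ℕ) (u : ℝ) : Ik n u = ∫ t in A n u, ∏ i, (t i)⁻¹ := rfl

def B (n : ℕ) (u : ℝ) : Set (ℝ × (Fin n → ℝ)) :=
  {p | 1 ≤ p.1 - ∑ i, p.2 i ∧ (∀ i, 1 ≤ p.2 i) ∧ p.1 ≤ u}

def C (n : ℕ) (u : ℝ) : Set (ℝ × (Fin n → ℝ)) :=
  {p | 1 ≤ p.1 ∧ (∀ i, 1 ≤ p.2 i) ∧ p.1 + ∑ i, p.2 i ≤ u}

lemma mA (n u) : MeasurableSet (A n u) := by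
  unfold A; measurability
lemma mB (n u) : MeasurableSet (B n u) := by
  apply IsClosed.measurableSet
  unfold B
  simp only [Set.setOf_and, Set.setOf_forall]
  exact (isClosed_le (by fun_prop) (by fun_prop)).inter
    ((isClosed_iInter fun i => isClosed_le (by fun_prop) (by fun_prop)).inter
      (isClosed_le (by fun_prop) (by fun_prop)))
lemma mC (n u) : MeasurableSet (C n u) := by
  apply IsClosed.measurableSet
  unfold C
  simp only [Set.setOf_and, Set.setOf_forall]
  exact (isClosed_le (by fun_prop) (by fun_prop)).inter
    ((isClosed_iInter fun i => isClosed_le (by fun_prop) (by fun_prop)).inter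
      (isClosed_le (by fun_prop) (by fun_prop)))

lemma coord_le {n : ℕ} {y : Fin n → ℝ} (h : ∀ i, 1 ≤ y i) (j : Fin n) : y j ≤ ∑ i, y i :=
  Finset.single_le_sum (f := y) (fun i _ => by linarith [h i]) (Finset.mem_univ j)

lemma sum_ge {n : ℕ} {y : Fin n → ℝ} (h : ∀ i, 1 ≤ y i) : (n : ℝ) ≤ ∑ i, y i := by
  have := Finset.sum_le_sum (s := Finset.univ) (fun i _ => h i)
  simpa using this

lemma prod_bd {n : ℕ} {y : Fin n → ℝ} (h : ∀ i, 1 ≤ y i) :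
    0 ≤ ∏ i, (y i)⁻¹ ∧ ∏ i, (y i)⁻¹ ≤ 1 :=
  ⟨Finset.prod_nonneg fun i _ => inv_nonneg.2 (by linarith [h i]),
    Finset.prod_le_one (fun i _ => inv_nonneg.2 (by linarith [h i])) fun i _ => inv_le_one_of_one_le₀ (h i)⟩

lemma finB (n u) : volume (B n u) ≠ ⊤ := by
  refine ((Metric.isBounded_Icc ((1 : ℝ), (fun _ => 1 : Fin n → ℝ)) (u, fun _ => u)).measure_lt_top.trans_le' (measure_mono ?_)).ne
  rintro ⟨s, y⟩ ⟨h1, h2, h3⟩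
  dsimp at h1 h2 h3
  have := sum_ge h2
  have hn : (0 : ℝ) ≤ n := n.cast_nonneg
  exact ⟨⟨by dsimp; linarith, h2⟩, ⟨h3, fun j => by dsimp; linarith [coord_le h2 j]⟩⟩

lemma finC (n u) : volume (C n u) ≠ ⊤ := by
  refine ((Metric.isBounded_Icc ((1 : ℝ), (fun _ => 1 : Fin n → ℝ)) (u, fun _ => u)).measure_lt_top.trans_le' (measure_mono ?_)).ne
  rintro ⟨s, y⟩ ⟨h1, h2, h3⟩
  dsimp at h1 h2 h3
  have := sum_ge h2
  have hn : (0 : ℝ) ≤ n := n.cast_nonneg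
  exact ⟨⟨h1, h2⟩, ⟨by dsimp; linarith, fun j => by dsimp; linarith [coord_le h2 j]⟩⟩

noncomputable def H (n : ℕ) (u : ℝ) : ℝ × (Fin n → ℝ) → ℝ :=
  (B n u).indicator fun p => p.1⁻¹ * ∏ i, (p.2 i)⁻¹

noncomputable def K (n : ℕ) (u : ℝ) : ℝ × (Fin n → ℝ) → ℝ :=
  (C n u).indicator fun p => (p.1 + ∑ i, p.2 i)⁻¹ * ∏ i, (p.2 i)⁻¹

lemma iH (n u) : Integrable (H n u) := by
  refine (integrable_indicator_iff (mB n u)).2 (Measure.integrableOn_of_bounded (M := 1) (finB n u) ?_ ?_)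
  · exact Measurable.aestronglyMeasurable (by fun_prop)
  · filter_upwards [ae_restrict_mem (mB n u)] with p hp
    obtain ⟨h1, h2, h3⟩ := hp
    have := sum_ge h2
    have hn : (0 : ℝ) ≤ n := n.cast_nonneg
    have h1 : 1 ≤ p.1 := by linarith
    obtain ⟨a, b⟩ := prod_bd h2
    rw [Real.norm_of_nonneg (by positivity)]
    exact mul_le_one₀ (inv_le_one_of_one_le₀ h1) a b

lemma iK (n u) : Integrable (K n u) := by
  refine (integrable_indicator_iff (mC n u)).2 (Measure.integrableOn_of_bounded (M := 1) (finC n u) ?_ ?_)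
  · exact Measurable.aestronglyMeasurable (by fun_prop)
  · filter_upwards [ae_restrict_mem (mC n u)] with p hp
    obtain ⟨h1, h2, h3⟩ := hp
    have := sum_ge h2
    have hn : (0 : ℝ) ≤ n := n.cast_nonneg
    have h1 : 1 ≤ p.1 + ∑ i, p.2 i := by linarith
    obtain ⟨a, b⟩ := prod_bd h2
    rw [Real.norm_of_nonneg (by positivity)]
    exact mul_le_one₀ (inv_le_one_of_one_le₀ h1) a b

lemma K_eq_H (n u) (x : ℝ) (y : Fin n → ℝ) : K n u (x, y) = H n u (x + ∑ i, y i, y) := by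
  have : (x, y) ∈ C n u ↔ (x + ∑ i, y i, y) ∈ B n u := by simp [C, B]
  by_cases h : (x, y) ∈ C n u
  · rw [K, H, Set.indicator_of_mem h, Set.indicator_of_mem (this.1 h)]
  · rw [K, H, Set.indicator_of_notMem h, Set.indicator_of_notMem (fun h' => h (this.2 h'))]

lemma A_empty {n : ℕ} {v : ℝ} (h : v < n) : A n v = ∅ := by
  ext t
  simp only [Set.mem_empty_iff_false, iff_false]
  rintro ⟨h1, h2⟩
  linarith [sum_ge h1]

lemma Ik_zero_of_lt {n : ℕ} {v : ℝ} (h : v < n) : Ik n v = 0 := by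
  rw [Ik_eq, A_empty h]; simp

lemma inner_H (n u s) : ∫ y, H n u (s, y) = (Set.Icc ((n : ℝ) + 1) u).indicator (fun s => s⁻¹ * Ik n (s - 1)) s := by
  by_cases hs : s ∈ Set.Icc ((n : ℝ) + 1) u
  · rw [Set.indicator_of_mem hs, Ik_eq, ← integral_indicator (mA n _), ← integral_const_mul]
    congr 1; ext y
    have : (s, y) ∈ B n u ↔ y ∈ A n (s - 1) := by
      simp only [B, A, Set.mem_setOf_eq]
      constructor
      · rintro ⟨a, b, c⟩; exact ⟨b, by linarith⟩
      · rintro ⟨b, a⟩; exact ⟨by linarith, b, hs.2⟩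
    by_cases h : y ∈ A n (s - 1)
    · rw [H, Set.indicator_of_mem h, Set.indicator_of_mem (this.2 h)]
    · rw [H, Set.indicator_of_notMem h, Set.indicator_of_notMem (fun h' => h (this.1 h')), mul_zero]
  · rw [Set.indicator_of_notMem hs]
    refine integral_eq_zero_of_ae (Filter.Eventually.of_forall fun y => ?_)
    apply Set.indicator_of_notMem
    rintro ⟨a, b, c⟩
    dsimp at a b c
    exact hs ⟨by linarith [sum_ge b], c⟩

lemma int_K (n u) : ∫ p, K n u p = ∫ s in Set.Icc ((n : ℝ) + 1) u, s⁻¹ * Ik n (s - 1) := by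
  rw [← integral_indicator measurableSet_Icc]
  simp_rw [← inner_H]
  rw [Measure.volume_eq_prod, integral_prod_symm _ (iK n u),
    integral_integral_swap (f := fun s y => H n u (s, y)) (iH n u)]
  congr 1; ext y
  simp_rw [K_eq_H]
  exact integral_add_right_eq_self (fun s => H n u (s, y)) _

lemma Ik_succ (n u) : Ik (n + 1) u = (n + 1) * ∫ s in Set.Icc ((n : ℝ) + 1) u, s⁻¹ * Ik n (s - 1) := by
  rw [← int_K, Ik_eq, ← integral_indicator (mA _ _)]
  have hmp := fun i => volume_preserving_piFinSuccAbove (fun _ : Fin (n + 1) => ℝ) i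
  have key : ∀ t : Fin (n + 1) → ℝ, (A (n + 1) u).indicator (fun t => ∏ i, (t i)⁻¹) t =
      ∑ i : Fin (n + 1), K n u (MeasurableEquiv.piFinSuccAbove (fun _ => ℝ) i t) := by
    intro t
    have hval : ∀ i, MeasurableEquiv.piFinSuccAbove (fun _ => ℝ) i t = (t i, fun j => t (i.succAbove j)) :=
      fun i => rfl
    have hiff : ∀ i, (t i, fun j => t (i.succAbove j)) ∈ C n u ↔ t ∈ A (n + 1) u := by
      intro i
      simp only [C, A, Set.mem_setOf_eq]
      rw [← Fin.sum_univ_succAbove t i, Fin.forall_iff_succAbove i, and_assoc]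
    simp_rw [hval]
    by_cases h : t ∈ A (n + 1) u
    · rw [Set.indicator_of_mem h]
      have : ∀ i, K n u (t i, fun j => t (i.succAbove j)) = t i * ((∑ i, t i)⁻¹ * ∏ i, (t i)⁻¹) := by
        intro i
        rw [K, Set.indicator_of_mem ((hiff i).2 h)]
        dsimp only
        have h0 : t i ≠ 0 := by linarith [h.1 i]
        rw [← Fin.sum_univ_succAbove t i, Fin.prod_univ_succAbove (fun i => (t i)⁻¹) i]
        field_simp
      simp_rw [this]
      rw [← Finset.sum_mul, ← mul_assoc, mul_inv_cancel₀, one_mul]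
      have := sum_ge h.1
      push_cast at this
      have hn : (0 : ℝ) ≤ n := n.cast_nonneg
      linarith
    · rw [Set.indicator_of_notMem h, eq_comm]
      apply Finset.sum_eq_zero
      intro i _
      exact Set.indicator_of_notMem (fun h' => h ((hiff i).1 h')) _
  simp_rw [key]
  rw [integral_finsetSum]
  · have : ∀ i, ∫ t, K n u (MeasurableEquiv.piFinSuccAbove (fun _ => ℝ) i t) = ∫ p, K n u p :=
      fun i => (hmp i).integral_comp' (K n u)
    rw [Finset.sum_congr rfl fun i _ => this i]
    simp
  · intro i _
    exact (hmp i).integrable_comp_of_integrable (iK n u)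

lemma subst (g : ℝ → ℝ) {a b : ℝ} (ha : 0 < a) (hab : a ≤ b) :
    ∫ s in Set.Icc b⁻¹ a⁻¹, s⁻¹ * g s = ∫ x in a..b, g x⁻¹ / x := by
  have him : Set.Icc b⁻¹ a⁻¹ = (fun x : ℝ => x⁻¹) '' Set.Icc a b := by
    ext s
    simp only [Set.mem_Icc, Set.mem_image]
    constructor
    · rintro ⟨h1, h2⟩
      have hb : 0 < b⁻¹ := by have := ha.trans_le hab; positivity
      refine ⟨s⁻¹, ⟨?_, ?_⟩, inv_inv s⟩
      · exact (le_inv_comm₀ ha (by linarith)).2 h2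
      · exact (inv_le_comm₀ (by linarith) (ha.trans_le hab)).2 h1
    · rintro ⟨x, ⟨h1, h2⟩, rfl⟩
      have : 0 < x := by linarith
      exact ⟨inv_anti₀ this h2, inv_anti₀ ha h1⟩
  rw [him, integral_image_eq_integral_abs_deriv_smul (f' := fun x => -(x ^ 2)⁻¹) measurableSet_Icc
    (fun x hx => (hasDerivAt_inv (by linarith [hx.1])).hasDerivWithinAt)
    (fun x _ y _ h => inv_injective h),
    intervalIntegral.integral_of_le hab, ← integral_Icc_eq_integral_Ioc]
  apply setIntegral_congr_fun measurableSet_Icc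
  intro x hx
  have : 0 < x := by linarith [hx.1]
  simp only [abs_neg, smul_eq_mul, inv_inv]
  rw [abs_of_pos (by positivity)]
  field_simp

lemma main (k : ℕ) : ∀ α : ℝ, 0 < α →
    Lpoly k α = (-1) ^ k / (Nat.factorial k : ℝ) * Ik k α⁻¹ := by
  induction k with
  | zero =>
    intro α h
    have : A 0 α⁻¹ = Set.univ := by
      ext t; simp [A, h.le]
    have hv : (volume : Measure (Fin 0 → ℝ)).real Set.univ = 1 := by
      rw [Measure.real, volume_pi, Measure.pi_of_empty]
      simp
    simp [Lpoly, Ik_eq, this, hv]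
  | succ k ih =>
    intro α h
    have hk : (0 : ℝ) < (k : ℝ) + 1 := by positivity
    rw [Lpoly, Ik_succ]
    split_ifs with hc
    · have : α⁻¹ ≤ k + 1 := inv_le_of_inv_le₀ hk hc
      rw [integral_Icc_eq_integral_Ioc, Set.Ioc_eq_empty (by linarith)]
      simp
    · push Not at hc
      have := subst (fun s => Ik k (s - 1)) h hc.le
      rw [inv_inv] at this
      rw [this]
      have e : ∫ x in α..((k : ℝ) + 1)⁻¹, Lpoly k (x / (1 - x)) / x =
          ∫ x in α..((k : ℝ) + 1)⁻¹, ((-1) ^ k / (Nat.factorial k : ℝ)) * (Ik k (x⁻¹ - 1) / x) := by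
        rw [intervalIntegral.integral_of_le hc.le, intervalIntegral.integral_of_le hc.le,
          integral_Ioc_eq_integral_Ioo, integral_Ioc_eq_integral_Ioo]
        apply setIntegral_congr_fun measurableSet_Ioo
        intro x hx
        have hx0 : 0 < x := h.trans hx.1
        have hx1 : x < 1 := hx.2.trans_le (inv_le_one_of_one_le₀ (by linarith [k.cast_nonneg (α := ℝ)]))
        have h1 : 0 < 1 - x := by linarith
        dsimp only
        rw [ih _ (div_pos hx0 h1), inv_div, sub_div, div_self hx0.ne', one_div, mul_div_assoc]
      rw [e, intervalIntegral.integral_const_mul, Nat.factorial_succ]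
      push_cast
      have := Nat.factorial_ne_zero k
      field_simp
      ring

end DP

/-- for every `k ≥ 0` and `0 < α ≤ 1`, `L_k(α) = ((-1)^k / k!) I_k(1/α)`. -/
theorem Lpoly_eq_Ik (k : ℕ) (α : ℝ) (hα0 : 0 < α) (hα1 : α ≤ 1) :
    Lpoly k α = (-1) ^ k / (Nat.factorial k : ℝ) * Ik k (1 / α) := by
  rw [one_div]
  exact DP.main k α hα0
end

section
/- Let $\rho:[0,\infty)\to[0,1]$ be the Dickman function, defined by $\rho(u)=1$ for $0\le u\le 1$ and as the unique continuous solution of $u\rho'(u) = -\rho(u-1)$ for $u \ge 1$. For integers $k \ge 0$ define $I_k(u) = \int_{t_1,\ldots,t_k \ge 1,\ t_1+\cdots+t_k \le u} \frac{dt_1}{t_1}\cdots\frac{dt_k}{t_k}$ (with $I_0(u)=1$). Then for every $u \ge 0$, $\rho(u) = \sum_{k=0}^{\infty} \frac{(-1)^k}{k!} I_k(u)$, the sum being finite since $I_k(u) = 0$ whenever $k \ge u$. -/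
open MeasureTheory

noncomputable def gg (t : ℝ) : ENNReal := if 1 ≤ t then ENNReal.ofReal t⁻¹ else 0

noncomputable def LL (k : ℕ) (u : ℝ) : ENNReal :=
  ∫⁻ t : Fin k → ℝ, (∏ i, gg (t i)) * (if ∑ i, t i ≤ u then 1 else 0)

lemma gg_meas : Measurable gg := by
  unfold gg
  exact Measurable.ite measurableSet_Ici (by fun_prop) measurable_const

lemma gg_zero {t : ℝ} (h : t < 1) : gg t = 0 := by
  unfold gg; rw [if_neg (not_le.mpr h)]

lemma gg_le (t : ℝ) : gg t ≤ 1 := by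
  unfold gg; split_ifs with h
  · rw [ENNReal.ofReal_le_one]; exact inv_le_one_of_one_le₀ h
  · simp

lemma gg_mul (t : ℝ) : ENNReal.ofReal t * gg t = if 1 ≤ t then 1 else 0 := by
  unfold gg; split_ifs with h
  · rw [← ENNReal.ofReal_mul (by linarith), mul_inv_cancel₀ (by linarith), ENNReal.ofReal_one]
  · simp

lemma prod_gg_meas (k : ℕ) : Measurable (fun t : Fin k → ℝ => ∏ i, gg (t i)) :=
  Finset.measurable_fun_prod _ (fun i _ => gg_meas.comp (measurable_pi_apply i))

lemma ite_meas (k : ℕ) : Measurable (fun p : (Fin k → ℝ) × ℝ => if ∑ i, p.1 i ≤ p.2 then (1:ENNReal) else 0) := by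
  refine Measurable.ite (measurableSet_le ?_ ?_) measurable_const measurable_const <;> fun_prop

lemma ite_meas' (k : ℕ) (u : ℝ) : Measurable (fun p : (Fin k → ℝ) => if ∑ i, p i ≤ u then (1:ENNReal) else 0) := by
  refine Measurable.ite (measurableSet_le ?_ ?_) measurable_const measurable_const <;> fun_prop

lemma main_meas (k : ℕ) (u : ℝ) : Measurable (fun t : (Fin k → ℝ) => (∏ i, gg (t i)) * if ∑ i, t i ≤ u then (1:ENNReal) else 0) :=
  (prod_gg_meas k).mul (ite_meas' k u)

lemma LL_meas (k : ℕ) : Measurable (LL k) := by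
  unfold LL
  apply Measurable.lintegral_prod_right' (f := fun p : ℝ × (Fin k → ℝ) => (∏ i, gg (p.2 i)) * (if ∑ i, p.2 i ≤ p.1 then 1 else 0))
  exact ((prod_gg_meas k).comp measurable_snd).mul ((ite_meas k).comp measurable_swap)

lemma LL_mono (k : ℕ) : Monotone (LL k) := by
  intro a b hab
  refine lintegral_mono fun t => ?_
  dsimp only
  gcongr
  split_ifs with h1 h2
  · exact le_rfl
  · exact absurd (h1.trans hab) h2
  · simp
  · simp

lemma LL_zero (k : ℕ) (u : ℝ) (h : u < k) : LL k u = 0 := by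
  unfold LL
  rw [← lintegral_zero (μ := (volume : Measure (Fin k → ℝ)))]
  congr 1; ext t
  split_ifs with h1
  · by_cases h2 : ∀ i, 1 ≤ t i
    · have : ∑ i : Fin k, (1:ℝ) ≤ ∑ i, t i := Finset.sum_le_sum fun i _ => h2 i
      simp at this; linarith
    · push Not at h2
      obtain ⟨i, hi⟩ := h2
      rw [Finset.prod_eq_zero (Finset.mem_univ i) (gg_zero hi)]; simp
  · simp

lemma LL_lt_top (k : ℕ) (u : ℝ) : LL k u < ⊤ := by
  have : LL k u ≤ ∫⁻ t : Fin k → ℝ, (Set.Icc (fun _ => (1:ℝ)) (fun _ => u)).indicator 1 t := by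
    refine lintegral_mono fun t => ?_
    dsimp only
    by_cases h2 : ∀ i, 1 ≤ t i
    · split_ifs with h1
      · rw [Set.indicator_of_mem]
        · simpa using Finset.prod_le_one' (fun i _ => gg_le (t i))
        · refine ⟨fun i => h2 i, fun i => ?_⟩
          refine le_trans ?_ h1
          exact Finset.single_le_sum (f := t) (fun j _ => by linarith [h2 j]) (Finset.mem_univ i)
      · simp
    · push Not at h2
      obtain ⟨i, hi⟩ := h2
      rw [Finset.prod_eq_zero (Finset.mem_univ i) (gg_zero hi)]; simp
  refine this.trans_lt ?_
  rw [lintegral_indicator_one measurableSet_Icc]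
  exact isCompact_Icc.measure_lt_top

lemma Ik_eq (k : ℕ) (u : ℝ) : Ik k u = (LL k u).toReal := by
  unfold Ik LL
  have hm : MeasurableSet {t : Fin k → ℝ | (∀ i, 1 ≤ t i) ∧ (∑ i, t i) ≤ u} := by
    have h2 : MeasurableSet {t : Fin k → ℝ | (∑ i, t i) ≤ u} := measurableSet_le (by fun_prop) (by fun_prop)
    refine MeasurableSet.inter ?_ h2
    have : {t : Fin k → ℝ | ∀ i, 1 ≤ t i} = Set.Ici (fun _ => (1:ℝ)) := by ext; simp [Pi.le_def]
    change MeasurableSet {t : Fin k → ℝ | ∀ i, 1 ≤ t i}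
    rw [this]; exact measurableSet_Ici
  rw [integral_eq_lintegral_of_nonneg_ae, ← lintegral_indicator hm]
  · congr 2; ext t
    by_cases h2 : ∀ i, 1 ≤ t i
    · by_cases h1 : ∑ i, t i ≤ u
      · rw [Set.indicator_of_mem (by exact ⟨h2, h1⟩), if_pos h1, mul_one,
          ENNReal.ofReal_prod_of_nonneg (fun i _ => by have := h2 i; positivity)]
        exact Finset.prod_congr rfl fun i _ => by rw [gg, if_pos (h2 i)]
      · rw [Set.indicator_of_notMem (fun h => h1 h.2), if_neg h1, mul_zero]
    · rw [Set.indicator_of_notMem (fun h => h2 h.1)]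
      push Not at h2
      obtain ⟨i, hi⟩ := h2
      rw [Finset.prod_eq_zero (Finset.mem_univ i) (gg_zero hi)]; simp
  · filter_upwards [ae_restrict_mem hm] with t ht
    exact Finset.prod_nonneg fun i _ => by have := ht.1 i; positivity
  · exact (Finset.measurable_fun_prod _ (fun i _ => (measurable_pi_apply i).inv)).aestronglyMeasurable

lemma LL_int (k : ℕ) (u : ℝ) : ∫⁻ s in Set.Iic u, LL k s =
    ∫⁻ t : Fin k → ℝ, (∏ i, gg (t i)) * ENNReal.ofReal (u - ∑ i, t i) := by
  unfold LL
  rw [lintegral_lintegral_swap]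
  · congr 1; ext t
    rw [lintegral_const_mul]
    · congr 1
      have : ∀ s : ℝ, (if ∑ i, t i ≤ s then (1:ENNReal) else 0) = (Set.Ici (∑ i, t i)).indicator 1 s := by
        intro s; simp [Set.indicator]
      simp_rw [this]
      rw [lintegral_indicator_one measurableSet_Ici, Measure.restrict_apply measurableSet_Ici,
        Set.Ici_inter_Iic, Real.volume_Icc]
    · exact Measurable.ite measurableSet_Ici measurable_const measurable_const
  · exact (((prod_gg_meas k).comp measurable_snd).mul ((ite_meas k).comp measurable_swap)).aemeasurable

lemma LL_one (k : ℕ) (u : ℝ) (i : Fin (k+1)) :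
    ∫⁻ t : Fin (k+1) → ℝ, ENNReal.ofReal (t i) * ((∏ i, gg (t i)) * (if ∑ i, t i ≤ u then 1 else 0))
     = ∫⁻ s in Set.Iic (u-1), LL k s := by
  have e := (volume_preserving_piFinSuccAbove (fun _ : Fin (k+1) => ℝ) i).symm
  rw [← e.lintegral_comp_emb (MeasurableEquiv.measurableEmbedding _)]
  have : ∀ p : ℝ × (Fin k → ℝ), (fun t : Fin (k+1) → ℝ => ENNReal.ofReal (t i) * ((∏ i, gg (t i)) * (if ∑ i, t i ≤ u then 1 else 0))) ((MeasurableEquiv.piFinSuccAbove (fun _ : Fin (k+1) => ℝ) i).symm p) =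
     (if 1 ≤ p.1 then 1 else 0) * ((∏ i, gg (p.2 i)) * (if ∑ i, p.2 i ≤ u - p.1 then 1 else 0)) := by
    intro p
    simp only [Fin.prod_univ_succAbove _ i, Fin.sum_univ_succAbove _ i, MeasurableEquiv.piFinSuccAbove_symm_apply, Fin.insertNthEquiv_apply, Fin.insertNth_apply_same, Fin.insertNth_apply_succAbove, ← gg_mul]
    simp only [le_sub_iff_add_le']
    ring
  simp_rw [this]
  rw [Measure.volume_eq_prod, lintegral_prod]
  · have h1 : ∀ x : ℝ, ∫⁻ y : Fin k → ℝ, (if 1 ≤ x then (1:ENNReal) else 0) * ((∏ i, gg (y i)) * (if ∑ i, y i ≤ u - x then 1 else 0)) = (Set.Iic (u-1)).indicator (LL k) (u - x) := by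
      intro x
      rw [lintegral_const_mul _ (main_meas k _)]
      by_cases hx : 1 ≤ x
      · rw [if_pos hx, one_mul, Set.indicator_of_mem (by simp only [Set.mem_Iic]; linarith)]; rfl
      · rw [if_neg hx, zero_mul, Set.indicator_of_notMem (by simp only [Set.mem_Iic]; linarith)]
    simp_rw [h1]
    rw [lintegral_sub_left_eq_self (fun x => (Set.Iic (u-1)).indicator (LL k) x), lintegral_indicator measurableSet_Iic]
  · apply Measurable.aemeasurable
    refine Measurable.mul (Measurable.ite (measurableSet_le (by fun_prop) (by fun_prop)) measurable_const measurable_const) (Measurable.mul ((prod_gg_meas k).comp measurable_snd) ?_)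
    exact Measurable.ite (measurableSet_le (by fun_prop) (by fun_prop)) measurable_const measurable_const

lemma LL_rec (k : ℕ) (u : ℝ) : ENNReal.ofReal u * LL (k+1) u =
    (∫⁻ s in Set.Iic u, LL (k+1) s) + (k+1) * ∫⁻ s in Set.Iic (u-1), LL k s := by
  have h : (k+1 : ENNReal) * ∫⁻ s in Set.Iic (u-1), LL k s = ∑ i : Fin (k+1), ∫⁻ t : Fin (k+1) → ℝ, ENNReal.ofReal (t i) * ((∏ i, gg (t i)) * (if ∑ i, t i ≤ u then 1 else 0)) := by
    simp_rw [LL_one]; simp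
  have hm := main_meas (k+1) u
  rw [h, LL_int, ← lintegral_finsetSum, ← lintegral_add_left]
  · unfold LL
    rw [← lintegral_const_mul _ hm]
    congr 1; ext t
    by_cases h2 : ∀ i, 1 ≤ t i
    · have h0 : 0 ≤ ∑ i, t i := Finset.sum_nonneg fun i _ => by linarith [h2 i]
      rw [← Finset.sum_mul, ← ENNReal.ofReal_sum_of_nonneg (fun i _ => by linarith [h2 i])]
      split_ifs with h1
      · conv_lhs => rw [show u = (u - ∑ i, t i) + ∑ i, t i by ring, ENNReal.ofReal_add (by linarith) h0]
        ring
      · rw [ENNReal.ofReal_of_nonpos (by linarith : u - ∑ i, t i ≤ 0)]; simp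
    · push Not at h2
      obtain ⟨i, hi⟩ := h2
      rw [Finset.prod_eq_zero (Finset.mem_univ i) (gg_zero hi)]; simp
  · exact (prod_gg_meas _).mul (by fun_prop)
  · intro i _
    exact (by fun_prop : Measurable fun t : Fin (k+1) → ℝ => ENNReal.ofReal (t i)).mul hm

lemma Ik_mono (k : ℕ) : Monotone (Ik k) := by
  intro a b h
  rw [Ik_eq, Ik_eq]
  exact ENNReal.toReal_mono (LL_lt_top _ _).ne (LL_mono k h)

lemma Ik_int (k : ℕ) (u : ℝ) (hu : 0 ≤ u) : (∫⁻ s in Set.Iic u, LL k s) ≠ ⊤ ∧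
   (∫⁻ s in Set.Iic u, LL k s).toReal = ∫ s in (0:ℝ)..u, Ik k s := by
  have h1 : ∫⁻ s in Set.Iic u, LL k s = ∫⁻ s in Set.Ioc 0 u, LL k s := by
    rw [← Set.Iic_union_Ioc_eq_Iic hu, lintegral_union measurableSet_Ioc (by
      rw [Set.disjoint_left]; intro x hx hx'; exact absurd hx'.1 (not_lt.mpr hx))]
    have : ∫⁻ s in Set.Iic 0, LL k s = 0 := by
      rw [setLIntegral_congr (Iio_ae_eq_Iic (a := (0:ℝ))).symm]
      rw [setLIntegral_congr_fun (g := fun _ => 0) measurableSet_Iio]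
      · simp
      · intro x hx
        exact LL_zero k x (lt_of_lt_of_le hx (by positivity))
    rw [this, zero_add]
  rw [h1]
  constructor
  · refine ne_top_of_le_ne_top ?_ (setLIntegral_mono' (g := fun _ => LL k u) measurableSet_Ioc fun x hx => LL_mono k hx.2)
    rw [setLIntegral_const]
    exact ENNReal.mul_ne_top (LL_lt_top _ _).ne (by simp)
  · rw [intervalIntegral.integral_of_le hu]
    simp_rw [Ik_eq]
    rw [integral_toReal (LL_meas k).aemeasurable]
    exact Filter.Eventually.of_forall fun x => LL_lt_top _ _

lemma Ik_rec (k : ℕ) (u : ℝ) (hu : 1 ≤ u) : u * Ik (k+1) u =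
    (∫ s in (0:ℝ)..u, Ik (k+1) s) + (k+1) * ∫ s in (0:ℝ)..(u-1), Ik k s := by
  have h := congrArg ENNReal.toReal (LL_rec k u)
  obtain ⟨a1, a2⟩ := Ik_int (k+1) u (by linarith)
  obtain ⟨b1, b2⟩ := Ik_int k (u-1) (by linarith)
  rw [ENNReal.toReal_mul, ENNReal.toReal_ofReal (by linarith), ENNReal.toReal_add a1
    (ENNReal.mul_ne_top (by finiteness) b1), ENNReal.toReal_mul, a2, b2, ← Ik_eq] at h
  rw [h]
  congr 2

lemma Ik_zero' (k : ℕ) (u : ℝ) (h : u < k) : Ik k u = 0 := by rw [Ik_eq, LL_zero k u h]; rfl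

lemma Ik_0 (u : ℝ) (h : 0 ≤ u) : Ik 0 u = 1 := by
  rw [Ik_eq]; simp [LL, h, Measure.volume_pi_eq_dirac (x := (fun i => i.elim0 : Fin 0 → ℝ))]

noncomputable def cc (k : ℕ) : ℝ := (-1) ^ k / (Nat.factorial k : ℝ)

noncomputable def SS (N : ℕ) (u : ℝ) : ℝ := ∑ k ∈ Finset.range N, cc k * Ik k u

lemma SS_ii (N : ℕ) (a b : ℝ) : IntervalIntegrable (SS N) volume a b := by
  unfold SS
  have := IntervalIntegrable.sum (μ := volume) (a := a) (b := b) (Finset.range N) (f := fun k u => cc k * Ik k u)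
    (fun i _ => ((Ik_mono i).intervalIntegrable).const_mul _)
  have e : (fun u => ∑ k ∈ Finset.range N, cc k * Ik k u) = ∑ k ∈ Finset.range N, fun u => cc k * Ik k u := by
    ext x; simp
  change IntervalIntegrable (fun u => ∑ k ∈ Finset.range N, cc k * Ik k u) volume a b
  rw [e]; exact this

lemma SS_integral (N : ℕ) (a b : ℝ) : ∫ s in a..b, SS N s = ∑ k ∈ Finset.range N, cc k * ∫ s in a..b, Ik k s := by
  unfold SS
  rw [intervalIntegral.integral_finsetSum]
  · simp
  · intro i _
    exact ((Ik_mono i).intervalIntegrable).const_mul _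

lemma SS_rec (N : ℕ) (u : ℝ) (hu : 1 ≤ u) (huN : u < N + 1) :
    u * SS (N+1) u = (∫ s in (0:ℝ)..u, SS (N+1) s) - ∫ s in (0:ℝ)..(u-1), SS (N+1) s := by
  have h0 : ∫ s in (0:ℝ)..(u-1), Ik N s = 0 := by
    rw [intervalIntegral.integral_congr (g := fun _ => (0:ℝ))]
    · simp
    · intro x hx
      rw [Set.uIcc_of_le (by linarith)] at hx
      exact Ik_zero' N x (by linarith [hx.2])
  have h1 : ∫ s in (0:ℝ)..u, Ik 0 s = u := by
    rw [intervalIntegral.integral_congr (g := fun _ => (1:ℝ))]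
    · simp
    · intro x hx
      rw [Set.uIcc_of_le (by linarith)] at hx
      exact Ik_0 x hx.1
  rw [SS_integral, SS_integral, Finset.sum_range_succ (fun k => cc k * ∫ s in (0:ℝ)..(u-1), Ik k s) N, h0, mul_zero, add_zero]
  rw [Finset.sum_range_succ' _ N, h1, SS, Finset.sum_range_succ' _ N, Ik_0 u (by linarith), mul_add, Finset.mul_sum]
  have : ∀ k, u * (cc (k+1) * Ik (k+1) u) = cc (k+1) * (∫ s in (0:ℝ)..u, Ik (k+1) s) - cc k * ∫ s in (0:ℝ)..(u-1), Ik k s := by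
    intro k
    have hc : cc (k+1) * (k+1) = - cc k := by
      unfold cc
      rw [Nat.factorial_succ]
      have : (k.factorial : ℝ) ≠ 0 := by positivity
      push_cast
      field_simp
      ring
    rw [mul_left_comm, Ik_rec k u hu]
    linear_combination (∫ s in (0:ℝ)..(u-1), Ik k s) * hc
  simp_rw [this]
  rw [Finset.sum_sub_distrib]; ring

lemma SS_bdd (N : ℕ) (b : ℝ) : ∃ M, ∀ u ≤ b, |SS N u| ≤ M := by
  refine ⟨∑ k ∈ Finset.range N, |cc k| * Ik k b, fun u hu => ?_⟩
  refine (Finset.abs_sum_le_sum_abs _ _).trans (Finset.sum_le_sum fun k _ => ?_)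
  rw [abs_mul]
  have : 0 ≤ Ik k u := by rw [Ik_eq]; positivity
  rw [abs_of_nonneg this]
  gcongr
  exact Ik_mono k hu

lemma rho_rec (ρ : ℝ → ℝ)
    (hcont : Continuous ρ)
    (hone : ∀ u ∈ Set.Icc (0 : ℝ) 1, ρ u = 1)
    (hderiv : ∀ u : ℝ, 1 < u → HasDerivAt ρ (-ρ (u - 1) / u) u) (u : ℝ) (hu : 1 ≤ u) :
    u * ρ u = (∫ s in (0:ℝ)..u, ρ s) - ∫ s in (0:ℝ)..(u-1), ρ s := by
  have hP : ∀ x, HasDerivAt (fun y => ∫ s in (0:ℝ)..y, ρ s) (ρ x) x := fun x =>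
    intervalIntegral.integral_hasDerivAt_right (hcont.intervalIntegrable _ _) (hcont.stronglyMeasurableAtFilter _ _) hcont.continuousAt
  have hP1 : ∀ x, HasDerivAt (fun y => ∫ s in (0:ℝ)..(y-1), ρ s) (ρ (x-1)) x := fun x => by
    exact (hP (x-1)).comp_sub_const x 1
  have hc1 : Continuous (fun y => ∫ s in (0:ℝ)..y, ρ s) := continuous_iff_continuousAt.mpr fun x => (hP x).continuousAt
  have hc2 : Continuous (fun y => ∫ s in (0:ℝ)..(y-1), ρ s) := continuous_iff_continuousAt.mpr fun x => (hP1 x).continuousAt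
  have h1 : ∫ s in (0:ℝ)..1, ρ s = 1 := by
    rw [intervalIntegral.integral_congr (g := fun _ => (1:ℝ))]
    · simp
    · intro x hx
      rw [Set.uIcc_of_le (by linarith)] at hx
      exact hone x hx
  rcases hu.eq_or_lt with rfl | hu
  · simp [h1, hone]
  obtain ⟨c, hc, hc'⟩ := exists_hasDerivAt_eq_slope (fun y => y * ρ y - (∫ s in (0:ℝ)..y, ρ s) + ∫ s in (0:ℝ)..(y-1), ρ s) (fun _ => 0) hu (by fun_prop) (by
    intro x hx
    have := (((hasDerivAt_id x).mul (hderiv x hx.1)).sub (hP x)).add (hP1 x)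
    have hx0 : x ≠ 0 := by linarith [hx.1]
    have e : x * (-ρ (x-1) / x) = -ρ (x-1) := by field_simp
    have e2 : 1 * ρ x + x * (-ρ (x-1) / x) - ρ x + ρ (x-1) = 0 := by rw [e]; ring
    exact e2 ▸ this)
  have h2 := hone 1 (by simp)
  rw [eq_comm, div_eq_zero_iff] at hc'
  simp [h1, h2] at hc'
  rcases hc' with h | h <;> linarith

lemma uniq (B : ℕ) (D : ℝ → ℝ) (hi : ∀ a b, IntervalIntegrable D volume a b)
    (hz : ∀ u : ℝ, 0 ≤ u → u < 1 → D u = 0) (hb : ∃ M, ∀ u : ℝ, 0 ≤ u → u ≤ B → |D u| ≤ M)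
    (hr : ∀ u : ℝ, 1 ≤ u → u < B → u * D u = (∫ s in (0:ℝ)..u, D s) - ∫ s in (0:ℝ)..(u-1), D s) :
    ∀ n : ℕ, 1 ≤ n → n ≤ B → ∀ u : ℝ, 0 ≤ u → u < n → D u = 0 := by
  obtain ⟨M, hM⟩ := hb
  intro n hn
  induction n, hn using Nat.le_induction with
  | base => intro _ u h0 h1; exact hz u h0 (by simpa using h1)
  | succ n hn ih =>
    intro hB
    have hB' : (n:ℝ) + 1 ≤ B := by exact_mod_cast hB
    have hn' : (1:ℝ) ≤ n := by exact_mod_cast hn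
    replace ih := ih (by omega)
    have key : ∀ u : ℝ, n ≤ u → u < n + 1 → u * D u = ∫ s in (n:ℝ)..u, D s := by
      intro u h1 h2
      rw [hr u (by linarith) (by linarith)]
      have hzero : ∀ x : ℝ, 0 ≤ x → x ≤ n → ∫ s in (0:ℝ)..x, D s = 0 := by
        intro x hx hxn
        rw [intervalIntegral.integral_of_le hx, ← setIntegral_congr_set (Ioo_ae_eq_Ioc (a := 0) (b := x))]
        refine setIntegral_eq_zero_of_forall_eq_zero fun y hy => ih y hy.1.le (by linarith [hy.2])
      rw [hzero (u-1) (by linarith) (by linarith), sub_zero,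
        ← intervalIntegral.integral_add_adjacent_intervals (hi 0 n) (hi n u), hzero n (by linarith) le_rfl, zero_add]
    have it : ∀ j : ℕ, ∀ u : ℝ, (n:ℝ) ≤ u → u < n + 1 → |D u| ≤ M * (1/2)^j := by
      intro j
      induction j with
      | zero => intro u h1 h2; simpa using hM u (by linarith) (by linarith)
      | succ j ihj =>
        intro u h1 h2
        have hMn : 0 ≤ M * (1/2)^j := (abs_nonneg _).trans (ihj u h1 h2)
        have h3 : |∫ s in (n:ℝ)..u, D s| ≤ M * (1/2)^j * |u - n| := by
          rw [← Real.norm_eq_abs]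
          apply intervalIntegral.norm_integral_le_of_norm_le_const
          intro x hx
          rw [Set.uIoc_of_le h1] at hx
          exact ihj x hx.1.le (by linarith [hx.2])
        rw [← key u h1 h2, abs_mul, abs_of_nonneg (by linarith : 0 ≤ u), abs_of_nonneg (by linarith : 0 ≤ u - n)] at h3
        have h4 : u * |D u| ≤ u * (M * (1/2)^(j+1)) := by
          refine h3.trans ?_
          rw [pow_succ]
          nlinarith
        exact le_of_mul_le_mul_left h4 (by linarith)
    intro u h0 h1
    push_cast at h1
    rcases lt_or_ge u n with h | h
    · exact ih u h0 h
    · have hl : Filter.Tendsto (fun j : ℕ => M * (1/2:ℝ)^j) Filter.atTop (nhds 0) := by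
        simpa using (tendsto_pow_atTop_nhds_zero_of_lt_one (by norm_num) (by norm_num : (1/2:ℝ) < 1)).const_mul M
      have := ge_of_tendsto' hl (fun j => it j u h h1)
      exact abs_eq_zero.mp (le_antisymm this (abs_nonneg _))

/-- if `ρ` is the Dickman function (continuous on `[0,∞)`, equal to `1` on
`[0,1]`, and satisfying `u ρ'(u) = -ρ(u-1)` for `u > 1`), then for every `u ≥ 0`,
`ρ(u) = ∑_{k=0}^∞ ((-1)^k/k!) I_k(u)`; the sum is in fact finite since `I_k(u) = 0`
whenever `k ≥ u` (here stated for `u < k`). -/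
theorem dickman_eq_sum_Ik (ρ : ℝ → ℝ)
    (hcont : ContinuousOn ρ (Set.Ici 0))
    (hone : ∀ u ∈ Set.Icc (0 : ℝ) 1, ρ u = 1)
    (hderiv : ∀ u : ℝ, 1 < u → HasDerivAt ρ (-ρ (u - 1) / u) u) :
    ∀ u : ℝ, 0 ≤ u →
      HasSum (fun k : ℕ => (-1) ^ k / (Nat.factorial k : ℝ) * Ik k u) (ρ u) ∧
        ∀ k : ℕ, u < k → Ik k u = 0 := by
  intro u hu
  refine ⟨?_, fun k hk => Ik_zero' k u hk⟩
  obtain ⟨N, hN⟩ := exists_nat_gt u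
  have hN' : u < (N + 1 : ℕ) := by push_cast; linarith
  suffices h : ρ u = SS (N+1) u by
    rw [h]
    refine hasSum_sum_of_ne_finset_zero fun k hk => ?_
    rw [Ik_zero' k u, mul_zero]
    refine hN'.trans_le ?_
    simp only [Finset.mem_range, not_lt] at hk
    exact_mod_cast hk
  set r : ℝ → ℝ := fun x => ρ (max x 0) with hr
  have hre : ∀ x, 0 ≤ x → r x = ρ x := fun x hx => by simp [hr, hx]
  have hrc : Continuous r := by
    rw [← continuousOn_univ]
    exact hcont.comp (by fun_prop) (fun x _ => by simp)
  have hr1 : ∀ u ∈ Set.Icc (0 : ℝ) 1, r u = 1 := fun x hx => by rw [hre x hx.1, hone x hx]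
  have hrd : ∀ u : ℝ, 1 < u → HasDerivAt r (-r (u - 1) / u) u := by
    intro x hx
    rw [hre _ (by linarith)]
    refine (hderiv x hx).congr_of_eventuallyEq ?_
    filter_upwards [lt_mem_nhds hx] with y hy
    exact hre y (by linarith)
  have := uniq (N+1) (fun x => r x - SS (N+1) x) (fun a b => (hrc.intervalIntegrable a b).sub (SS_ii _ _ _)) ?_ ?_ ?_ (N+1) (by omega) le_rfl u hu hN'
  · rw [hre u hu] at this; linarith
  · intro x h0 h1
    have : SS (N+1) x = 1 := by
      rw [SS, Finset.sum_range_succ', Ik_0 x h0, Finset.sum_eq_zero]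
      · simp [cc]
      · intro k _
        rw [Ik_zero', mul_zero]
        push_cast
        have : (0:ℝ) ≤ k := by positivity
        linarith
    simp only [this, hr1 x ⟨h0, h1.le⟩, sub_self]
  · obtain ⟨M, hM⟩ := SS_bdd (N+1) ((N+1 : ℕ) : ℝ)
    obtain ⟨M', hM'⟩ := (isCompact_Icc (a := (0:ℝ)) (b := ((N+1 : ℕ) : ℝ))).exists_bound_of_continuousOn hrc.continuousOn
    refine ⟨M' + M, fun x h0 h1 => (abs_sub _ _).trans (add_le_add (hM' x ⟨h0, h1⟩) (hM x h1))⟩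
  · intro x h1 h2
    rw [intervalIntegral.integral_sub (hrc.intervalIntegrable _ _) (SS_ii _ _ _), intervalIntegral.integral_sub (hrc.intervalIntegrable _ _) (SS_ii _ _ _), mul_sub, rho_rec r hrc hr1 hrd x h1, SS_rec N x h1 (by exact_mod_cast h2)]
    ring
end

section
/- Let $C_k = \frac{1}{k!}\frac{1}{2\pi i}\int_{1-i\infty}^{1+i\infty} e^s\Big(\frac{(\log s+\gamma)^k}{s^2} - \frac{k(\log s+\gamma)^{k-1}}{s^2}\Big)\,ds$ for integers $k \ge 0$. Then there is a constant $C > 0$ such that $|C_k| \le C(k+1)$ for all $k \ge 0$; in particular the power series $\sum_{k=0}^{\infty} C_k z^k$ converges absolutely for every complex $z$ with $|z| < 1$. -/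
open MeasureTheory Filter Topology

lemma aux_J (c : ℝ) (hc : 0 < c) (k : ℕ) :
    IntegrableOn (fun t : ℝ => (Real.log (1 + t) + c) ^ k / (1 + t) ^ 2) (Set.Ioi 0) ∧
    ∫ t in Set.Ioi (0:ℝ), (Real.log (1 + t) + c) ^ k / (1 + t) ^ 2 ≤ Real.exp c * k.factorial := by
  set f : ℝ → ℝ := fun t => Real.log (1 + t) + c with hf
  set g : ℝ → ℝ := fun u => Real.exp c * (Real.exp (-u) * u ^ k) with hg
  have hgi : IntegrableOn g (Set.Ioi 0) := by
    have h := Real.GammaIntegral_convergent (s := (k:ℝ) + 1) (by positivity)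
    simp only [add_sub_cancel_right, Real.rpow_natCast] at h
    exact h.const_mul _
  have hgv : ∫ u in Set.Ioi (0:ℝ), g u = Real.exp c * k.factorial := by
    have h := Real.Gamma_eq_integral (s := (k:ℝ) + 1) (by positivity)
    simp only [add_sub_cancel_right, Real.rpow_natCast, Real.Gamma_nat_eq_factorial] at h
    rw [h, ← integral_const_mul]
  have hder : ∀ x ∈ Set.Ioi (0:ℝ), HasDerivWithinAt f (1 / (1 + x)) (Set.Ioi 0) x := by
    intro x hx
    have hx' : (0:ℝ) < x := hx
    have h1 : HasDerivAt (fun t : ℝ => 1 + t) 1 x := by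
      simpa using (hasDerivAt_id x).const_add 1
    exact ((h1.log (by positivity)).add_const c).hasDerivWithinAt
  have hinj : Set.InjOn f (Set.Ioi 0) := by
    intro x hx y hy h
    have hx' : (0:ℝ) < x := hx
    have hy' : (0:ℝ) < y := hy
    have h2 : Real.log (1 + x) = Real.log (1 + y) := by
      simpa [hf] using h
    have := Real.log_injOn_pos (by simp; linarith : (1 + x) ∈ Set.Ioi (0:ℝ))
      (by simp; linarith : (1 + y) ∈ Set.Ioi (0:ℝ)) h2
    linarith
  have hsub : f '' Set.Ioi 0 ⊆ Set.Ioi 0 := by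
    rintro _ ⟨x, hx, rfl⟩
    have hx' : (0:ℝ) < x := hx
    have := Real.log_nonneg (by linarith : (1:ℝ) ≤ 1 + x)
    simp only [hf, Set.mem_Ioi]; linarith
  have heq : ∀ x ∈ Set.Ioi (0:ℝ), |1 / (1 + x)| • g (f x) =
      (Real.log (1 + x) + c) ^ k / (1 + x) ^ 2 := by
    intro x hx
    have hx' : (0:ℝ) < x := hx
    have h1 : 0 < 1 + x := by linarith
    rw [abs_of_pos (by positivity)]
    simp only [hf, hg, smul_eq_mul]
    rw [neg_add, Real.exp_add, Real.exp_neg, Real.exp_neg, Real.exp_log h1]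
    have := Real.exp_pos c
    field_simp
  have hI := integrableOn_image_iff_integrableOn_abs_deriv_smul measurableSet_Ioi hder hinj g
  have hV := integral_image_eq_integral_abs_deriv_smul measurableSet_Ioi hder hinj g
  constructor
  · exact (integrableOn_congr_fun heq measurableSet_Ioi).1 (hI.1 (hgi.mono_set hsub))
  · rw [← setIntegral_congr_fun measurableSet_Ioi heq, ← hV, ← hgv]
    apply setIntegral_mono_set hgi
    · refine (ae_restrict_iff' measurableSet_Ioi).2 (Eventually.of_forall fun u hu => ?_)
      have : (0:ℝ) < u := hu
      simp only [hg, Pi.zero_apply]; positivity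
    · exact hsub.eventuallyLE

lemma aux_K (c : ℝ) (hc : 0 < c) (k : ℕ) :
    Integrable (fun t : ℝ => (Real.log (1 + |t|) + c) ^ k / (1 + |t|) ^ 2) ∧
    ∫ t : ℝ, (Real.log (1 + |t|) + c) ^ k / (1 + |t|) ^ 2 ≤ 2 * (Real.exp c * k.factorial) := by
  obtain ⟨h1, h2⟩ := aux_J c hc k
  constructor
  · have h3 : IntegrableOn (fun t : ℝ => (Real.log (1 + |t|) + c) ^ k / (1 + |t|) ^ 2)
        (Set.Ioi 0) := by
      refine (integrableOn_congr_fun (fun x hx => ?_) measurableSet_Ioi).1 h1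
      have : (0:ℝ) < x := hx
      simp only [abs_of_pos this]
    rw [← integrableOn_univ, ← Set.Iic_union_Ioi (a := (0:ℝ))]
    refine IntegrableOn.union ?_ h3
    rw [integrableOn_Iic_iff_integrableOn_Iio]
    have h4 := h3.comp_neg
    simpa using h4
  · rw [integral_comp_abs (f := fun t : ℝ => (Real.log (1 + t) + c) ^ k / (1 + t) ^ 2)]
    linarith

lemma aux_log (t : ℝ) : ‖Complex.log (1 + t * Complex.I) +
    (Real.eulerMascheroniConstant : ℂ)‖ ≤
      Real.log (1 + |t|) + (Real.eulerMascheroniConstant + Real.pi) := by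
  have hγ : 0 < Real.eulerMascheroniConstant := by
    have := Real.one_half_lt_eulerMascheroniConstant; linarith
  have h1 : ‖(1 + t * Complex.I : ℂ)‖ ≤ 1 + |t| := by
    refine (norm_add_le _ _).trans ?_
    simp
  have h0 : 1 ≤ ‖(1 + t * Complex.I : ℂ)‖ := by
    have := Complex.abs_re_le_norm (1 + t * Complex.I : ℂ)
    simpa using this
  have h2 : ‖Complex.log (1 + t * Complex.I)‖ ≤ Real.log (1 + |t|) + Real.pi := by
    refine (Complex.norm_le_abs_re_add_abs_im _).trans ?_
    rw [Complex.log_re, Complex.log_im, abs_of_nonneg (Real.log_nonneg h0)]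
    gcongr
    exact Complex.abs_arg_le_pi _
  refine (norm_add_le _ _).trans ?_
  rw [Complex.norm_real, Real.norm_of_nonneg hγ.le]
  linarith

lemma aux_sq (t : ℝ) : (1 + |t|) ^ 2 / 2 ≤ ‖(1 + t * Complex.I : ℂ) ^ 2‖ := by
  rw [norm_pow, ← Complex.normSq_eq_norm_sq]
  have : Complex.normSq (1 + t * Complex.I) = 1 + t ^ 2 := by
    simp [Complex.normSq_apply]; ring
  rw [this]
  nlinarith [sq_nonneg (1 - |t|), sq_abs t]

lemma aux_term (k : ℕ) (t : ℝ) : ‖(Complex.log (1 + t * Complex.I) +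
    (Real.eulerMascheroniConstant : ℂ)) ^ k / (1 + t * Complex.I) ^ 2‖ ≤
      2 * ((Real.log (1 + |t|) + (Real.eulerMascheroniConstant + Real.pi)) ^ k
        / (1 + |t|) ^ 2) := by
  have h : 0 < (1 + |t|) ^ 2 := by positivity
  rw [norm_div, norm_pow]
  calc _ ≤ (Real.log (1 + |t|) + (Real.eulerMascheroniConstant + Real.pi)) ^ k
        / ((1 + |t|) ^ 2 / 2) :=
        div_le_div₀ (by have := (norm_nonneg _).trans (aux_log t); positivity)
          (pow_le_pow_left₀ (norm_nonneg _) (aux_log t) k) (by positivity) (aux_sq t)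
    _ = _ := by field_simp

/-- with `C_k = (1/k!)(1/(2πi)) ∫_{1-i∞}^{1+i∞} e^s ((log s+γ)^k/s² -
k(log s+γ)^{k-1}/s²) ds` (absolutely convergent, line `Re s = 1`), there is a constant
`C > 0` with `|C_k| ≤ C (k+1)` for all `k`; in particular `∑ C_k z^k` converges
absolutely for `|z| < 1`. -/
theorem Ck_bound (C : ℕ → ℂ)
    (hC : ∀ k : ℕ, C k =
      (1 / (Nat.factorial k : ℂ)) * (1 / (2 * Real.pi * Complex.I)) *
        ∫ t : ℝ, Complex.exp (1 + t * Complex.I) *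
          ((Complex.log (1 + t * Complex.I) +
              (Real.eulerMascheroniConstant : ℂ)) ^ k / (1 + t * Complex.I) ^ 2 -
            (k : ℂ) * (Complex.log (1 + t * Complex.I) +
              (Real.eulerMascheroniConstant : ℂ)) ^ (k - 1) / (1 + t * Complex.I) ^ 2) *
          Complex.I) :
    (∃ B : ℝ, 0 < B ∧ ∀ k : ℕ, ‖C k‖ ≤ B * (k + 1)) ∧
      ∀ z : ℂ, ‖z‖ < 1 → Summable fun k : ℕ => ‖C k * z ^ k‖ := by
  have main : ∃ B : ℝ, 0 < B ∧ ∀ k : ℕ, ‖C k‖ ≤ B * (k + 1) := by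
    set c := Real.eulerMascheroniConstant + Real.pi with hcdef
    have hc : 0 < c := by
      have := Real.one_half_lt_eulerMascheroniConstant
      have := Real.pi_pos
      linarith
    refine ⟨8 * Real.exp 1 * Real.exp c, by positivity, fun k => ?_⟩
    obtain ⟨i1, b1⟩ := aux_K c hc k
    obtain ⟨i2, b2⟩ := aux_K c hc (k - 1)
    set G : ℕ → ℝ → ℝ := fun k t => (Real.log (1 + |t|) + c) ^ k / (1 + |t|) ^ 2 with hG
    have hint : Integrable (fun t => Real.exp 1 * (2 * G k t + k * (2 * G (k - 1) t))) :=
      ((i1.const_mul 2).add ((i2.const_mul 2).const_mul (k:ℝ))).const_mul _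
    have hb := norm_integral_le_of_norm_le hint (f := fun t : ℝ => Complex.exp (1 + t * Complex.I) *
          ((Complex.log (1 + t * Complex.I) +
              (Real.eulerMascheroniConstant : ℂ)) ^ k / (1 + t * Complex.I) ^ 2 -
            (k : ℂ) * (Complex.log (1 + t * Complex.I) +
              (Real.eulerMascheroniConstant : ℂ)) ^ (k - 1) / (1 + t * Complex.I) ^ 2) *
          Complex.I) (Eventually.of_forall fun t => by
        rw [norm_mul, norm_mul, Complex.norm_I, mul_one, Complex.norm_exp]
        have : (1 + t * Complex.I : ℂ).re = 1 := by simp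
        rw [this]
        gcongr
        refine (norm_sub_le _ _).trans (add_le_add (aux_term k t) ?_)
        rw [mul_div_assoc, norm_mul, Complex.norm_natCast]
        gcongr
        exact aux_term (k - 1) t)
    have hval : ∫ t, Real.exp 1 * (2 * G k t + k * (2 * G (k - 1) t)) =
        Real.exp 1 * (2 * (∫ t, G k t) + k * (2 * ∫ t, G (k - 1) t)) := by
      rw [integral_const_mul, integral_add (i1.const_mul 2) ((i2.const_mul 2).const_mul (k:ℝ)),
        integral_const_mul, integral_const_mul, integral_const_mul]
    rw [hval] at hb
    have hfac : (k:ℝ) * (k - 1).factorial ≤ k.factorial := by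
      rcases k with _ | n
      · simp
      · simp [Nat.factorial_succ]
    have hkf : (0:ℝ) < k.factorial := by positivity
    have hb2 : Real.exp 1 * (2 * (∫ t, G k t) + k * (2 * ∫ t, G (k - 1) t)) ≤
        k.factorial * (8 * Real.exp 1 * Real.exp c) := by
      calc _ ≤ Real.exp 1 * (2 * (2 * (Real.exp c * k.factorial)) +
            k * (2 * (2 * (Real.exp c * (k - 1).factorial)))) := by gcongr
        _ = Real.exp 1 * (4 * Real.exp c * k.factorial +
            4 * Real.exp c * (k * (k - 1).factorial)) := by ring
        _ ≤ Real.exp 1 * (4 * Real.exp c * k.factorial +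
            4 * Real.exp c * k.factorial) := by gcongr
        _ = _ := by ring
    have hpi : ‖(1 / (2 * Real.pi * Complex.I) : ℂ)‖ ≤ 1 := by
      have := Real.pi_gt_three
      rw [norm_div, norm_mul, norm_mul, Complex.norm_I, Complex.norm_real,
        Real.norm_of_nonneg Real.pi_pos.le]
      simp only [norm_one, Complex.norm_ofNat, mul_one]
      rw [div_le_one (by positivity)]
      linarith
    rw [hC k, norm_mul, norm_mul, norm_div, norm_one, Complex.norm_natCast]
    calc _ ≤ 1 / (k.factorial : ℝ) * 1 * (k.factorial * (8 * Real.exp 1 * Real.exp c)) := by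
          gcongr
          exact hb.trans hb2
      _ = 8 * Real.exp 1 * Real.exp c * 1 := by field_simp
      _ ≤ _ := by
          gcongr
          linarith [(Nat.cast_nonneg k : (0:ℝ) ≤ k)]
  refine ⟨main, fun z hz => ?_⟩
  obtain ⟨B, hB, h⟩ := main
  have hz' : ‖‖z‖‖ < 1 := by simpa using hz
  have s1 := summable_pow_mul_geometric_of_norm_lt_one 1 hz'
  have s0 := summable_pow_mul_geometric_of_norm_lt_one 0 hz'
  refine Summable.of_nonneg_of_le (fun _ => norm_nonneg _) (fun k => ?_)
    ((s1.add s0).mul_left B)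
  rw [norm_mul, norm_pow]
  calc _ ≤ B * (k + 1) * ‖z‖ ^ k := by
        gcongr
        exact h k
    _ = _ := by ring
end

section
/- For any complex number $z$ with $\mathrm{Re}(z) < 2$ and any $c > 0$, $\frac{1}{2\pi i}\int_{c-i\infty}^{c+i\infty} e^s\,\frac{s^z}{s^2}\,ds = \frac{1}{\Gamma(2-z)}$, where $s^z = e^{z\log s}$ with the principal branch of the logarithm on $\mathrm{Re}(s) > 0$. -/
open MeasureTheory Filter Topology

lemma hv_norm_int (a r : ℂ) (x : ℝ) (hx : 0 < x) :
    ‖(x : ℂ) ^ (a - 1) * Complex.exp (-(r * x))‖ = x ^ (a.re - 1) * Real.exp (-r.re * x) := by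
  rw [norm_mul, Complex.norm_cpow_eq_rpow_re_of_pos hx, Complex.norm_exp]
  simp

lemma hv_meas (a r : ℂ) : ContinuousOn (fun x : ℝ => (x : ℂ) ^ (a - 1) * Complex.exp (-(r * x)))
    (Set.Ioi 0) := by
  intro x hx
  have hx : 0 < x := hx
  have : ((x:ℂ)) ∈ Complex.slitPlane := by simp [hx]
  have h2 : ContinuousAt (fun x : ℝ => (x : ℂ) ^ (a - 1)) x :=
    ContinuousAt.cpow (f := fun x : ℝ => (x : ℂ)) (by fun_prop) continuousAt_const this
  exact (h2.mul (by fun_prop)).continuousWithinAt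

lemma hv_real_int (p b : ℝ) (hp : 0 < p) (hb : 0 < b) :
    IntegrableOn (fun x : ℝ => x ^ (p - 1) * Real.exp (-b * x)) (Set.Ioi 0) := by
  have := integrableOn_rpow_mul_exp_neg_mul_rpow (p := 1) (s := p - 1) (b := b)
    (by linarith) one_pos hb
  simpa using this

lemma hv_int (a r : ℂ) (ha : 0 < a.re) (hr : 0 < r.re) :
    IntegrableOn (fun x : ℝ => (x : ℂ) ^ (a - 1) * Complex.exp (-(r * x))) (Set.Ioi 0) := by
  refine Integrable.mono' (hv_real_int a.re r.re ha hr)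
    ((hv_meas a r).aestronglyMeasurable measurableSet_Ioi) ?_
  refine (ae_restrict_iff' measurableSet_Ioi).mpr (ae_of_all _ fun x hx => ?_)
  exact (hv_norm_int a r x hx).le

lemma hv_diff (a r : ℂ) (ha : 0 < a.re) (hr : 0 < r.re) :
    DifferentiableAt ℂ (fun r : ℂ => ∫ x in Set.Ioi (0:ℝ),
      (x : ℂ) ^ (a - 1) * Complex.exp (-(r * x))) r := by
  have key := hasDerivAt_integral_of_dominated_loc_of_deriv_le (𝕜 := ℂ)
    (μ := volume.restrict (Set.Ioi (0:ℝ)))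
    (F := fun (r : ℂ) (x : ℝ) => (x : ℂ) ^ (a - 1) * Complex.exp (-(r * x)))
    (F' := fun (r : ℂ) (x : ℝ) => (x : ℂ) ^ (a - 1) * (Complex.exp (-(r * x)) * (-x)))
    (x₀ := r) (s := Metric.ball r (r.re / 2))
    (bound := fun x => x ^ ((a.re + 1) - 1) * Real.exp (-(r.re/2) * x))
    (Metric.ball_mem_nhds _ (by positivity))
    (Eventually.of_forall fun r => (hv_meas a r).aestronglyMeasurable measurableSet_Ioi)
    (hv_int a r ha hr) ?_ ?_ (hv_real_int (a.re + 1) (r.re/2) (by linarith) (by linarith)) ?_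
  · exact key.2.differentiableAt
  · refine ContinuousOn.aestronglyMeasurable ?_ measurableSet_Ioi
    have := (hv_meas a r).mul (g := fun x : ℝ => (-x : ℂ)) (by fun_prop)
    refine this.congr fun x _ => ?_
    simp [mul_assoc]
  · refine (ae_restrict_iff' measurableSet_Ioi).mpr (ae_of_all _ fun x hx s hs => ?_)
    have hx : 0 < x := hx
    have h1 := hv_norm_int a s x hx
    rw [← mul_assoc, norm_mul, h1, norm_neg, Complex.norm_of_nonneg hx.le]
    have h2 : x ^ ((a.re + 1) - 1) = x ^ (a.re - 1) * x := by
      rw [show (a.re + 1) - 1 = (a.re - 1) + 1 by ring, Real.rpow_add hx, Real.rpow_one]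
    rw [h2, mul_right_comm]
    have h3 : r.re / 2 ≤ s.re := by
      have h4 := Complex.abs_re_le_norm (s - r)
      have h5 : ‖s - r‖ < r.re / 2 := by simpa [dist_eq_norm] using hs
      have := (abs_lt.mp (h4.trans_lt h5)).1
      simp at this
      linarith
    gcongr
  · refine ae_of_all _ fun x s _ => ?_
    have h : HasDerivAt (fun r : ℂ => -(r * x)) (-x) s := by
      have h0 := ((hasDerivAt_id s).mul_const (x:ℂ)).neg
      rw [one_mul] at h0
      exact h0
    exact h.cexp.const_mul _

lemma hv_gamma (a r : ℂ) (ha : 0 < a.re) (hr : 0 < r.re) :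
    ∫ x in Set.Ioi (0:ℝ), (x : ℂ) ^ (a - 1) * Complex.exp (-(r * x)) = r ^ (-a) * Complex.Gamma a := by
  have ho : IsOpen {r : ℂ | 0 < r.re} := isOpen_lt continuous_const Complex.continuous_re
  have hA : AnalyticOnNhd ℂ (fun r : ℂ => ∫ x in Set.Ioi (0:ℝ),
      (x : ℂ) ^ (a - 1) * Complex.exp (-(r * x))) {r : ℂ | 0 < r.re} :=
    DifferentiableOn.analyticOnNhd (fun s hs => (hv_diff a s ha hs).differentiableWithinAt) ho
  have hB : AnalyticOnNhd ℂ (fun r : ℂ => r ^ (-a) * Complex.Gamma a) {r : ℂ | 0 < r.re} := by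
    refine DifferentiableOn.analyticOnNhd (fun s hs => ?_) ho
    have : s ∈ Complex.slitPlane := Or.inl hs
    exact ((differentiableAt_id.cpow_const this).mul_const _).differentiableWithinAt
  have hpre : IsPreconnected {r : ℂ | 0 < r.re} := (convex_halfSpace_re_gt 0).isPreconnected
  refine hA.eqOn_of_preconnected_of_frequently_eq hB hpre (z₀ := 1) (by simp) ?_ hr
  have ht : Tendsto (fun x : ℝ => (x:ℂ)) (𝓝[≠] 1) (𝓝[≠] 1) := by
    refine tendsto_nhdsWithin_iff.mpr ⟨?_, ?_⟩
    · exact (Complex.continuous_ofReal.tendsto' 1 1 (by simp)).mono_left nhdsWithin_le_nhds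
    · filter_upwards [self_mem_nhdsWithin] with x hx
      simpa using hx
  refine ht.frequently (Eventually.frequently ?_)
  filter_upwards [nhdsWithin_le_nhds (lt_mem_nhds (one_pos : (0:ℝ) < 1))] with x hx
  rw [Complex.integral_cpow_mul_exp_neg_mul_Ioi ha hx, one_div, Complex.inv_cpow, Complex.cpow_neg]
  rw [Complex.arg_ofReal_of_nonneg hx.le]
  exact Real.pi_pos.ne

lemma hv_mem (c t : ℝ) (hc : 0 < c) : (c : ℂ) + t * Complex.I ∈ Complex.slitPlane := by
  left; simpa using hc

lemma hv_cont (w : ℂ) (c : ℝ) (hc : 0 < c) :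
    Continuous (fun t : ℝ => ((c : ℂ) + t * Complex.I) ^ w) := by
  refine continuous_iff_continuousAt.mpr fun t => ?_
  exact ContinuousAt.cpow (f := fun t : ℝ => (c : ℂ) + t * Complex.I) (by fun_prop) continuousAt_const (hv_mem c t hc)

lemma hv_bound (w : ℂ) (c t : ℝ) (hc : 0 < c) :
    ‖((c : ℂ) + t * Complex.I) ^ w‖ ≤ ‖(c : ℂ) + t * Complex.I‖ ^ w.re * Real.exp (Real.pi * |w.im|) := by
  rw [Complex.norm_cpow_of_ne_zero (Complex.slitPlane_ne_zero (hv_mem c t hc)), div_eq_mul_inv,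
    ← Real.exp_neg]
  gcongr
  have := Complex.abs_arg_le_pi ((c : ℂ) + t * Complex.I)
  calc _ ≤ |-(Complex.arg ((c : ℂ) + t * Complex.I) * w.im)| := le_abs_self _
    _ = |Complex.arg ((c : ℂ) + t * Complex.I)| * |w.im| := by rw [abs_neg, abs_mul]
    _ ≤ _ := by gcongr

lemma hv_vert_int (a : ℂ) (ha : 1 < a.re) (c : ℝ) (hc : 0 < c) :
    Integrable (fun t : ℝ => ((c : ℂ) + t * Complex.I) ^ (-a)) := by
  have h1 := (integrable_rpow_neg_one_add_norm_sq (E := ℝ) (μ := volume) (r := a.re)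
    (by simpa using ha))
  have h2 := (h1.comp_mul_left' (inv_ne_zero hc.ne')).const_mul (c ^ (-a.re) * Real.exp (Real.pi * |(-a).im|))
  refine h2.mono' (hv_cont _ c hc).aestronglyMeasurable (ae_of_all _ fun t => ?_)
  refine (hv_bound (-a) c t hc).trans (le_of_eq ?_)
  rw [mul_right_comm]
  congr 1
  have : ‖(c : ℂ) + t * Complex.I‖ = c * (1 + ‖c⁻¹ * t‖ ^ 2) ^ (1/2 : ℝ) := by
    rw [Complex.norm_add_mul_I, ← Real.sqrt_eq_rpow, Real.norm_eq_abs, sq_abs]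
    rw [show c ^ 2 + t ^ 2 = c ^ 2 * (1 + (c⁻¹ * t)^2) by field_simp, Real.sqrt_mul (by positivity),
      Real.sqrt_sq hc.le]
  rw [this, Real.mul_rpow hc.le (by positivity), ← Real.rpow_mul (by positivity)]
  simp only [Complex.neg_re]
  ring_nf

lemma hv_main (a : ℂ) (ha : 1 < a.re) (c : ℝ) (hc : 0 < c) :
    ∫ t : ℝ, Complex.exp ((c : ℂ) + t * Complex.I) * ((c : ℂ) + t * Complex.I) ^ (-a)
      = 2 * Real.pi / Complex.Gamma a := by
  set g : ℝ → ℂ := (Set.Ioi (0:ℝ)).indicator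
    (fun x : ℝ => (x : ℂ) ^ (a - 1) * Complex.exp (-((c:ℂ) * x))) with hg
  have hgi : Integrable g :=
    (integrable_indicator_iff measurableSet_Ioi).mpr (hv_int a c (by linarith) (by simpa using hc))
  have hF : FourierTransform.fourier g = fun ξ : ℝ =>
      ((c : ℂ) + ((2 * Real.pi * ξ : ℝ) : ℂ) * Complex.I) ^ (-a) * Complex.Gamma a := by
    ext ξ
    rw [Real.fourier_real_eq_integral_exp_smul, ← hv_gamma a _ (by linarith) (by simpa using hc),
      ← integral_indicator measurableSet_Ioi]
    congr 1
    ext x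
    by_cases hx : x ∈ Set.Ioi (0:ℝ)
    · simp only [hg, Set.indicator_of_mem hx, smul_eq_mul]
      rw [mul_left_comm, ← Complex.exp_add]
      congr 2
      push_cast
      ring
    · simp [hg, Set.indicator_of_notMem hx]
  have h2pi : (2 * Real.pi) ≠ 0 := by positivity
  have hFi : Integrable (FourierTransform.fourier g) := by
    rw [hF]
    exact ((hv_vert_int a ha c hc).comp_mul_left' h2pi).mul_const _
  have hcont : ContinuousAt g 1 := by
    have h := (hv_meas a c).continuousAt (lt_mem_nhds (one_pos : (0:ℝ) < 1))
    refine h.congr ?_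
    filter_upwards [lt_mem_nhds (one_pos : (0:ℝ) < 1)] with x hx
    rw [hg, Set.indicator_of_mem (show x ∈ Set.Ioi 0 from hx)]
  have hinv := hgi.fourierInv_fourier_eq hFi hcont
  rw [Real.fourierInv_eq', hF] at hinv
  have hg1 : g 1 = Complex.exp (-c) := by
    rw [hg, Set.indicator_of_mem (by simp)]; simp
  rw [hg1] at hinv
  have hG : Complex.Gamma a ≠ 0 := Complex.Gamma_ne_zero_of_re_pos (by linarith)
  have hsub := Measure.integral_comp_mul_left (fun t : ℝ => Complex.exp ((c : ℂ) + t * Complex.I) * ((c : ℂ) + t * Complex.I) ^ (-a)) (2 * Real.pi)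
  have heq : ∫ x : ℝ, Complex.exp ((c : ℂ) + ((2 * Real.pi * x : ℝ):ℂ) * Complex.I) * ((c : ℂ) + ((2 * Real.pi * x : ℝ):ℂ) * Complex.I) ^ (-a) = 1 / Complex.Gamma a := by
    have : ∀ x : ℝ, Complex.exp ((c : ℂ) + ((2 * Real.pi * x : ℝ):ℂ) * Complex.I) * ((c : ℂ) + ((2 * Real.pi * x : ℝ):ℂ) * Complex.I) ^ (-a) = (Complex.exp c / Complex.Gamma a) * (Complex.exp (((2 * Real.pi * inner ℝ x 1 : ℝ) : ℂ) * Complex.I) • (((c : ℂ) + ((2 * Real.pi * x : ℝ) : ℂ) * Complex.I) ^ (-a) * Complex.Gamma a)) := by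
      intro x
      rw [Complex.exp_add, smul_eq_mul]
      have : inner ℝ x 1 = x := by simp
      rw [this]
      field_simp
    simp_rw [this]
    rw [integral_const_mul, hinv, div_mul_eq_mul_div, ← Complex.exp_add]
    simp
  rw [heq, abs_of_pos (by positivity), Complex.real_smul] at hsub
  have hpiC : (Real.pi : ℂ) ≠ 0 := by exact_mod_cast Real.pi_ne_zero
  push_cast at hsub
  rw [eq_comm, inv_mul_eq_iff_eq_mul₀ (by simp [hpiC])] at hsub
  rw [hsub]
  ring

lemma hv_decay (w : ℂ) (hw : 0 < w.re) (c : ℝ) (hc : 0 < c) (u : ℝ → ℝ)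
    (hu : Tendsto (fun T => |u T|) atTop atTop) :
    Tendsto (fun T : ℝ => Complex.exp ((c : ℂ) + u T * Complex.I) * ((c : ℂ) + u T * Complex.I) ^ (-w))
      atTop (𝓝 0) := by
  have hn : Tendsto (fun T => ‖(c : ℂ) + u T * Complex.I‖) atTop atTop := by
    refine tendsto_atTop_mono (fun T => ?_) hu
    simpa using Complex.abs_im_le_norm ((c : ℂ) + u T * Complex.I)
  have h0 := ((tendsto_rpow_neg_atTop hw).comp hn).const_mul
    (Real.exp c * Real.exp (Real.pi * |(-w).im|))
  rw [mul_zero] at h0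
  refine squeeze_zero_norm (fun T => ?_) h0
  rw [norm_mul, Complex.norm_exp]
  have := hv_bound (-w) c (u T) hc
  simp only [Complex.neg_re] at this
  calc _ ≤ _ := mul_le_mul_of_nonneg_left this (Real.exp_pos _).le
    _ = _ := by simp; ring

lemma hv_parts (w : ℂ) (c T : ℝ) (hc : 0 < c) :
    (∫ t in (-T)..T, Complex.exp ((c : ℂ) + t * Complex.I) * ((c : ℂ) + t * Complex.I) ^ (-w) * Complex.I)
     = (Complex.exp ((c : ℂ) + T * Complex.I) * ((c : ℂ) + T * Complex.I) ^ (-w)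
        - Complex.exp ((c : ℂ) + (-T : ℝ) * Complex.I) * ((c : ℂ) + (-T : ℝ) * Complex.I) ^ (-w))
       + w * Complex.I * ∫ t in (-T)..T, Complex.exp ((c : ℂ) + t * Complex.I) * ((c : ℂ) + t * Complex.I) ^ (-(w + 1)) := by
  have c1 := hv_cont (-w) c hc
  have c2 := hv_cont (-(w+1)) c hc
  have i1 : IntervalIntegrable (fun t : ℝ => Complex.exp ((c : ℂ) + t * Complex.I) * ((c : ℂ) + t * Complex.I) ^ (-w) * Complex.I) volume (-T) T :=
    Continuous.intervalIntegrable (by fun_prop) _ _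
  have i2 : IntervalIntegrable (fun t : ℝ => w * Complex.I * (Complex.exp ((c : ℂ) + t * Complex.I) * ((c : ℂ) + t * Complex.I) ^ (-(w + 1)))) volume (-T) T :=
    Continuous.intervalIntegrable (by fun_prop) _ _
  have := intervalIntegral.integral_eq_sub_of_hasDerivAt (a := -T) (b := T)
    (f := fun t : ℝ => Complex.exp ((c : ℂ) + t * Complex.I) * ((c : ℂ) + t * Complex.I) ^ (-w))
    (fun t _ => ?_) (i1.sub i2)
  · rw [intervalIntegral.integral_sub i1 i2, intervalIntegral.integral_const_mul] at this
    rw [← this]; ring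
  · have hl : HasDerivAt (fun t : ℝ => (c : ℂ) + t * Complex.I) Complex.I t := by
      simpa using ((Complex.ofRealCLM.hasDerivAt (x := t)).mul_const Complex.I).const_add (c:ℂ)
    have hp : HasDerivAt (fun s : ℂ => s ^ (-w)) (-w * ((c : ℂ) + t * Complex.I) ^ (-w - 1)) ((c : ℂ) + t * Complex.I) := by
      simpa using (hasDerivAt_id ((c : ℂ) + t * Complex.I)).cpow_const (c := -w) (hv_mem c t hc)
    refine (hl.cexp.mul (hp.comp t hl)).congr_deriv ?_
    rw [show -(w+1) = -w - 1 by ring]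
    simp only [Function.comp]
    ring

theorem hankel_vertical_line (z : ℂ) (hz : z.re < 2) (c : ℝ) (hc : 0 < c) :
    Tendsto (fun T : ℝ =>
        (1 / (2 * Real.pi * Complex.I)) *
          ∫ t in (-T)..T,
            Complex.exp ((c : ℂ) + t * Complex.I) *
              (((c : ℂ) + t * Complex.I) ^ z / ((c : ℂ) + t * Complex.I) ^ 2) * Complex.I)
      atTop (𝓝 (1 / Complex.Gamma (2 - z))) := by
  obtain ⟨w, rfl⟩ : ∃ w, z = 2 - w := ⟨2 - z, by ring⟩
  have hw : 0 < w.re := by simpa using hz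
  have hw1 : 1 < (w + 1).re := by simpa using hw
  have hw0 : w ≠ 0 := by rintro rfl; simp at hw
  have e : ∀ t : ℝ, ((c : ℂ) + t * Complex.I) ^ (2 - w) / ((c : ℂ) + t * Complex.I) ^ 2
      = ((c : ℂ) + t * Complex.I) ^ (-w) := by
    intro t
    have h0 := Complex.slitPlane_ne_zero (hv_mem c t hc)
    rw [show (2 - w) = -w + (2:ℕ) by push_cast; ring, Complex.cpow_add _ _ h0, Complex.cpow_natCast]
    field_simp
  simp_rw [e, hv_parts w c _ hc]
  have hint : Integrable (fun t : ℝ => Complex.exp ((c : ℂ) + t * Complex.I) * ((c : ℂ) + t * Complex.I) ^ (-(w+1))) := by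
    refine (hv_vert_int (w+1) hw1 c hc).bdd_mul (c := Real.exp c) ?_ ?_
    · exact (by fun_prop : Continuous fun t : ℝ => Complex.exp ((c : ℂ) + t * Complex.I)).aestronglyMeasurable
    · exact ae_of_all _ fun t => by rw [Complex.norm_exp]; simp
  have hlim := intervalIntegral_tendsto_integral hint tendsto_neg_atTop_atBot tendsto_id
  rw [hv_main (w+1) hw1 c hc] at hlim
  have d1 := hv_decay w hw c hc (fun T => T) tendsto_abs_atTop_atTop
  have d2 := hv_decay w hw c hc (fun T => -T) (by simpa using tendsto_abs_atTop_atTop)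
  have := (((d1.sub d2).add (hlim.const_mul (w * Complex.I))).const_mul (1 / (2 * Real.pi * Complex.I)))
  refine this.congr' (Eventually.of_forall fun _ => rfl) |>.trans (le_of_eq ?_)
  congr 1
  rw [Complex.Gamma_add_one w hw0]
  have hG : Complex.Gamma w ≠ 0 := Complex.Gamma_ne_zero_of_re_pos hw
  have hpiC : (Real.pi : ℂ) ≠ 0 := by exact_mod_cast Real.pi_ne_zero
  rw [show (2 - (2 - w)) = w by ring]
  field_simp
  simp
end

section
/- For integers $k \ge 0$, real $u \ge 1$, and any $c > 0$, the iterated integral $I_k(u) = \int_{t_1,\ldots,t_k \ge 1,\ t_1+\cdots+t_k \le u} \frac{dt_1}{t_1}\cdots\frac{dt_k}{t_k}$ admits the contour-integral representation $I_k(u) = \frac{1}{2\pi i}\int_{c-i\infty}^{c+i\infty} \frac{e^s}{s}\Big(\int_{1/u}^{\infty} \frac{e^{-ts}}{t}\,dt\Big)^k ds$. -/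
open MeasureTheory Filter Topology

lemma aux_ne {c : ℝ} (hc : c ≠ 0) (t : ℝ) : (c : ℂ) + t * Complex.I ≠ 0 := by
  intro h
  have := congrArg Complex.re h
  simp at this
  exact hc this

lemma aux_cont {c : ℝ} (hc : c ≠ 0) (l : ℝ) :
    Continuous (fun t : ℝ => Complex.exp (l * t * Complex.I) / ((c : ℂ) + t * Complex.I)) := by
  refine Continuous.div (by fun_prop) (by fun_prop) (aux_ne hc)

lemma aux_cont2 {c : ℝ} (hc : c ≠ 0) (l : ℝ) :
    Continuous (fun t : ℝ => Complex.exp (l * t * Complex.I) / ((c : ℂ) + t * Complex.I) ^ 2) := by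
  refine Continuous.div (by fun_prop) (by fun_prop) (fun t => pow_ne_zero 2 (aux_ne hc t))

lemma aux_norm_exp (l t : ℝ) : ‖Complex.exp (l * t * Complex.I)‖ = 1 := by
  have := Complex.norm_exp_ofReal_mul_I (l * t)
  push_cast at this
  exact this

lemma aux_norm_ge (c t : ℝ) : |t| ≤ ‖(c : ℂ) + t * Complex.I‖ := by
  have := Complex.abs_im_le_norm ((c : ℂ) + t * Complex.I)
  simpa using this

lemma aux_norm_sq (c t : ℝ) : ‖(c : ℂ) + t * Complex.I‖ ^ 2 = c ^ 2 + t ^ 2 := by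
  rw [← Complex.normSq_eq_norm_sq, Complex.normSq_add_mul_I]

lemma aux_parts {c : ℝ} (hc : c ≠ 0) {l : ℝ} (hl : l ≠ 0) (a b : ℝ) :
    ∫ t in a..b, Complex.exp (l * t * Complex.I) / ((c : ℂ) + t * Complex.I) =
      (Complex.exp (l * b * Complex.I) / (Complex.I * l * ((c : ℂ) + b * Complex.I))
        - Complex.exp (l * a * Complex.I) / (Complex.I * l * ((c : ℂ) + a * Complex.I)))
      + (1 / l : ℂ) * ∫ t in a..b, Complex.exp (l * t * Complex.I) / ((c : ℂ) + t * Complex.I) ^ 2 := by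
  have hl' : (l : ℂ) ≠ 0 := by exact_mod_cast hl
  have key : ∀ t : ℝ, HasDerivAt
      (fun t : ℝ => Complex.exp (l * t * Complex.I) / (Complex.I * l * ((c : ℂ) + t * Complex.I)))
      (Complex.exp (l * t * Complex.I) / ((c : ℂ) + t * Complex.I)
        - (1 / l : ℂ) * (Complex.exp (l * t * Complex.I) / ((c : ℂ) + t * Complex.I) ^ 2)) t := by
    intro t
    have h0 : HasDerivAt (fun t : ℝ => (t : ℂ)) 1 t := Complex.ofRealCLM.hasDerivAt
    have h1 : HasDerivAt (fun t : ℝ => Complex.exp (l * t * Complex.I))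
        (Complex.exp (l * t * Complex.I) * (l * 1 * Complex.I)) t :=
      ((h0.const_mul (l : ℂ)).mul_const Complex.I).cexp
    have h2 : HasDerivAt (fun t : ℝ => Complex.I * l * ((c : ℂ) + t * Complex.I))
        (Complex.I * l * (1 * Complex.I)) t :=
      ((h0.mul_const Complex.I).const_add (c : ℂ)).const_mul (Complex.I * l)
    have hne := aux_ne hc t
    have hI := Complex.I_ne_zero
    refine (h1.div h2 (mul_ne_zero (mul_ne_zero hI hl') hne)).congr_deriv ?_
    field_simp
  have e := intervalIntegral.integral_eq_sub_of_hasDerivAt (a := a) (b := b) (fun t _ => key t)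
    (((aux_cont hc l).sub ((aux_cont2 hc l).const_mul _)).intervalIntegrable _ _)
  rw [intervalIntegral.integral_sub ((aux_cont hc l).intervalIntegrable _ _)
    (((aux_cont2 hc l).const_mul _).intervalIntegrable _ _),
    intervalIntegral.integral_const_mul] at e
  rw [← e]; ring

lemma aux_tail {c : ℝ} (hc : c ≠ 0) {l : ℝ} (hl : l ≠ 0) {a b : ℝ} (ha : 0 < a) (hab : a ≤ b) :
    ‖∫ t in a..b, Complex.exp (l * t * Complex.I) / ((c : ℂ) + t * Complex.I)‖ ≤ 2 / (|l| * a) := by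
  have hb : 0 < b := ha.trans_le hab
  have hl' : 0 < |l| := abs_pos.mpr hl
  have hE : ∀ t : ℝ, 0 < t →
      ‖Complex.exp (l * t * Complex.I) / (Complex.I * l * ((c : ℂ) + t * Complex.I))‖ ≤ 1 / (|l| * t) := by
    intro t ht
    rw [norm_div, aux_norm_exp, norm_mul, norm_mul, Complex.norm_I, Complex.norm_real, one_mul,
      Real.norm_eq_abs]
    have := aux_norm_ge c t
    rw [abs_of_pos ht] at this
    gcongr
  have hI : ‖∫ t in a..b, Complex.exp (l * t * Complex.I) / ((c : ℂ) + t * Complex.I) ^ 2‖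
      ≤ 1 / a - 1 / b := by
    have hint : ∫ t in a..b, 1 / t ^ 2 = 1 / a - 1 / b := by
      have h := intervalIntegral.integral_eq_sub_of_hasDerivAt (a := a) (b := b)
        (f := fun t : ℝ => - t⁻¹) (f' := fun t => 1 / t ^ 2) (fun t ht => by
          rw [Set.uIcc_of_le hab] at ht
          have : t ≠ 0 := (ha.trans_le ht.1).ne'
          refine (hasDerivAt_inv this).neg.congr_deriv ?_
          simp) (by
          apply ContinuousOn.intervalIntegrable
          rw [Set.uIcc_of_le hab]
          intro t ht
          have : t ≠ 0 := (ha.trans_le ht.1).ne'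
          apply ContinuousAt.continuousWithinAt
          fun_prop (disch := positivity))
      rw [h]; simp; ring
    rw [← hint]
    apply intervalIntegral.norm_integral_le_of_norm_le hab
    · refine Eventually.of_forall (fun t ht => ?_)
      have h0 : 0 < t := ha.trans ht.1
      rw [norm_div, aux_norm_exp, norm_pow]
      have := aux_norm_ge c t
      rw [abs_of_pos h0] at this
      gcongr
    · apply ContinuousOn.intervalIntegrable
      rw [Set.uIcc_of_le hab]
      intro t ht
      have : t ≠ 0 := (ha.trans_le ht.1).ne'
      apply ContinuousAt.continuousWithinAt
      fun_prop (disch := positivity)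
  rw [aux_parts hc hl]
  refine (norm_add_le _ _).trans ?_
  refine (add_le_add (norm_sub_le _ _) le_rfl).trans ?_
  rw [norm_mul]
  have h3 : ‖(1 / l : ℂ)‖ = 1 / |l| := by simp
  rw [h3]
  have := mul_le_mul_of_nonneg_left hI (show 0 ≤ 1 / |l| by positivity)
  have h4 := hE a ha
  have h5 := hE b hb
  have e1 : 2 / (|l| * a) = 1 / (|l| * b) + 1 / (|l| * a) + 1 / |l| * (1 / a - 1 / b) := by
    field_simp; ring
  linarith

lemma aux_inv_int {c : ℝ} (hc : c ≠ 0) : Integrable (fun t : ℝ => 1 / (c ^ 2 + t ^ 2)) := by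
  have h := (integrable_inv_one_add_sq.comp_mul_left' (inv_ne_zero hc)).const_mul (1 / c ^ 2)
  refine h.congr (Eventually.of_forall fun t => ?_)
  have : 0 < c ^ 2 := by positivity
  simp only
  field_simp

lemma aux_split (f : ℝ → ℂ) (hf : Continuous f) (a : ℝ) :
    ∫ t in (-a)..a, f t = ∫ t in (0:ℝ)..a, (f t + f (-t)) := by
  rw [intervalIntegral.integral_add (hf.intervalIntegrable _ _)
    ((show Continuous fun t => f (-t) by fun_prop).intervalIntegrable _ _), intervalIntegral.integral_comp_neg, neg_zero,
    add_comm, intervalIntegral.integral_add_adjacent_intervals (hf.intervalIntegrable _ _)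
    (hf.intervalIntegrable _ _)]

lemma aux_small {c : ℝ} (hc : 0 < c) (l : ℝ) {a : ℝ} (ha : 0 ≤ a) :
    ‖∫ t in (-a)..a, Complex.exp (l * t * Complex.I) / ((c : ℂ) + t * Complex.I)‖
      ≤ 2 * c * (∫ t : ℝ, 1 / (c ^ 2 + t ^ 2)) + 2 * |l| * a := by
  rw [aux_split _ (aux_cont hc.ne' l)]
  have hpt : ∀ t ∈ Set.Ioc 0 a, ‖Complex.exp (l * t * Complex.I) / ((c : ℂ) + t * Complex.I) +
      Complex.exp (l * (-t : ℝ) * Complex.I) / ((c : ℂ) + (-t : ℝ) * Complex.I)‖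
      ≤ 2 * c * (1 / (c ^ 2 + t ^ 2)) + 2 * |l| := by
    intro t ht
    have ht0 := ht.1
    have e : Complex.exp (l * t * Complex.I) / ((c : ℂ) + t * Complex.I) +
      Complex.exp (l * (-t : ℝ) * Complex.I) / ((c : ℂ) + (-t : ℝ) * Complex.I)
      = ((2 * (c * Real.cos (l * t) + t * Real.sin (l * t)) / (c ^ 2 + t ^ 2) : ℝ) : ℂ) := by
      have h1 := aux_ne hc.ne' t
      have h2 := aux_ne hc.ne' (-t)
      have h3 : (c : ℂ) ^ 2 + t ^ 2 = ((c : ℂ) + t * Complex.I) * ((c : ℂ) + (-t : ℝ) * Complex.I) := by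
        push_cast; ring_nf; simp
      have e1 : Complex.exp (l * t * Complex.I) = Complex.cos (l * t) + Complex.sin (l * t) * Complex.I :=
        Complex.exp_mul_I _
      have e2 : Complex.exp (l * (-t : ℝ) * Complex.I) = Complex.cos (l * t) - Complex.sin (l * t) * Complex.I := by
        rw [Complex.exp_mul_I]; push_cast
        rw [mul_neg, Complex.cos_neg, Complex.sin_neg]; ring
      rw [e1, e2]
      push_cast
      push_cast at h2 h3
      rw [h3, div_add_div _ _ h1 h2]
      congr 1
      ring_nf
      simp
    rw [e, Complex.norm_real, Real.norm_eq_abs, abs_div, abs_of_pos (show 0 < c ^ 2 + t ^ 2 by positivity)]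
    have b1 : |2 * (c * Real.cos (l * t) + t * Real.sin (l * t))| ≤ 2 * (c + t * (|l| * t)) := by
      rw [abs_mul, abs_two]
      refine mul_le_mul_of_nonneg_left ((abs_add_le _ _).trans ?_) (by norm_num)
      rw [abs_mul, abs_mul, abs_of_pos hc, abs_of_pos ht0]
      have i1 := Real.abs_cos_le_one (l * t)
      have i2 : |Real.sin (l * t)| ≤ |l| * t := by
        refine Real.abs_sin_le_abs.trans ?_
        rw [abs_mul, abs_of_pos ht0]
      have i3 := mul_le_mul_of_nonneg_left i1 hc.le
      have i4 := mul_le_mul_of_nonneg_left i2 ht0.le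
      linarith
    rw [div_le_iff₀ (by positivity)]
    refine b1.trans ?_
    have : (2 * c * (1 / (c ^ 2 + t ^ 2)) + 2 * |l|) * (c ^ 2 + t ^ 2) = 2 * c + 2 * |l| * (c^2 + t^2) := by
      field_simp
    rw [this]
    have : 0 ≤ |l| * c^2 := by positivity
    nlinarith
  have hii : IntervalIntegrable (fun t : ℝ => 1 / (c ^ 2 + t ^ 2)) volume 0 a :=
    (aux_inv_int hc.ne').intervalIntegrable
  refine (intervalIntegral.norm_integral_le_of_norm_le ha (Eventually.of_forall hpt)
    ((hii.const_mul _).add intervalIntegrable_const)).trans ?_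
  rw [intervalIntegral.integral_add (hii.const_mul _) intervalIntegrable_const,
    intervalIntegral.integral_const_mul, intervalIntegral.integral_const]
  have : ∫ t in (0:ℝ)..a, 1 / (c ^ 2 + t ^ 2) ≤ ∫ t : ℝ, 1 / (c ^ 2 + t ^ 2) := by
    rw [intervalIntegral.integral_of_le ha]
    exact setIntegral_le_integral (aux_inv_int hc.ne') (Eventually.of_forall fun t => by
      show (0:ℝ) ≤ _
      positivity)
  have := mul_le_mul_of_nonneg_left this (show 0 ≤ 2 * c by positivity)
  simp only [smul_eq_mul, sub_zero]
  linarith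

lemma aux_bound {c : ℝ} (hc : 0 < c) (l : ℝ) {T : ℝ} (hT : 0 ≤ T) :
    ‖∫ t in (-T)..T, Complex.exp (l * t * Complex.I) / ((c : ℂ) + t * Complex.I)‖
      ≤ 2 * c * (∫ t : ℝ, 1 / (c ^ 2 + t ^ 2)) + 6 := by
  by_cases h : |l| * T ≤ 1
  · refine (aux_small hc l hT).trans ?_
    linarith
  · push Not at h
    have hl : l ≠ 0 := by rintro rfl; simp at h; linarith
    have hl' : 0 < |l| := abs_pos.mpr hl
    set A := 1 / |l| with hA
    have hA0 : 0 < A := by positivity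
    have hlA : |l| * A = 1 := by rw [hA]; field_simp
    have hAT : A ≤ T := by rw [hA, div_le_iff₀ hl']; linarith
    have hi := fun a b => (aux_cont hc.ne' l).intervalIntegrable (μ := volume) a b
    rw [← intervalIntegral.integral_add_adjacent_intervals (hi (-T) A) (hi A T),
      ← intervalIntegral.integral_add_adjacent_intervals (hi (-T) (-A)) (hi (-A) A)]
    have b1 := aux_small hc l hA0.le
    have b2 := aux_tail hc.ne' hl hA0 hAT
    have b3 := aux_tail (neg_ne_zero.mpr hc.ne') (neg_ne_zero.mpr hl) hA0 hAT
    have e3 : ∫ t in (-T)..(-A), Complex.exp (l * t * Complex.I) / ((c : ℂ) + t * Complex.I)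
        = - ∫ t in A..T, Complex.exp ((-l : ℝ) * t * Complex.I) / (((-c : ℝ) : ℂ) + t * Complex.I) := by
      rw [← intervalIntegral.integral_comp_neg, ← intervalIntegral.integral_neg]
      congr 1; ext t
      push_cast
      rw [← div_neg]
      congr 1
      · ring_nf
      · ring
    rw [e3]
    rw [abs_neg] at b3
    rw [hlA] at b2 b3
    rw [mul_assoc 2 |l|, hlA] at b1
    refine (norm_add_le _ _).trans ((add_le_add (norm_add_le _ _) le_rfl).trans ?_)
    rw [norm_neg]
    linarith

lemma aux_real_int {c : ℝ} (hc : 0 < c) :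
    IntegrableOn (fun v : ℝ => v * Real.exp (-c * v)) (Set.Ioi 0) := by
  have := integrableOn_rpow_mul_exp_neg_mul_rpow (s := 1) (p := 1) (b := c) (by norm_num) (by norm_num) hc
  simpa using this

lemma aux_lap {r : ℂ} (hr : 0 < r.re) :
    ∫ v : ℝ in Set.Ioi 0, (v : ℂ) * Complex.exp (-r * v) = 1 / r ^ 2 := by
  have hr0 : r ≠ 0 := by rintro rfl; simp at hr
  have hn : ∀ v : ℝ, ‖Complex.exp (-r * v)‖ = Real.exp (-r.re * v) := by
    intro v; rw [Complex.norm_exp]; simp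
  have hder : ∀ v : ℝ, HasDerivAt (fun v : ℝ => -((v : ℂ) / r + 1 / r ^ 2) * Complex.exp (-r * v))
      ((v : ℂ) * Complex.exp (-r * v)) v := by
    intro v
    have h0 : HasDerivAt (fun t : ℝ => (t : ℂ)) 1 v := Complex.ofRealCLM.hasDerivAt
    refine ((((h0.div_const r).add_const (1 / r ^ 2)).neg).mul ((h0.const_mul (-r)).cexp)).congr_deriv ?_
    simp only [Pi.neg_apply]
    field_simp
    ring
  have h := integral_Ioi_of_hasDerivAt_of_tendsto' (a := 0) (m := 0) (fun v _ => hder v) ?_ ?_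
  · rw [h]; simp
  · refine Integrable.mono' (aux_real_int hr) (by fun_prop) ?_
    refine (ae_restrict_iff' measurableSet_Ioi).mpr (Eventually.of_forall fun v hv => ?_)
    rw [norm_mul, hn, Complex.norm_real, Real.norm_eq_abs, abs_of_pos hv]
  · have t1 : Tendsto (fun v : ℝ => v * Real.exp (-r.re * v)) atTop (𝓝 0) := by
      simpa using tendsto_rpow_mul_exp_neg_mul_atTop_nhds_zero 1 r.re hr
    have t2 : Tendsto (fun v : ℝ => Real.exp (-r.re * v)) atTop (𝓝 0) := by
      simpa using tendsto_rpow_mul_exp_neg_mul_atTop_nhds_zero 0 r.re hr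
    have t1' : Tendsto (fun v : ℝ => (v : ℂ) * Complex.exp (-r * v)) atTop (𝓝 0) := by
      rw [tendsto_zero_iff_norm_tendsto_zero]
      refine t1.congr' ?_
      filter_upwards [eventually_gt_atTop 0] with v hv
      rw [norm_mul, hn, Complex.norm_real, Real.norm_eq_abs, abs_of_pos hv]
    have t2' : Tendsto (fun v : ℝ => Complex.exp (-r * v)) atTop (𝓝 0) := by
      rw [tendsto_zero_iff_norm_tendsto_zero]
      simpa only [hn] using t2
    have := ((t1'.const_mul (1 / r)).add (t2'.const_mul (1 / r ^ 2))).neg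
    simp only [mul_zero, add_zero, neg_zero] at this
    refine this.congr fun v => ?_
    ring

lemma aux_inv_sq_int {c : ℝ} (hc : c ≠ 0) (l : ℝ) :
    Integrable (fun t : ℝ => Complex.exp (l * t * Complex.I) / ((c : ℂ) + t * Complex.I) ^ 2) := by
  refine (aux_inv_int hc).mono' (aux_cont2 hc l).aestronglyMeasurable
    (Eventually.of_forall fun t => ?_)
  rw [norm_div, aux_norm_exp, norm_pow, aux_norm_sq]

lemma aux_fourier {c : ℝ} (hc : 0 < c) (l : ℝ) :
    ∫ t : ℝ, Complex.exp (l * t * Complex.I) / ((c : ℂ) + t * Complex.I) ^ 2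
      = 2 * Real.pi * ((max l 0 * Real.exp (-c * l) : ℝ) : ℂ) := by
  set f : ℝ → ℂ := fun v => ((max v 0 * Real.exp (-c * v) : ℝ) : ℂ) with hf
  have hfc : Continuous f := by rw [hf]; fun_prop
  have hind : f = (Set.Ioi (0:ℝ)).indicator (fun v : ℝ => ((v * Real.exp (-c * v) : ℝ) : ℂ)) := by
    ext v
    by_cases h : 0 < v
    · simp [hf, h, max_eq_left h.le]
    · simp [hf, h, max_eq_right (not_lt.mp h)]
  have hfi : Integrable f := by
    rw [hind, integrable_indicator_iff measurableSet_Ioi]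
    apply Integrable.ofReal
    exact aux_real_int hc
  have hF : ∀ w : ℝ, FourierTransform.fourier f w
      = Complex.exp ((0:ℝ) * (2 * Real.pi * w : ℝ) * Complex.I) /
        ((c : ℂ) + (2 * Real.pi * w : ℝ) * Complex.I) ^ 2 := by
    intro w
    rw [Real.fourier_real_eq_integral_exp_smul]
    have := aux_lap (r := (c : ℂ) + (2 * Real.pi * w : ℝ) * Complex.I) (by simpa using hc)
    have e : (fun v : ℝ => Complex.exp (((-2 * Real.pi * v * w : ℝ) : ℂ) * Complex.I) • f v)
      = (Set.Ioi (0:ℝ)).indicator (fun v : ℝ => (v : ℂ) *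
        Complex.exp (-((c : ℂ) + (2 * Real.pi * w : ℝ) * Complex.I) * v)) := by
      ext v
      rw [hind]
      by_cases h : v ∈ Set.Ioi (0:ℝ)
      · rw [Set.indicator_of_mem h, Set.indicator_of_mem h]
        simp only [smul_eq_mul, Complex.ofReal_mul, Complex.ofReal_exp]
        rw [mul_left_comm, ← Complex.exp_add]
        congr 2; push_cast; ring
      · rw [Set.indicator_of_notMem h, Set.indicator_of_notMem h, smul_zero]
    rw [e, integral_indicator measurableSet_Ioi, this]
    simp
  have hpi : (2 * Real.pi) ≠ 0 := by positivity
  have hFi : Integrable (FourierTransform.fourier f) := by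
    rw [show FourierTransform.fourier f = _ from funext hF]
    exact (aux_inv_sq_int hc.ne' 0).comp_mul_left' hpi
  have inv := hfi.fourierInv_fourier_eq hFi (v := l) hfc.continuousAt
  rw [Real.fourierInv_eq'] at inv
  have e2 : ∀ w : ℝ, Complex.exp (((2 * Real.pi * inner ℝ w l : ℝ) : ℂ) * Complex.I) • FourierTransform.fourier f w
     = (fun t : ℝ => Complex.exp (l * t * Complex.I) / ((c : ℂ) + t * Complex.I) ^ 2) ((2 * Real.pi) * w) := by
    intro w
    rw [hF]
    simp
    rw [div_eq_mul_inv]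
    congr 2
    ring
  rw [integral_congr_ae (Eventually.of_forall e2), Measure.integral_comp_mul_left (fun t : ℝ => Complex.exp (l * t * Complex.I) / ((c : ℂ) + t * Complex.I) ^ 2)] at inv
  change _ = 2 * Real.pi * f l
  rw [← inv, abs_of_pos (by positivity), Complex.real_smul]
  push_cast
  have : (Real.pi : ℂ) ≠ 0 := by exact_mod_cast Real.pi_ne_zero
  rw [← mul_assoc, mul_inv_cancel₀ (by simp [this]), one_mul]

lemma aux_limit {c : ℝ} (hc : 0 < c) {l : ℝ} (hl : l ≠ 0) :
    Tendsto (fun T : ℝ => ∫ t in (-T)..T, Complex.exp (l * t * Complex.I) / ((c : ℂ) + t * Complex.I))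
      atTop (𝓝 (2 * Real.pi * ((if 0 < l then Real.exp (-c * l) else 0 : ℝ) : ℂ))) := by
  simp_rw [aux_parts hc.ne' hl]
  have hl' : 0 < |l| := abs_pos.mpr hl
  have hlim := intervalIntegral_tendsto_integral (aux_inv_sq_int hc.ne' l) tendsto_neg_atTop_atBot
    (tendsto_id (α := ℝ))
  rw [aux_fourier hc] at hlim
  have hE : ∀ f : ℝ → ℝ, (∀ T, 0 < T → |f T| = T) → Tendsto (fun T : ℝ =>
      Complex.exp (l * (f T : ℝ) * Complex.I) / (Complex.I * l * ((c : ℂ) + (f T : ℝ) * Complex.I))) atTop (𝓝 0) := by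
    intro f hf
    have : Tendsto (fun T : ℝ => 1 / |l| * T⁻¹) atTop (𝓝 0) := by
      simpa using (tendsto_inv_atTop_zero (𝕜 := ℝ)).const_mul (1 / |l|)
    refine squeeze_zero_norm' ?_ this
    filter_upwards [eventually_gt_atTop 0] with T hT
    rw [norm_div, aux_norm_exp, norm_mul, norm_mul, Complex.norm_I, Complex.norm_real, one_mul,
      Real.norm_eq_abs, ← one_div, div_mul_div_comm, one_mul]
    have := aux_norm_ge c (f T)
    rw [hf T hT] at this
    gcongr
  have h := ((hE id fun T hT => abs_of_pos hT).sub (hE (fun T => -T) fun T hT => by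
    rw [abs_neg, abs_of_pos hT])).add (hlim.const_mul (1 / l : ℂ))
  have hlc : (l : ℂ) ≠ 0 := by exact_mod_cast hl
  refine (h.congr fun T => rfl).trans (le_of_eq ?_)
  congr 1
  split_ifs with h0
  · rw [max_eq_left h0.le]; push_cast; field_simp; simp
  · rw [max_eq_right (not_lt.mp h0)]; simp

lemma aux_null (k : ℕ) : ∀ᵐ x : Fin k → ℝ, (1 - ∑ i, x i) ≠ 0 := by
  let φ : (Fin k → ℝ) →ₗ[ℝ] ℝ := ∑ i, LinearMap.proj i
  let S : AffineSubspace ℝ (Fin k → ℝ) :=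
    (AffineSubspace.mk' (1:ℝ) (⊥ : Submodule ℝ ℝ)).comap φ.toAffineMap
  have hmem : ∀ x, x ∈ S ↔ ∑ i, x i = 1 := by
    intro x
    simp [S, φ, AffineSubspace.mem_comap, AffineSubspace.mem_mk', sub_eq_zero]
  have hS : S ≠ ⊤ := by
    intro h
    have : (0 : Fin k → ℝ) ∈ S := by rw [h]; trivial
    rw [hmem] at this
    simp at this
  have := Measure.addHaar_affineSubspace (volume : Measure (Fin k → ℝ)) S hS
  have h2 : ∀ᵐ x : Fin k → ℝ, x ∉ (S : Set (Fin k → ℝ)) := by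
    rw [ae_iff]; simpa using this
  filter_upwards [h2] with x hx h
  exact hx ((hmem x).mpr (by linarith))

lemma aux_pi (k : ℕ) (a : ℝ) : Measure.pi (fun _ : Fin k => volume.restrict (Set.Ioi a))
    = (volume : Measure (Fin k → ℝ)).restrict (Set.univ.pi fun _ => Set.Ici a) := by
  rw [Measure.restrict_congr_set Ioi_ae_eq_Ici, volume_pi, Measure.restrict_pi_pi]

lemma aux_Ik (k : ℕ) {u : ℝ} (hu : 1 ≤ u) : Ik k u =
    ∫ x, (if 0 < 1 - ∑ i, x i then ∏ i, (x i)⁻¹ else 0)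
      ∂(Measure.pi (fun _ : Fin k => volume.restrict (Set.Ioi (1 / u)))) := by
  have hu0 : 0 < u := by linarith
  have hm : MeasurableSet {t : Fin k → ℝ | (∀ i, 1 ≤ t i) ∧ (∑ i, t i) ≤ u} := by
    have m1 : MeasurableSet {t : Fin k → ℝ | ∀ i, 1 ≤ t i} :=
      measurableSet_setOfPred.mpr (Measurable.forall fun i => measurableSet_setOfPred.mp
        (measurableSet_le measurable_const (measurable_pi_apply i)))
    have m2 : MeasurableSet {t : Fin k → ℝ | (∑ i, t i) ≤ u} :=
      measurableSet_le (by fun_prop) measurable_const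
    exact m1.inter m2
  rw [Ik, ← integral_indicator hm, aux_pi,
    ← integral_indicator (MeasurableSet.univ_pi fun _ => measurableSet_Ici)]
  have h := Measure.integral_comp_smul (volume : Measure (Fin k → ℝ))
    ({t : Fin k → ℝ | (∀ i, 1 ≤ t i) ∧ (∑ i, t i) ≤ u}.indicator (fun t => ∏ i, (t i)⁻¹)) u
  rw [Module.finrank_fin_fun, abs_of_pos (by positivity), smul_eq_mul, eq_comm,
    inv_mul_eq_iff_eq_mul₀ (by positivity)] at h
  rw [h, ← integral_const_mul]
  apply integral_congr_ae
  filter_upwards [aux_null k] with x hx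
  have e1 : (∀ i, 1 ≤ (u • x) i) ↔ x ∈ Set.univ.pi fun _ : Fin k => Set.Ici (1 / u) := by
    simp only [Set.mem_univ_pi, Set.mem_Ici, Pi.smul_apply, smul_eq_mul]
    refine forall_congr' fun i => ?_
    rw [div_le_iff₀ hu0, mul_comm]
  have e2 : (∑ i, (u • x) i) ≤ u ↔ 0 < 1 - ∑ i, x i := by
    simp only [Pi.smul_apply, smul_eq_mul, ← Finset.mul_sum]
    constructor
    · intro h
      have : ∑ i, x i ≤ 1 := by
        by_contra h'
        push Not at h'
        nlinarith
      exact lt_of_le_of_ne (by linarith) hx.symm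
    · intro h
      nlinarith
  have e0 : u • x ∈ {t : Fin k → ℝ | (∀ i, 1 ≤ t i) ∧ (∑ i, t i) ≤ u} ↔
      (x ∈ Set.univ.pi fun _ : Fin k => Set.Ici (1 / u)) ∧ 0 < 1 - ∑ i, x i := by
    rw [← e1, ← e2]; rfl
  by_cases ha : x ∈ Set.univ.pi fun _ : Fin k => Set.Ici (1 / u)
  · rw [Set.indicator_of_mem ha]
    by_cases hb : 0 < 1 - ∑ i, x i
    · rw [Set.indicator_of_mem (e0.mpr ⟨ha, hb⟩), if_pos hb]
      simp only [Pi.smul_apply, smul_eq_mul, mul_inv, Finset.prod_mul_distrib, Finset.prod_const,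
        Finset.card_univ, Fintype.card_fin]
      rw [← mul_assoc, inv_pow, mul_inv_cancel₀ (by positivity), one_mul]
    · rw [Set.indicator_of_notMem (fun h => hb (e0.mp h).2), if_neg hb, mul_zero]
  · rw [Set.indicator_of_notMem ha, Set.indicator_of_notMem (fun h => ha (e0.mp h).1), mul_zero]

lemma aux_h_int (k : ℕ) {u : ℝ} (hu : 1 ≤ u) {c : ℝ} (hc : 0 < c) :
    Integrable (fun x : Fin k → ℝ => ∏ i, (Real.exp (-c * x i) * |x i|⁻¹))
      (Measure.pi (fun _ : Fin k => volume.restrict (Set.Ioi (1 / u)))) := by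
  have hu0 : 0 < u := by linarith
  refine Integrable.fintype_prod (f := fun _ (y : ℝ) => Real.exp (-c * y) * |y|⁻¹) fun i => ?_
  refine Integrable.mono' ((exp_neg_integrableOn_Ioi (1 / u) hc).const_mul u)
    (by fun_prop) ?_
  refine (ae_restrict_iff' measurableSet_Ioi).mpr (Eventually.of_forall fun v hv => ?_)
  have hv' : 1 / u < v := hv
  have h0 : 0 < v := lt_trans (by positivity) hv'
  rw [Real.norm_eq_abs, abs_of_nonneg (by positivity), abs_of_pos h0, mul_comm]
  have : v⁻¹ ≤ u := by
    rw [inv_le_comm₀ h0 hu0, ← one_div]; exact hv'.le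
  gcongr

lemma aux_term_s10 (c t y : ℝ) :
    ‖Complex.exp (-(y : ℂ) * ((c : ℂ) + t * Complex.I)) / (y : ℂ)‖ = Real.exp (-c * y) * |y|⁻¹ := by
  rw [norm_div, Complex.norm_exp, Complex.norm_real, Real.norm_eq_abs, div_eq_mul_inv]
  congr 2
  simp; ring

lemma aux_swap (k : ℕ) {u : ℝ} (hu : 1 ≤ u) {c : ℝ} (hc : 0 < c) (T : ℝ) :
    ∫ t in (-T)..T,
            (Complex.exp ((c : ℂ) + t * Complex.I) / ((c : ℂ) + t * Complex.I)) *
              (∫ x in Set.Ioi (1 / u),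
                  Complex.exp (-(x : ℂ) * ((c : ℂ) + t * Complex.I)) / (x : ℂ)) ^ k *
              Complex.I
    = Complex.I * ∫ x : Fin k → ℝ, (((∏ i, (x i)⁻¹) * Real.exp (c * (1 - ∑ i, x i)) : ℝ) : ℂ) *
        (∫ t in (-T)..T, Complex.exp ((1 - ∑ i, x i : ℝ) * t * Complex.I) / ((c : ℂ) + t * Complex.I))
      ∂(Measure.pi (fun _ : Fin k => volume.restrict (Set.Ioi (1 / u)))) := by
  set ν := Measure.pi (fun _ : Fin k => volume.restrict (Set.Ioi (1 / u))) with hν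
  let G : ℝ → (Fin k → ℝ) → ℂ := fun t x =>
    (Complex.exp ((c : ℂ) + t * Complex.I) / ((c : ℂ) + t * Complex.I)) *
      ∏ i, (Complex.exp (-(x i : ℂ) * ((c : ℂ) + t * Complex.I)) / (x i : ℂ))
  have h1 : ∀ t : ℝ, (Complex.exp ((c : ℂ) + t * Complex.I) / ((c : ℂ) + t * Complex.I)) *
              (∫ x in Set.Ioi (1 / u),
                  Complex.exp (-(x : ℂ) * ((c : ℂ) + t * Complex.I)) / (x : ℂ)) ^ k *
              Complex.I = Complex.I * ∫ x, G t x ∂ν := by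
    intro t
    simp only [G]
    rw [integral_const_mul, hν, integral_fintype_prod_eq_pow
      (fun y : ℝ => Complex.exp (-(y : ℂ) * ((c : ℂ) + t * Complex.I)) / (y : ℂ)), Fintype.card_fin]
    ring
  simp_rw [h1]
  rw [intervalIntegral.integral_const_mul, intervalIntegral_integral_swap]
  · congr 1
    apply integral_congr_ae
    refine Eventually.of_forall fun x => ?_
    simp only
    rw [← intervalIntegral.integral_const_mul]
    congr 1
    ext t
    simp only [G]
    rw [Finset.prod_div_distrib, ← Complex.exp_sum, ← Finset.sum_mul, div_mul_div_comm,
      ← Complex.exp_add]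
    have e : (c : ℂ) + t * Complex.I + (∑ i, -(x i : ℂ)) * ((c : ℂ) + t * Complex.I)
        = ((c * (1 - ∑ i, x i) : ℝ) : ℂ) + (1 - ∑ i, x i : ℝ) * t * Complex.I := by
      push_cast
      rw [Finset.sum_neg_distrib]
      ring
    rw [e, Complex.exp_add]
    push_cast
    rw [Finset.prod_inv_distrib]
    rw [div_eq_mul_inv, div_eq_mul_inv, mul_inv]
    ring
  · have hb : Integrable (fun z : ℝ × (Fin k → ℝ) => (Real.exp c / c) *
        ∏ i, (Real.exp (-c * z.2 i) * |z.2 i|⁻¹)) ((volume.restrict (Set.uIoc (-T) T)).prod ν) :=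
      Integrable.mul_prod (f := fun _ : ℝ => Real.exp c / c) 
        (by rw [Set.uIoc]; exact integrable_const _) (aux_h_int k hu hc)
    refine hb.mono' ?_ (Eventually.of_forall fun z => ?_)
    · apply Measurable.aestronglyMeasurable
      simp only [G, Function.uncurry_def]
      fun_prop
    · simp only [G, Function.uncurry_def]
      rw [norm_mul, norm_prod]
      simp_rw [aux_term_s10]
      gcongr
      · rw [norm_div, Complex.norm_exp]
        have : c ≤ ‖(c : ℂ) + z.1 * Complex.I‖ := by
          have := Complex.re_le_norm ((c : ℂ) + z.1 * Complex.I)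
          simpa using this
        simp only [Complex.add_re, Complex.ofReal_re, Complex.mul_re, Complex.I_re, mul_zero,
          Complex.ofReal_im, Complex.I_im, mul_one, sub_zero, add_zero]
        gcongr

lemma aux_K_cont {c : ℝ} (hc : c ≠ 0) (T : ℝ) : Continuous (fun l : ℝ =>
    ∫ t in (-T)..T, Complex.exp (l * t * Complex.I) / ((c : ℂ) + t * Complex.I)) := by
  apply intervalIntegral.continuous_parametric_intervalIntegral_of_continuous'
  simp only [Function.uncurry_def]
  exact Continuous.div (by fun_prop) (by fun_prop) fun p => aux_ne hc p.2

/-- for `k ≥ 0`, `u ≥ 1` and `c > 0`,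
`I_k(u) = (1/(2πi)) ∫_{c-i∞}^{c+i∞} (e^s/s) (∫_{1/u}^∞ e^{-ts}/t dt)^k ds`
(symmetric limit). -/
theorem Ik_contour_representation (k : ℕ) (u : ℝ) (hu : 1 ≤ u) (c : ℝ) (hc : 0 < c) :
    Tendsto (fun T : ℝ =>
        (1 / (2 * Real.pi * Complex.I)) *
          ∫ t in (-T)..T,
            (Complex.exp ((c : ℂ) + t * Complex.I) / ((c : ℂ) + t * Complex.I)) *
              (∫ x in Set.Ioi (1 / u),
                  Complex.exp (-(x : ℂ) * ((c : ℂ) + t * Complex.I)) / (x : ℂ)) ^ k *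
              Complex.I)
      atTop (𝓝 (Ik k u : ℂ)) := by
  simp_rw [aux_swap k hu hc]
  set ν := Measure.pi (fun _ : Fin k => volume.restrict (Set.Ioi (1 / u))) with hν
  have hae : ∀ᵐ x ∂ν, (1 - ∑ i, x i) ≠ 0 := by
    rw [hν, aux_pi]
    exact ae_restrict_of_ae (aux_null k)
  have hpi : (Real.pi : ℂ) ≠ 0 := by exact_mod_cast Real.pi_ne_zero
  have key : Tendsto (fun T : ℝ => ∫ x : Fin k → ℝ,
        (((∏ i, (x i)⁻¹) * Real.exp (c * (1 - ∑ i, x i)) : ℝ) : ℂ) *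
        (∫ t in (-T)..T, Complex.exp ((1 - ∑ i, x i : ℝ) * t * Complex.I) / ((c : ℂ) + t * Complex.I)) ∂ν)
      atTop (𝓝 (∫ x : Fin k → ℝ, (2 * Real.pi : ℂ) *
        ((if 0 < 1 - ∑ i, x i then ∏ i, (x i)⁻¹ else 0 : ℝ) : ℂ) ∂ν)) := by
    refine tendsto_integral_filter_of_dominated_convergence
      (fun x => Real.exp c * (2 * c * (∫ t : ℝ, 1 / (c ^ 2 + t ^ 2)) + 6) *
        ∏ i, (Real.exp (-c * x i) * |x i|⁻¹)) ?_ ?_ ?_ ?_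
    · refine Eventually.of_forall fun T => Measurable.aestronglyMeasurable ?_
      have := (aux_K_cont hc.ne' T).measurable
      refine Measurable.mul (by fun_prop)
        (this.comp (show Measurable fun x : Fin k → ℝ => 1 - ∑ i, x i by fun_prop))
    · filter_upwards [eventually_ge_atTop 0] with T hT
      refine Eventually.of_forall fun x => ?_
      rw [norm_mul, Complex.norm_real, norm_mul, norm_prod]
      simp only [norm_inv, Real.norm_eq_abs, Real.abs_exp]
      have b := aux_bound hc (1 - ∑ i, x i) hT
      have e : Real.exp (c * (1 - ∑ i, x i)) = Real.exp c * ∏ i, Real.exp (-c * x i) := by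
        rw [← Real.exp_sum, ← Real.exp_add, ← Finset.mul_sum]
        congr 1; ring
      rw [e, Finset.prod_mul_distrib]
      have hp : 0 ≤ (∏ i, |x i|⁻¹) * (Real.exp c * ∏ i, Real.exp (-c * x i)) := by
        have i1 : 0 ≤ ∏ i, |x i|⁻¹ := Finset.prod_nonneg fun i _ => by positivity
        have i2 : 0 ≤ ∏ i, Real.exp (-c * x i) := Finset.prod_nonneg fun i _ => by positivity
        positivity
      refine (mul_le_mul_of_nonneg_left b hp).trans (le_of_eq ?_)
      ring
    · exact (aux_h_int k hu hc).const_mul _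
    · filter_upwards [hae] with x hx
      have h := (aux_limit hc hx).const_mul
        ((((∏ i, (x i)⁻¹) * Real.exp (c * (1 - ∑ i, x i)) : ℝ) : ℂ))
      refine h.trans (le_of_eq ?_)
      congr 1
      split_ifs with h0
      · have : Real.exp (-c * (1 - ∑ i, x i)) = (Real.exp (c * (1 - ∑ i, x i)))⁻¹ := by
          rw [← Real.exp_neg]; ring_nf
        rw [this]
        have h3 : ((Real.exp (c * (1 - ∑ i, x i)) : ℝ) : ℂ) ≠ 0 := by
          exact_mod_cast (Real.exp_pos _).ne'
        rw [Complex.ofReal_mul, Complex.ofReal_inv]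
        field_simp
      · simp
  have key2 := (key.const_mul Complex.I).const_mul (1 / (2 * Real.pi * Complex.I) : ℂ)
  refine key2.trans (le_of_eq ?_)
  congr 1
  rw [integral_const_mul, integral_complex_ofReal, ← aux_Ik k hu]
  have := Complex.I_ne_zero
  field_simp
end

section
/- For every complex number $s$ with $\mathrm{Re}(s) > 0$, $\int_0^1 \frac{1 - e^{-ts}}{t}\,dt - \int_1^{\infty} \frac{e^{-ts}}{t}\,dt = \log s + \gamma$, where $\log s$ is the principal branch of the logarithm and $\gamma$ is the Euler–Mascheroni constant. -/
open MeasureTheory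

open Filter Topology in
theorem fl_int_log : (∫ t in Set.Ioi (0:ℝ), Real.log t * Real.exp (-t))
    = -Real.eulerMascheroniConstant := by
  have h1 := Complex.hasDerivAt_GammaIntegral (s := 1) (by simp)
  have h2 : HasDerivAt Complex.GammaIntegral (-(Real.eulerMascheroniConstant : ℂ)) 1 := by
    apply Complex.hasDerivAt_Gamma_one.congr_of_eventuallyEq
    have : {s : ℂ | 0 < s.re} ∈ 𝓝 (1:ℂ) :=
      (isOpen_lt continuous_const Complex.continuous_re).mem_nhds (by simp)
    filter_upwards [this] with s hs
    exact (Complex.Gamma_eq_integral hs).symm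
  have h3 := h1.unique h2
  simp only [sub_self, Complex.cpow_zero, one_mul] at h3
  have : (((∫ t in Set.Ioi (0:ℝ), Real.log t * Real.exp (-t)) : ℝ) : ℂ)
    = ((-Real.eulerMascheroniConstant : ℝ) : ℂ) := by
    rw [← integral_complex_ofReal]
    push_cast
    push_cast at h3
    exact h3
  exact_mod_cast this

theorem fl_intble (s : ℂ) :
    IntervalIntegrable (fun t : ℝ => (1 - Complex.exp (-(t : ℂ) * s)) / (t : ℂ)) volume 0 1 := by
  have hc : ContinuousOn (dslope (fun t : ℝ => -Complex.exp (-(t : ℂ) * s)) 0) Set.univ := by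
    rw [continuousOn_dslope Filter.univ_mem]
    refine ⟨by fun_prop, ?_⟩
    have : HasDerivAt (fun z : ℂ => -Complex.exp (-z * s))
      (-(Complex.exp (-((0:ℝ):ℂ) * s) * ((-1) * s))) ((0:ℝ):ℂ) :=
      (((hasDerivAt_id _).neg.mul_const s).cexp).neg
    exact this.comp_ofReal.differentiableAt
  refine ((continuousOn_univ.1 hc).intervalIntegrable 0 1).congr ?_
  intro t ht
  simp only [Set.uIoc_of_le zero_le_one] at ht
  have h0 : t ≠ 0 := ht.1.ne'
  simp only [dslope_of_ne _ h0, slope, vsub_eq_sub]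
  simp
  ring

theorem fl_intble2 (s : ℂ) (hs : 0 < s.re) :
    IntegrableOn (fun t : ℝ => Complex.exp (-(t : ℂ) * s) / (t : ℂ)) (Set.Ioi 1) := by
  have h := integrableOn_exp_mul_complex_Ioi (a := -s) (by simpa using hs) 1
  refine Integrable.mono h (Measurable.aestronglyMeasurable (by fun_prop)) ?_
  refine (ae_restrict_mem measurableSet_Ioi).mono fun t ht => ?_
  have ht : (1:ℝ) < t := ht
  rw [norm_div, show -(t:ℂ) * s = -s * t by ring]
  apply div_le_self (norm_nonneg _)
  simp only [Complex.norm_real, Real.norm_eq_abs]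
  exact ht.le.trans (le_abs_self _)

theorem fl_deriv1 (s : ℂ) (hs : 0 < s.re) :
    HasDerivAt (fun s : ℂ => ∫ t in (0:ℝ)..1, (1 - Complex.exp (-(t : ℂ) * s)) / (t : ℂ))
      (∫ t in (0:ℝ)..1, Complex.exp (-s * t)) s := by
  refine (intervalIntegral.hasDerivAt_integral_of_dominated_loc_of_deriv_le
    (F' := fun s t => Complex.exp (-s * (t:ℂ))) (bound := fun _ => 1)
    ((isOpen_lt continuous_const Complex.continuous_re).mem_nhds hs) ?_ (fl_intble s) ?_ ?_
    (by simp) ?_).2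
  · refine Filter.Eventually.of_forall fun x => ?_
    exact ((intervalIntegrable_iff.1 (fl_intble x)).aestronglyMeasurable)
  · exact Continuous.aestronglyMeasurable (by fun_prop)
  · refine Filter.Eventually.of_forall fun t ht x hx => ?_
    simp only [Set.uIoc_of_le zero_le_one] at ht
    have hx : 0 < x.re := hx
    rw [Complex.norm_exp]
    simp
    nlinarith [ht.1]
  · refine Filter.Eventually.of_forall fun t ht x hx => ?_
    simp only [Set.uIoc_of_le zero_le_one] at ht
    have h0 : (t:ℂ) ≠ 0 := by exact_mod_cast ht.1.ne'
    have : HasDerivAt (fun x : ℂ => (1 - Complex.exp (-(t : ℂ) * x)) / (t : ℂ))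
      ((-(Complex.exp (-(t:ℂ) * x) * (-(t:ℂ) * 1))) / (t:ℂ)) x :=
      ((((hasDerivAt_id x).const_mul (-(t:ℂ))).cexp).const_sub 1).div_const _
    refine this.congr_deriv ?_
    rw [show -(t:ℂ) * x = -x * t by ring]
    field_simp

theorem fl_deriv2 (s : ℂ) (hs : 0 < s.re) :
    HasDerivAt (fun s : ℂ => ∫ t in Set.Ioi (1:ℝ), Complex.exp (-(t : ℂ) * s) / (t : ℂ))
      (∫ t in Set.Ioi (1:ℝ), -Complex.exp (-s * t)) s := by
  have hn : {x : ℂ | s.re / 2 < x.re} ∈ nhds s :=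
    (isOpen_lt continuous_const Complex.continuous_re).mem_nhds (by simp; linarith)
  refine (hasDerivAt_integral_of_dominated_loc_of_deriv_le (μ := volume.restrict (Set.Ioi (1:ℝ)))
    (F := fun (s : ℂ) (t : ℝ) => Complex.exp (-(t : ℂ) * s) / (t : ℂ))
    (F' := fun s t => -Complex.exp (-s * (t:ℂ)))
    (bound := fun t => Real.exp ((-(s.re/2)) * t)) hn ?_ (fl_intble2 s hs) ?_ ?_
    (integrableOn_exp_mul_Ioi (by linarith) 1) ?_).2
  · filter_upwards [hn] with x hx
    have hx : s.re / 2 < x.re := hx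
    exact (fl_intble2 x (by linarith)).aestronglyMeasurable
  · exact Continuous.aestronglyMeasurable (by fun_prop)
  · refine (ae_restrict_mem measurableSet_Ioi).mono fun t ht x hx => ?_
    have ht : (1:ℝ) < t := ht
    have hx : s.re / 2 < x.re := hx
    rw [norm_neg, Complex.norm_exp]
    apply Real.exp_le_exp.2
    simp
    nlinarith
  · refine (ae_restrict_mem measurableSet_Ioi).mono fun t ht x hx => ?_
    have ht : (1:ℝ) < t := ht
    have h0 : (t:ℂ) ≠ 0 := by
      have : t ≠ 0 := by linarith
      exact_mod_cast this
    have : HasDerivAt (fun x : ℂ => (Complex.exp (-(t : ℂ) * x)) / (t : ℂ))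
      ((Complex.exp (-(t:ℂ) * x) * (-(t:ℂ) * 1)) / (t:ℂ)) x :=
      (((hasDerivAt_id x).const_mul (-(t:ℂ))).cexp).div_const _
    refine this.congr_deriv ?_
    rw [show -(t:ℂ) * x = -x * t by ring]
    field_simp

theorem fl_deriv (s : ℂ) (hs : 0 < s.re) :
    HasDerivAt (fun s : ℂ => (∫ t in (0:ℝ)..1, (1 - Complex.exp (-(t : ℂ) * s)) / (t : ℂ)) -
        ∫ t in Set.Ioi (1 : ℝ), Complex.exp (-(t : ℂ) * s) / (t : ℂ)) s⁻¹ s := by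
  have h := (fl_deriv1 s hs).sub (fl_deriv2 s hs)
  have h0 : s ≠ 0 := by rintro rfl; simp at hs
  refine h.congr_deriv ?_
  rw [integral_neg, sub_neg_eq_add, integral_exp_mul_complex_Ioi (by simpa using hs),
    integral_exp_mul_complex (by simpa using h0)]
  simp
  field_simp
  ring

open Filter Topology in
theorem fl_base : (∫ t in (0:ℝ)..1, (1 - Real.exp (-t)) / t) -
    (∫ t in Set.Ioi (1:ℝ), Real.exp (-t) / t) = Real.eulerMascheroniConstant := by
  have hI := fl_int_log
  have hint : IntegrableOn (fun t => Real.log t * Real.exp (-t)) (Set.Ioi 0) := by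
    by_contra hc
    rw [integral_undef hc] at hI
    linarith [Real.one_half_lt_eulerMascheroniConstant]
  have hint1 : IntervalIntegrable (fun t => Real.log t * Real.exp (-t)) volume 0 1 :=
    (intervalIntegrable_iff_integrableOn_Ioc_of_le zero_le_one).2
      (hint.mono_set Set.Ioc_subset_Ioi_self)
  have hint2 : IntegrableOn (fun t => Real.log t * Real.exp (-t)) (Set.Ioi 1) :=
    hint.mono_set (Set.Ioi_subset_Ioi zero_le_one)
  have i1 : IntervalIntegrable (fun t : ℝ => (1 - Real.exp (-t)) / t) volume 0 1 := by
    have := fl_intble 1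
    rw [intervalIntegrable_iff] at this ⊢
    refine this.re.congr (Eventually.of_forall fun t => ?_)
    simp only [mul_one]
    rw [← Complex.ofReal_re ((1 - Real.exp (-t)) / t)]
    push_cast
    rfl
  have i2 : IntegrableOn (fun t : ℝ => Real.exp (-t) / t) (Set.Ioi 1) := by
    refine (fl_intble2 1 (by simp)).re.congr (Eventually.of_forall fun t => ?_)
    simp only [mul_one]
    rw [← Complex.ofReal_re (Real.exp (-t) / t)]
    push_cast
    rfl
  have hexp (t : ℝ) : HasDerivAt (fun t => Real.exp (-t)) (-Real.exp (-t)) t := by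
    simpa using (hasDerivAt_id t).neg.exp
  have e1 : ∫ t in (0:ℝ)..1, ((1 - Real.exp (-t)) / t + Real.log t * Real.exp (-t)) = 0 - 0 := by
    apply intervalIntegral.integral_eq_sub_of_hasDerivAt_of_tendsto
      (f := fun t => Real.log t * (1 - Real.exp (-t))) zero_lt_one _ (i1.add hint1)
    · refine squeeze_zero_norm' (a := fun t => |Real.log t * t|) ?_ ?_
      · filter_upwards [self_mem_nhdsWithin] with t ht
        have ht : 0 < t := ht
        rw [Real.norm_eq_abs, abs_mul, abs_mul]
        apply mul_le_mul_of_nonneg_left _ (abs_nonneg _)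
        have := Real.add_one_le_exp (-t)
        have h2 : Real.exp (-t) ≤ 1 := Real.exp_le_one_iff.2 (by linarith)
        rw [abs_of_nonneg (by linarith), abs_of_pos ht]
        linarith
      · have := (tendsto_log_mul_rpow_nhdsGT_zero zero_lt_one).abs
        simpa using this
    · have : ContinuousAt (fun t => Real.log t * (1 - Real.exp (-t))) 1 :=
        (Real.continuousAt_log one_ne_zero).mul (by fun_prop)
      have h2 := this.tendsto
      simp only [Real.log_one, zero_mul] at h2
      exact h2.mono_left nhdsWithin_le_nhds
    · intro t ht
      have h0 : t ≠ 0 := ht.1.ne'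
      refine ((Real.hasDerivAt_log h0).mul ((hexp t).const_sub 1)).congr_deriv ?_
      field_simp
  have e2 : ∫ t in Set.Ioi (1:ℝ), (Real.log t * Real.exp (-t) - Real.exp (-t) / t)
      = 0 - (-(Real.log 1 * Real.exp (-1))) := by
    apply integral_Ioi_of_hasDerivAt_of_tendsto' (f := fun t => -(Real.log t * Real.exp (-t)))
      _ (hint2.sub i2)
    · refine squeeze_zero_norm' (a := fun t => t ^ 1 * Real.exp (-t)) ?_
        (Real.tendsto_pow_mul_exp_neg_atTop_nhds_zero 1)
      filter_upwards [eventually_ge_atTop 1] with t ht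
      rw [norm_neg, norm_mul, Real.norm_eq_abs, Real.norm_eq_abs, Real.abs_exp, pow_one]
      apply mul_le_mul_of_nonneg_right _ (Real.exp_pos _).le
      rw [abs_of_nonneg (Real.log_nonneg ht)]
      linarith [Real.log_le_sub_one_of_pos (by linarith : 0 < t)]
    · intro t ht
      have ht : 1 ≤ t := ht
      have h0 : t ≠ 0 := by linarith
      refine ((Real.hasDerivAt_log h0).mul (hexp t)).neg.congr_deriv ?_
      simp only [Pi.sub_apply]
      field_simp
      ring
  rw [intervalIntegral.integral_add i1 hint1] at e1
  rw [integral_sub hint2 i2] at e2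
  have := intervalIntegral.integral_interval_add_Ioi hint hint2
  simp only [Real.log_one, zero_mul, neg_zero, sub_zero] at e1 e2
  linarith

/-- for `Re s > 0`,
`∫_0^1 (1 - e^{-ts})/t dt - ∫_1^∞ e^{-ts}/t dt = log s + γ`. -/
theorem frullani_log_gamma (s : ℂ) (hs : 0 < s.re) :
    (∫ t in (0:ℝ)..1, (1 - Complex.exp (-(t : ℂ) * s)) / (t : ℂ)) -
        ∫ t in Set.Ioi (1 : ℝ), Complex.exp (-(t : ℂ) * s) / (t : ℂ)
      = Complex.log s + (Real.eulerMascheroniConstant : ℂ) := by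
  have hlog (x : ℂ) (hx : 0 < x.re) : HasDerivAt
      (fun s => Complex.log s + (Real.eulerMascheroniConstant : ℂ)) x⁻¹ x :=
    (Complex.hasDerivAt_log (Or.inl hx)).add_const _
  refine IsOpen.eqOn_of_deriv_eq (s := {s : ℂ | 0 < s.re}) (x := 1)
    (f := fun s : ℂ => (∫ t in (0:ℝ)..1, (1 - Complex.exp (-(t : ℂ) * s)) / (t : ℂ)) -
        ∫ t in Set.Ioi (1 : ℝ), Complex.exp (-(t : ℂ) * s) / (t : ℂ))
    (g := fun s => Complex.log s + (Real.eulerMascheroniConstant : ℂ))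
    (isOpen_lt continuous_const Complex.continuous_re)
    (convex_halfSpace_re_gt 0).isPreconnected
    (fun x hx => (fl_deriv x hx).differentiableAt.differentiableWithinAt)
    (fun x hx => (hlog x hx).differentiableAt.differentiableWithinAt)
    (fun x hx => (fl_deriv x hx).deriv.trans (hlog x hx).deriv.symm) (by simp) ?_ hs
  simp only [mul_one, Complex.log_one, zero_add]
  rw [← fl_base]
  push_cast
  rw [← intervalIntegral.integral_ofReal, ← integral_complex_ofReal]
  push_cast
  rfl
end

section
/- For every real $u \ge 1$ and every complex $s$ with $\mathrm{Re}(s) > 0$, $\int_{1/u}^{\infty} \frac{e^{-ts}}{t}\,dt = \log u - \log s - \gamma + \int_0^{1/u} \frac{1 - e^{-ts}}{t}\,dt$, where $\log s$ is the principal branch of the logarithm and $\gamma$ is the Euler–Mascheroni constant. -/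
open MeasureTheory

lemma aux_bound_s12 {z w : ℂ} {m t : ℝ} (hz : m ≤ z.re) (hw : m ≤ w.re) (ht : 0 < t) :
    ‖(Complex.exp (-(t:ℂ) * z) - Complex.exp (-(t:ℂ) * w)) / (t:ℂ)‖ ≤ Real.exp (-m * t) * ‖z - w‖ := by
  have hd : ∀ x : ℂ, HasDerivAt (fun x : ℂ => Complex.exp (-(t:ℂ) * x))
      (Complex.exp (-(t:ℂ) * x) * (-(t:ℂ))) x := fun x => by
    simpa using ((hasDerivAt_id x).const_mul (-(t:ℂ))).cexp
  have := (convex_halfSpace_re_ge m).norm_image_sub_le_of_norm_hasDerivWithin_le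
    (f := fun x : ℂ => Complex.exp (-(t:ℂ) * x)) (C := Real.exp (-m * t) * t)
    (fun x _ => (hd x).hasDerivWithinAt) (fun x hx => ?_) hw hz
  · rw [norm_div, Complex.norm_real, Real.norm_of_nonneg ht.le, div_le_iff₀ ht]
    linarith
  · rw [norm_mul, Complex.norm_exp, norm_neg, Complex.norm_real, Real.norm_of_nonneg ht.le]
    gcongr
    have : m ≤ x.re := hx
    simp
    nlinarith

lemma aux_meas (f : ℝ → ℂ) (hf : Continuous f) (μ : Measure ℝ) :
    AEStronglyMeasurable (fun t : ℝ => f t / (t:ℂ)) μ :=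
  (hf.measurable.div Complex.measurable_ofReal).aestronglyMeasurable

lemma aux_intB {z w : ℂ} (hz : 0 < z.re) (hw : 0 < w.re) :
    IntegrableOn (fun t : ℝ => (Complex.exp (-(t:ℂ) * z) - Complex.exp (-(t:ℂ) * w)) / (t:ℂ))
      (Set.Ioi 0) := by
  refine Integrable.mono' (g := fun t => Real.exp (-(min z.re w.re) * t) * ‖z - w‖)
    ((exp_neg_integrableOn_Ioi 0 (lt_min hz hw)).mul_const _) (aux_meas _ (by fun_prop) _) ?_
  filter_upwards [ae_restrict_mem measurableSet_Ioi] with t ht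
  exact aux_bound_s12 (min_le_left _ _) (min_le_right _ _) ht

lemma aux_boundC {s : ℂ} (hs : 0 < s.re) {t : ℝ} (ht : 0 < t) :
    ‖(1 - Complex.exp (-(t:ℂ) * s)) / (t:ℂ)‖ ≤ ‖s‖ := by
  simpa using aux_bound_s12 (z := 0) (w := s) (m := 0) (t := t) (by simp) hs.le ht

lemma aux_intC {s : ℂ} (hs : 0 < s.re) (a : ℝ) :
    IntegrableOn (fun t : ℝ => (1 - Complex.exp (-(t:ℂ) * s)) / (t:ℂ)) (Set.Ioc 0 a) := by
  refine Integrable.mono' (g := fun t => ‖s‖) (by simp) (aux_meas _ (by fun_prop) _) ?_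
  filter_upwards [ae_restrict_mem measurableSet_Ioc] with t ht
  exact aux_boundC hs ht.1

lemma aux_intD {s : ℂ} (hs : 0 < s.re) {a : ℝ} (ha : 0 < a) :
    IntegrableOn (fun t : ℝ => (Complex.exp (-(t:ℂ) * s)) / (t:ℂ)) (Set.Ioi a) := by
  refine Integrable.mono' (g := fun t => Real.exp (-s.re * t) * a⁻¹)
    ((exp_neg_integrableOn_Ioi a hs).mul_const _) (aux_meas _ (by fun_prop) _) ?_
  filter_upwards [ae_restrict_mem measurableSet_Ioi] with t ht
  have h : a < t := ht
  have e : (-(t:ℂ) * s).re = -s.re * t := by simp [mul_comm]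
  rw [norm_div, Complex.norm_exp, Complex.norm_real, Real.norm_of_nonneg (ha.trans h).le,
    div_eq_mul_inv, e]
  gcongr

lemma aux_K_s12 {s : ℂ} (hs : 0 < s.re) :
    ∫ t in Set.Ioi (0:ℝ), (Complex.exp (-(t:ℂ) * s) - Complex.exp (-(t:ℂ) * 1)) / (t:ℂ)
      = - Complex.log s := by
  have hd : ∀ z : ℂ, 0 < z.re → HasDerivAt (fun z : ℂ => ∫ t in Set.Ioi (0:ℝ),
      (Complex.exp (-(t:ℂ) * z) - Complex.exp (-(t:ℂ) * 1)) / (t:ℂ)) (-z⁻¹) z := by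
    intro z hz
    have h := (hasDerivAt_integral_of_dominated_loc_of_deriv_le
      (F := fun (z : ℂ) (t : ℝ) => (Complex.exp (-(t:ℂ) * z) - Complex.exp (-(t:ℂ) * 1)) / (t:ℂ))
      (F' := fun (z : ℂ) (t : ℝ) => - Complex.exp (-z * (t:ℂ)))
      (μ := volume.restrict (Set.Ioi (0:ℝ))) (x₀ := z) (s := {x : ℂ | z.re / 2 < x.re})
      (bound := fun t => Real.exp (-(z.re/2) * t))
      ((isOpen_lt continuous_const Complex.continuous_re).mem_nhds (by simp; linarith))
      (Filter.Eventually.of_forall fun x => aux_meas _ (by fun_prop) _)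
      (aux_intB hz (by simp)) (Continuous.aestronglyMeasurable (by fun_prop))
      ?_ (exp_neg_integrableOn_Ioi 0 (by linarith)) ?_).2
    · refine h.congr_deriv ?_
      rw [integral_neg, integral_exp_mul_complex_Ioi (by simpa using hz)]
      simp
    · filter_upwards [ae_restrict_mem measurableSet_Ioi] with t ht x hx
      have h1 : 0 < t := ht
      have h2 : z.re / 2 < x.re := hx
      rw [norm_neg, Complex.norm_exp]
      gcongr
      simp
      nlinarith
    · filter_upwards [ae_restrict_mem measurableSet_Ioi] with t ht x hx
      have h1 : (t:ℂ) ≠ 0 := by exact_mod_cast (ne_of_gt ht)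
      have := ((((hasDerivAt_id x).const_mul (-(t:ℂ))).cexp.sub_const
        (Complex.exp (-(t:ℂ) * 1))).div_const (t:ℂ))
      refine this.congr_deriv ?_
      simp only [id, mul_comm x]
      field_simp
  have hl : ∀ z : ℂ, 0 < z.re → HasDerivAt (fun z : ℂ => -Complex.log z) (-z⁻¹) z :=
    fun z hz => (Complex.hasDerivAt_log (Or.inl hz)).neg
  have ho : IsOpen {z : ℂ | 0 < z.re} := isOpen_lt continuous_const Complex.continuous_re
  refine ho.eqOn_of_deriv_eq (convex_halfSpace_re_gt 0).isPreconnected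
    (fun z hz => (hd z hz).differentiableAt.differentiableWithinAt)
    (fun z hz => (hl z hz).differentiableAt.differentiableWithinAt)
    (fun z hz => by rw [(hd z hz).deriv, (hl z hz).deriv]) (x := 1) (by simp) (by simp) hs

lemma aux_split_s12 {s : ℂ} (hs : 0 < s.re) {a : ℝ} (ha : 0 < a) :
    (∫ t in Set.Ioi a, Complex.exp (-(t : ℂ) * s) / (t : ℂ)) -
      (∫ t in (0:ℝ)..a, (1 - Complex.exp (-(t : ℂ) * s)) / (t : ℂ)) =
    (∫ t in Set.Ioi a, Complex.exp (-(t : ℂ) * 1) / (t : ℂ)) -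
      (∫ t in (0:ℝ)..a, (1 - Complex.exp (-(t : ℂ) * 1)) / (t : ℂ)) - Complex.log s := by
  have h1 : 0 < (1:ℂ).re := by simp
  have hi := aux_intB hs h1
  have hK := aux_K_s12 hs
  rw [← Set.Ioc_union_Ioi_eq_Ioi ha.le, setIntegral_union (Set.Ioc_disjoint_Ioi le_rfl)
    measurableSet_Ioi (hi.mono_set Set.Ioc_subset_Ioi_self)
    (hi.mono_set (Set.Ioi_subset_Ioi ha.le))] at hK
  have e1 : ∫ t in Set.Ioi a, (Complex.exp (-(t:ℂ) * s) - Complex.exp (-(t:ℂ) * 1)) / (t:ℂ) =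
      (∫ t in Set.Ioi a, Complex.exp (-(t : ℂ) * s) / (t : ℂ)) -
      (∫ t in Set.Ioi a, Complex.exp (-(t : ℂ) * 1) / (t : ℂ)) := by
    rw [← integral_sub (aux_intD hs ha) (aux_intD h1 ha)]
    simp only [sub_div]
  have e2 : ∫ t in Set.Ioc 0 a, (Complex.exp (-(t:ℂ) * s) - Complex.exp (-(t:ℂ) * 1)) / (t:ℂ) =
      (∫ t in Set.Ioc 0 a, (1 - Complex.exp (-(t : ℂ) * 1)) / (t : ℂ)) -
      (∫ t in Set.Ioc 0 a, (1 - Complex.exp (-(t : ℂ) * s)) / (t : ℂ)) := by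
    rw [← integral_sub (aux_intC h1 a) (aux_intC hs a)]
    congr 1 with t
    ring
  rw [intervalIntegral.integral_of_le ha.le, intervalIntegral.integral_of_le ha.le]
  rw [e1, e2] at hK
  linear_combination hK

open Filter Topology in
lemma aux_one {a : ℝ} (ha : 0 < a) (ha1 : a ≤ 1) :
    (∫ t in Set.Ioi a, Complex.exp (-(t : ℂ) * 1) / (t : ℂ)) -
      (∫ t in Set.Ioc 0 a, (1 - Complex.exp (-(t : ℂ) * 1)) / (t : ℂ)) =
    -(Real.eulerMascheroniConstant : ℂ) - Complex.log a := by
  have hac : (a:ℂ) ≠ 0 := by exact_mod_cast ha.ne'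
  have h1 : 0 < (1:ℂ).re := by simp
  have hev : ∀ᶠ e : ℝ in 𝓝[>] 0, 0 < e ∧ e < 1 := 
    Ioo_mem_nhdsGT (show (0:ℝ) < 1 by norm_num)
  have hlim : ∀ t : ℝ, 0 < t → ∀ c : ℂ,
      Tendsto (fun e : ℝ => (t:ℂ) ^ (e:ℂ) * c) (𝓝[>] 0) (𝓝 c) := by
    intro t ht c
    have : ContinuousAt (fun e : ℝ => (t:ℂ) ^ (e:ℂ) * c) 0 := by
      refine ContinuousAt.mul ?_ continuousAt_const
      exact ContinuousAt.const_cpow Complex.continuous_ofReal.continuousAt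
        (Or.inl (by exact_mod_cast ht.ne'))
    have h := this.tendsto.mono_left (nhdsWithin_le_nhds (s := Set.Ioi 0))
    simpa using h
  have hmeas : ∀ e : ℝ, Measurable (fun t : ℝ => (t:ℂ) ^ (e:ℂ)) := fun e => by fun_prop
  have hnorm : ∀ t e : ℝ, 0 < t → ‖(t:ℂ) ^ (e:ℂ)‖ = t ^ e := fun t e ht => by
    rw [Complex.norm_cpow_eq_rpow_re_of_pos ht]; simp
  have L1 : Tendsto (fun e : ℝ => ∫ t in Set.Ioi a, (t:ℂ) ^ (e:ℂ) * (Complex.exp (-(t : ℂ) * 1) / (t : ℂ)))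
      (𝓝[>] 0) (𝓝 (∫ t in Set.Ioi a, Complex.exp (-(t : ℂ) * 1) / (t : ℂ))) := by
    refine tendsto_integral_filter_of_dominated_convergence
      (fun t => (1 + a⁻¹) * Real.exp (-1 * t)) ?_ ?_
      ((exp_neg_integrableOn_Ioi a one_pos).const_mul _) ?_
    · exact Eventually.of_forall fun e => (hmeas e).aestronglyMeasurable.mul (aux_meas _ (by fun_prop) _)
    · filter_upwards [hev] with e he
      filter_upwards [ae_restrict_mem measurableSet_Ioi] with t ht
      have h : a < t := ht
      have h0 : 0 < t := ha.trans h
      rw [norm_mul, hnorm t e h0, norm_div, Complex.norm_exp, Complex.norm_real,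
        Real.norm_of_nonneg h0.le]
      have h2 : t ^ e ≤ 1 + t := by
        rcases le_total t 1 with h3 | h3
        · have := Real.rpow_le_one h0.le h3 he.1.le
          linarith
        · have := Real.rpow_le_rpow_of_exponent_le h3 he.2.le
          rw [Real.rpow_one] at this
          linarith
      have h3 : t ^ e / t ≤ 1 + a⁻¹ := by
        calc t ^ e / t ≤ (1 + t) / t := by gcongr
          _ = 1 + t⁻¹ := by field_simp; ring
          _ ≤ 1 + a⁻¹ := by gcongr
      have h4 : (-(t:ℂ) * 1).re = -1 * t := by simp
      rw [h4, mul_div_assoc', mul_div_right_comm]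
      gcongr
    · filter_upwards [ae_restrict_mem measurableSet_Ioi] with t ht
      exact hlim t (ha.trans ht) _
  have L2 : Tendsto (fun e : ℝ => ∫ t in Set.Ioc 0 a, (t:ℂ) ^ (e:ℂ) * ((1 - Complex.exp (-(t : ℂ) * 1)) / (t : ℂ)))
      (𝓝[>] 0) (𝓝 (∫ t in Set.Ioc 0 a, (1 - Complex.exp (-(t : ℂ) * 1)) / (t : ℂ))) := by
    refine tendsto_integral_filter_of_dominated_convergence
      (fun t => 1) ?_ ?_ (by simp) ?_
    · exact Eventually.of_forall fun e => (hmeas e).aestronglyMeasurable.mul (aux_meas _ (by fun_prop) _)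
    · filter_upwards [hev] with e he
      filter_upwards [ae_restrict_mem measurableSet_Ioc] with t ht
      have h := aux_boundC h1 ht.1
      have h2 := Real.rpow_le_one ht.1.le (ht.2.trans ha1) he.1.le
      rw [norm_mul, hnorm t e ht.1]
      rw [norm_one] at h
      exact mul_le_one₀ h2 (norm_nonneg _) h
    · filter_upwards [ae_restrict_mem measurableSet_Ioc] with t ht
      exact hlim t ht.1 _
  have hg : HasDerivAt (fun z : ℂ => Complex.Gamma (z + 1) - (a:ℂ) ^ z)
      (-(Real.eulerMascheroniConstant : ℂ) - Complex.log a) 0 := by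
    have hG : HasDerivAt (fun z : ℂ => Complex.Gamma (z + 1)) (-(Real.eulerMascheroniConstant : ℂ)) 0 := by
      refine HasDerivAt.comp_add_const (0:ℂ) 1 ?_
      simpa using Complex.hasDerivAt_Gamma_one
    have hA := (hasDerivAt_id (0:ℂ)).const_cpow (c := (a:ℂ)) (Or.inl hac)
    exact (hG.sub hA).congr_deriv (by simp)
  have L3 : Tendsto (fun e : ℝ => (Complex.Gamma (e + 1) - (a:ℂ) ^ (e:ℂ)) / (e:ℂ)) (𝓝[>] 0)
      (𝓝 (-(Real.eulerMascheroniConstant : ℂ) - Complex.log a)) := by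
    have ht : Tendsto (fun e : ℝ => (e:ℂ)) (𝓝[>] 0) (𝓝[≠] 0) := by
      refine tendsto_nhdsWithin_iff.2 ⟨?_, ?_⟩
      · have := (Complex.continuous_ofReal.tendsto 0).mono_left (nhdsWithin_le_nhds (s := Set.Ioi (0:ℝ)))
        simpa using this
      · filter_upwards [hev] with e he
        simpa using he.1.ne'
    refine (hg.tendsto_slope.comp ht).congr fun e => ?_
    simp [slope_def_field]
  refine tendsto_nhds_unique (L1.sub L2) (L3.congr' ?_)
  filter_upwards [hev] with e he
  have hec : (e:ℂ) ≠ 0 := by exact_mod_cast he.1.ne'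
  have hpow : ∀ t : ℝ, 0 < t → (t:ℂ) ^ ((e:ℂ) - 1) = (t:ℂ) ^ (e:ℂ) / t := fun t ht => by
    have : (t:ℂ) ≠ 0 := by exact_mod_cast ht.ne'
    rw [Complex.cpow_sub _ _ this, Complex.cpow_one]
  have hGi := Complex.GammaIntegral_convergent (s := (e:ℂ)) (by simpa using he.1)
  have hGe := Complex.Gamma_eq_integral (s := (e:ℂ)) (by simpa using he.1)
  rw [Complex.GammaIntegral, ← Set.Ioc_union_Ioi_eq_Ioi ha.le, setIntegral_union (Set.Ioc_disjoint_Ioi le_rfl)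
    measurableSet_Ioi (hGi.mono_set Set.Ioc_subset_Ioi_self)
    (hGi.mono_set (Set.Ioi_subset_Ioi ha.le))] at hGe
  have hre : -1 < ((e:ℂ) - 1).re := by simpa using he.1
  have hci := integral_cpow (a := 0) (b := a) (r := (e:ℂ) - 1) (Or.inl hre)
  have hcI := (intervalIntegral.intervalIntegrable_cpow' (a := 0) (b := a) hre)
  rw [intervalIntegrable_iff_integrableOn_Ioc_of_le ha.le] at hcI
  rw [intervalIntegral.integral_of_le ha.le, sub_add_cancel, Complex.ofReal_zero,
    Complex.zero_cpow hec, sub_zero] at hci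
  have e1 : ∫ t in Set.Ioi a, (t:ℂ) ^ (e:ℂ) * (Complex.exp (-(t : ℂ) * 1) / (t : ℂ)) =
      ∫ x in Set.Ioi a, ((Real.exp (-x) : ℝ) : ℂ) * (x:ℂ) ^ ((e:ℂ) - 1) := by
    refine setIntegral_congr_fun measurableSet_Ioi fun t ht => ?_
    rw [hpow t (ha.trans ht)]
    push_cast
    rw [mul_one]; ring
  have e2 : ∫ t in Set.Ioc 0 a, (t:ℂ) ^ (e:ℂ) * ((1 - Complex.exp (-(t : ℂ) * 1)) / (t : ℂ)) =
      (∫ x in Set.Ioc 0 a, (x:ℂ) ^ ((e:ℂ) - 1)) -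
      ∫ x in Set.Ioc 0 a, ((Real.exp (-x) : ℝ) : ℂ) * (x:ℂ) ^ ((e:ℂ) - 1) := by
    rw [← integral_sub hcI (hGi.mono_set Set.Ioc_subset_Ioi_self)]
    refine setIntegral_congr_fun measurableSet_Ioc fun t ht => ?_
    rw [hpow t ht.1]
    push_cast
    rw [mul_one]; ring
  rw [e1, e2, hci, Complex.Gamma_add_one _ hec, hGe]
  field_simp
  ring

/-- for real `u ≥ 1` and complex `s` with `Re s > 0`,
`∫_{1/u}^∞ e^{-ts}/t dt = log u - log s - γ + ∫_0^{1/u} (1 - e^{-ts})/t dt`. -/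
theorem exp_integral_eq_log (u : ℝ) (hu : 1 ≤ u) (s : ℂ) (hs : 0 < s.re) :
    (∫ t in Set.Ioi (1 / u), Complex.exp (-(t : ℂ) * s) / (t : ℂ))
      = (Real.log u : ℂ) - Complex.log s - (Real.eulerMascheroniConstant : ℂ) +
          ∫ t in (0:ℝ)..(1 / u), (1 - Complex.exp (-(t : ℂ) * s)) / (t : ℂ) := by
  have hu0 : 0 < u := by linarith
  have ha : 0 < 1 / u := by positivity
  have h1 := aux_split_s12 hs ha
  have h2 := aux_one ha (by rw [div_le_one hu0]; exact hu)
  rw [← intervalIntegral.integral_of_le ha.le] at h2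
  have h3 : Complex.log ((1 / u : ℝ) : ℂ) = -(Real.log u : ℂ) := by
    rw [← Complex.ofReal_log ha.le, one_div, Real.log_inv]
    push_cast; rfl
  rw [h3] at h2
  linear_combination h1 + h2
end
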